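/- There exists a constant c > 0 such that for all positive integers k and t, if T is a strongly c·kt-connected tournament, then there is a partition {V₁, …, V_t} of the vertex set of T such that the subtournament T[V_i] is strongly k-connected for every i ∈ [t]. -/

import Mathlib

open Finset

namespace TournamentPartition

/-! ### Basic constants from the paper -/

def rho : ℕ := 10 ^ 4
def sigma1 : ℕ := 10 ^ 60
def sigma2 : ℕ := 10 ^ 4
def sigma3 : ℕ := 10

/-- `s` contains at least `m` elements satisfying `P`. -/
def ManyIn {α : Type*} (s : Finset α) (m : ℝ) (P : α → Prop) : Prop :=
  ∃ s' : Finset α, s' ⊆ s ∧ m ≤ (s'.card : ℝ) ∧ ∀ x ∈ s', P x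

section Defs

variable {V I : Type*}

/-- `E u v` means that the edge between `u` and `v` is directed from `u` to `v`. -/
def IsTournament (E : V → V → Prop) : Prop :=
  (∀ v, ¬ E v v) ∧ ∀ u v : V, u ≠ v → (E u v ↔ ¬ E v u)

/-- There is a directed path from `u` to `v` all of whose vertices lie in `S`. -/
def ReachWithin (E : V → V → Prop) (S : Set V) (u v : V) : Prop :=
  Relation.ReflTransGen (fun a b => a ∈ S ∧ b ∈ S ∧ E a b) u v

def StronglyConnectedOn (E : V → V → Prop) (S : Set V) : Prop :=
  ∀ u ∈ S, ∀ v ∈ S, ReachWithin E S u v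

/-- A directed path, as a list of distinct vertices with consecutive edges. -/
def IsDiPath (E : V → V → Prop) (l : List V) : Prop :=
  l ≠ [] ∧ l.Nodup ∧ l.Chain' E

variable [Fintype V] [DecidableEq V]

/-- The set `S` induces a strongly `k`-connected subtournament. -/
def StronglyKConnectedOn (E : V → V → Prop) (k : ℕ) (S : Finset V) : Prop :=
  k + 1 ≤ S.card ∧
    ∀ Z : Finset V, Z.card ≤ k → StronglyConnectedOn E ((S \ Z : Finset V) : Set V)

def StronglyKConnected (E : V → V → Prop) (k : ℕ) : Prop :=
  StronglyKConnectedOn E k Finset.univ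

def outN (E : V → V → Prop) [DecidableRel E] (u : V) : Finset V :=
  Finset.univ.filter fun v => E u v

def inN (E : V → V → Prop) [DecidableRel E] (u : V) : Finset V :=
  Finset.univ.filter fun v => E v u

/-- A system of gadgets `U(α)` with special sets `S⁺(α), S⁻(α) ⊆ S(α) ⊆ U(α)`,
exceptional sets `X(α)` and special vertices `s⁺(α), s⁻(α) ∈ S(α)`. -/
structure GadgetSystem (V I : Type*) where
  U : I → Finset V
  S : I → Finset V
  Sp : I → Finset V
  Sm : I → Finset V
  X : I → Finset V
  sp : I → V
  sm : I → V
  sp_mem : ∀ α, sp α ∈ S α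
  sm_mem : ∀ α, sm α ∈ S α
  Sp_subset : ∀ α, Sp α ⊆ S α
  Sm_subset : ∀ α, Sm α ⊆ S α
  S_subset : ∀ α, S α ⊆ U α

variable [Fintype I] [DecidableEq I]

def Vokay (G : GadgetSystem V I) : Finset V :=
  Finset.univ \ Finset.univ.biUnion G.S

/-- Vertices of `V_okay` having no out-neighbour in `S⁻(α)` for at least `k*t` indices `α`. -/
def VbadP (E : V → V → Prop) [DecidableRel E] (G : GadgetSystem V I) (k t : ℕ) : Finset V :=
  (Vokay G).filter fun u =>
    k * t ≤ (Finset.univ.filter fun α : I => ∀ v ∈ G.Sm α, ¬ E u v).card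

/-- Vertices of `V_okay` having no in-neighbour in `S⁺(α)` for at least `k*t` indices `α`. -/
def VbadM (E : V → V → Prop) [DecidableRel E] (G : GadgetSystem V I) (k t : ℕ) : Finset V :=
  (Vokay G).filter fun u =>
    k * t ≤ (Finset.univ.filter fun α : I => ∀ v ∈ G.Sp α, ¬ E v u).card

def Vbad (E : V → V → Prop) [DecidableRel E] (G : GadgetSystem V I) (k t : ℕ) : Finset V :=
  VbadP E G k t ∩ VbadM E G k t

def VgoodP (E : V → V → Prop) [DecidableRel E] (G : GadgetSystem V I) (k t : ℕ) : Finset V :=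
  Vokay G \ VbadP E G k t

def VgoodM (E : V → V → Prop) [DecidableRel E] (G : GadgetSystem V I) (k t : ℕ) : Finset V :=
  Vokay G \ VbadM E G k t

def Vgood (E : V → V → Prop) [DecidableRel E] (G : GadgetSystem V I) (k t : ℕ) : Finset V :=
  VgoodP E G k t ∩ VgoodM E G k t

/-- `W(C) = V ∖ ⋃_{α ∈ C} U(α)`. -/
def Wof (G : GadgetSystem V I) (C : Finset I) : Finset V :=
  Finset.univ \ C.biUnion G.U

def NokayP (E : V → V → Prop) [DecidableRel E] (G : GadgetSystem V I) (u : V) : Finset V :=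
  outN E u ∩ Vokay G

def NokayM (E : V → V → Prop) [DecidableRel E] (G : GadgetSystem V I) (u : V) : Finset V :=
  inN E u ∩ Vokay G

def NgoodP (E : V → V → Prop) [DecidableRel E] (G : GadgetSystem V I) (k t : ℕ) (u : V) :
    Finset V :=
  outN E u ∩ VgoodP E G k t

def NgoodM (E : V → V → Prop) [DecidableRel E] (G : GadgetSystem V I) (k t : ℕ) (u : V) :
    Finset V :=
  inN E u ∩ Vgood E G k t

/-! ### Properties (G1)–(G9) -/

def CondG1 (G : GadgetSystem V I) : Prop :=
  ∀ α β : I, α ≠ β → Disjoint (G.U α) (G.U β)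

def CondG2 (G : GadgetSystem V I) (k t : ℕ) : Prop :=
  ∀ α : I, (G.S α).card ≤ rho ∧ (G.X α).card ≤ rho * sigma1 * k * t

def CondG3 (E : V → V → Prop) (G : GadgetSystem V I) : Prop :=
  ∀ α : I, ∀ u ∈ G.Sm α, ∀ v ∈ G.Sp α, ReachWithin E (G.U α : Set V) u v

def CondG4 (E : V → V → Prop) (G : GadgetSystem V I) : Prop :=
  ∀ α : I, ∀ x : V, x ∉ G.X α →
    (E x (G.sp α) → ∀ u ∈ G.U α \ G.S α, E x u) ∧
    (E (G.sm α) x → ∀ u ∈ G.U α \ G.S α, E u x)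

def CondG5 (E : V → V → Prop) [DecidableRel E] (G : GadgetSystem V I) (k t : ℕ) : Prop :=
  ∀ u ∈ Vokay G,
    10 ^ 12 * (VbadP E G k t).card ≤ (outN E u).card ∧
    10 ^ 12 * (VbadM E G k t).card ≤ (inN E u).card

/-- Properties (G1)–(G5) of a gadget system. -/
def GadgetHyp (E : V → V → Prop) [DecidableRel E] (G : GadgetSystem V I) (k t : ℕ) : Prop :=
  CondG1 G ∧ CondG2 G k t ∧ CondG3 E G ∧ CondG4 E G ∧ CondG5 E G k t

def CondG6 (E : V → V → Prop) [DecidableRel E] (G : GadgetSystem V I) (k t : ℕ) : Prop :=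
  (Fintype.card V : ℝ) / 2 ≤ ((Vgood E G k t).card : ℝ)

def CondG7 (E : V → V → Prop) [DecidableRel E] (G : GadgetSystem V I) (k t τ₁ : ℕ) : Prop :=
  ∀ u ∈ Vokay G,
    max ((10 : ℝ) ^ 11 * ((VbadP E G k t).card : ℝ)) (((τ₁ * k * t : ℕ) : ℝ) / 2)
      ≤ ((outN E u ∩ VgoodP E G k t).card : ℝ)

def CondG8 (E : V → V → Prop) [DecidableRel E] (G : GadgetSystem V I) (k t τ₁ : ℕ) : Prop :=
  ∀ u ∈ Vokay G,
    max ((10 : ℝ) ^ 11 * ((VbadM E G k t).card : ℝ)) (((τ₁ * k * t : ℕ) : ℝ) / 2)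
      ≤ ((inN E u ∩ Vgood E G k t).card : ℝ)

def CondG9 (E : V → V → Prop) [DecidableRel E] (G : GadgetSystem V I) (k t τ₁ : ℕ) : Prop :=
  ∀ u : V,
    max ((10 : ℝ) ^ 11 * (((Finset.univ \ Vokay G).card : ℕ) : ℝ)) (((τ₁ * k * t : ℕ) : ℝ) / 2)
      ≤ ((outN E u ∩ Vokay G).card : ℝ) ∧
    max ((10 : ℝ) ^ 11 * (((Finset.univ \ Vokay G).card : ℕ) : ℝ)) (((τ₁ * k * t : ℕ) : ℝ) / 2)
      ≤ ((inN E u ∩ Vokay G).card : ℝ)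

/-- Properties (G6)–(G9) of a gadget system. -/
def GadgetHyp2 (E : V → V → Prop) [DecidableRel E] (G : GadgetSystem V I) (k t τ₁ : ℕ) :
    Prop :=
  CondG6 E G k t ∧ CondG7 E G k t τ₁ ∧ CondG8 E G k t τ₁ ∧ CondG9 E G k t τ₁

/-! ### Available vertices -/

def AvailA1 (E : V → V → Prop) [DecidableRel E] (G : GadgetSystem V I) (k t : ℕ)
    (W : Finset V) (u : V) : Prop :=
  u ∈ Vgood E G k t ∩ W

def AvailA2 (E : V → V → Prop) [DecidableRel E] (G : GadgetSystem V I) (k t τ₂ : ℕ)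
    (W : Finset V) (u : V) : Prop :=
  u ∈ (VgoodP E G k t \ VgoodM E G k t) ∩ W ∧
    ManyIn (inN E u) ((τ₂ * k * t : ℕ) : ℝ) (AvailA1 E G k t W)

def AvailA3 (E : V → V → Prop) [DecidableRel E] (G : GadgetSystem V I) (k t τ₂ : ℕ)
    (W : Finset V) (u : V) : Prop :=
  u ∈ (VgoodM E G k t \ VgoodP E G k t) ∩ W ∧
    ManyIn (outN E u) ((τ₂ * k * t : ℕ) : ℝ)
      (fun v => AvailA1 E G k t W v ∨ AvailA2 E G k t τ₂ W v)

def AvailA4 (E : V → V → Prop) [DecidableRel E] (G : GadgetSystem V I) (k t τ₂ : ℕ)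
    (W : Finset V) (u : V) : Prop :=
  u ∈ Vbad E G k t ∩ W ∧
    ManyIn (outN E u) ((τ₂ * k * t : ℕ) : ℝ)
      (fun v => AvailA1 E G k t W v ∨ AvailA2 E G k t τ₂ W v) ∧
    ManyIn (inN E u) ((τ₂ * k * t : ℕ) : ℝ) (AvailA1 E G k t W)

/-- `u` is available (for `α`) with respect to a family `𝒜`, where `W = W(𝒜 ∖ {α})`. -/
def Available (E : V → V → Prop) [DecidableRel E] (G : GadgetSystem V I) (k t τ₂ : ℕ)
    (W : Finset V) (u : V) : Prop :=
  AvailA1 E G k t W u ∨ AvailA2 E G k t τ₂ W u ∨ AvailA3 E G k t τ₂ W u ∨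
    AvailA4 E G k t τ₂ W u

/-! ### Eligible and helpful vertices -/

/-- Indices `α ∈ 𝒜` such that `u` has no out-neighbour in `S⁻(α)`. -/
def MissOut (E : V → V → Prop) [DecidableRel E] (G : GadgetSystem V I) (𝒜 : Finset I)
    (u : V) : Finset I :=
  𝒜.filter fun α => ∀ v ∈ G.Sm α, ¬ E u v

/-- Indices `α ∈ 𝒜` such that `u` has no in-neighbour in `S⁺(α)`. -/
def MissIn (E : V → V → Prop) [DecidableRel E] (G : GadgetSystem V I) (𝒜 : Finset I)
    (u : V) : Finset I :=
  𝒜.filter fun α => ∀ v ∈ G.Sp α, ¬ E v u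

def Nice1 (E : V → V → Prop) [DecidableRel E] (G : GadgetSystem V I) (k t : ℕ)
    (𝒜 : Finset I) (W : Finset V) (u : V) : Prop :=
  u ∈ Vgood E G k t ∩ W ∧ (MissOut E G 𝒜 u).card ≤ k ∧ (MissIn E G 𝒜 u).card ≤ k

def Nice2 (E : V → V → Prop) [DecidableRel E] (G : GadgetSystem V I) (k t : ℕ) (m : ℝ)
    (𝒜 : Finset I) (W : Finset V) (u : V) : Prop :=
  u ∈ (VgoodP E G k t \ VgoodM E G k t) ∩ W ∧ (MissOut E G 𝒜 u).card ≤ k ∧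
    ManyIn (inN E u) m (Nice1 E G k t 𝒜 W)

def Nice3 (E : V → V → Prop) [DecidableRel E] (G : GadgetSystem V I) (k t : ℕ) (m : ℝ)
    (𝒜 : Finset I) (W : Finset V) (u : V) : Prop :=
  u ∈ (VgoodM E G k t \ VgoodP E G k t) ∩ W ∧ (MissIn E G 𝒜 u).card ≤ k ∧
    ManyIn (outN E u) m (fun v => Nice1 E G k t 𝒜 W v ∨ Nice2 E G k t m 𝒜 W v)

def Nice4 (E : V → V → Prop) [DecidableRel E] (G : GadgetSystem V I) (k t : ℕ) (m : ℝ)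
    (𝒜 : Finset I) (W : Finset V) (u : V) : Prop :=
  u ∈ Vbad E G k t ∩ W ∧
    ManyIn (inN E u) m (Nice1 E G k t 𝒜 W) ∧
    ManyIn (outN E u) m (fun v => Nice1 E G k t 𝒜 W v ∨ Nice2 E G k t m 𝒜 W v)

def NiceFor (E : V → V → Prop) [DecidableRel E] (G : GadgetSystem V I) (k t : ℕ) (m : ℝ)
    (𝒜 : Finset I) (W : Finset V) (u : V) : Prop :=
  Nice1 E G k t 𝒜 W u ∨ Nice2 E G k t m 𝒜 W u ∨ Nice3 E G k t m 𝒜 W u ∨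
    Nice4 E G k t m 𝒜 W u

/-- `u` is eligible for `𝒜` in `W`. -/
def Eligible (E : V → V → Prop) [DecidableRel E] (G : GadgetSystem V I) (k t τ₃ : ℕ)
    (𝒜 : Finset I) (W : Finset V) (u : V) : Prop :=
  NiceFor E G k t ((τ₃ * k * t : ℕ) : ℝ) 𝒜 W u

/-- `u` is helpful for `𝒜` in `W`. -/
def Helpful (E : V → V → Prop) [DecidableRel E] (G : GadgetSystem V I) (k t : ℕ)
    (𝒜 : Finset I) (W : Finset V) (u : V) : Prop :=
  NiceFor E G k t (k : ℝ) 𝒜 W u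

end Defs

noncomputable def phi0 (τ₁ : ℕ) : ℝ := (τ₁ : ℝ) / 4
noncomputable def phi1 (τ₁ : ℕ) : ℝ := phi0 τ₁ / (2 ^ 6 * (rho : ℝ))
noncomputable def phi2 (τ₁ : ℕ) : ℝ := phi1 τ₁ / (2 ^ 14 * (rho : ℝ) ^ 2)
noncomputable def phi3 (τ₁ : ℕ) : ℝ := phi2 τ₁ / (2 ^ 14 * (rho : ℝ) ^ 2)

/-!
A gadget is a small in-dominating set joined by a shortest path to a small out-dominating set: all
but few vertices send an edge into the gadget and receive an edge from it. Deleting a shortest path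
lowers the connectivity of a tournament by only a bounded amount, so gadgets can be extracted
greedily, and a random choice gives `4 * k` gadgets for each of a large constant times `t` groups
such that no vertex of a path has many of its neighbours on the other paths. Colouring the remaining
vertices at random attaches to each group enough vertices to make it a strongly `k`-connected core,
and the `t` smallest cores are tiny compared to the whole tournament.

Adding a vertex with more than `k` in-neighbours and more than `k` out-neighbours preserves strong
`k`-connectivity. A vertex with many neighbours in both directions in most cores may join any of
those cores. The remaining vertices form levels, each small compared to the degrees of its vertices.
The levels are distributed at random one after another, so that every part receives a fair share of
the neighbourhoods of the vertices in later levels, which can then be added in their turn.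
-/

section Tournaments

variable {V : Type*} {E : V → V → Prop}

open Classical in
/-- The out-neighbours of `v` inside `S`. In-neighbours are `outNbrs (flip E) S v`, so that every
statement about out-neighbours can be reversed. -/
noncomputable def outNbrs (E : V → V → Prop) (S : Finset V) (v : V) : Finset V := {w ∈ S | E v w}

lemma mem_outNbrs {S : Finset V} {v w : V} : w ∈ outNbrs E S v ↔ w ∈ S ∧ E v w := by
  simp only [outNbrs, mem_filter]

lemma outNbrs_subset (E : V → V → Prop) (S : Finset V) (v : V) : outNbrs E S v ⊆ S :=
  fun _ h => (mem_outNbrs.1 h).1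

lemma outNbrs_mono (E : V → V → Prop) {S T : Finset V} (h : S ⊆ T) (v : V) :
    outNbrs E S v ⊆ outNbrs E T v :=
  fun _ hw => mem_outNbrs.2 ⟨h (mem_outNbrs.1 hw).1, (mem_outNbrs.1 hw).2⟩

lemma IsTournament.reverse (h : IsTournament E) : IsTournament (flip E) :=
  ⟨h.1, fun u v huv => h.2 v u huv.symm⟩

lemma IsTournament.asymm (h : IsTournament E) {u v : V} (huv : E u v) : ¬ E v u := by
  rcases eq_or_ne u v with rfl | hne
  · exact h.1 _
  · exact (h.2 u v hne).1 huv

lemma IsTournament.ne (h : IsTournament E) {u v : V} (huv : E u v) : u ≠ v := by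
  rintro rfl
  exact h.1 _ huv

lemma IsTournament.adj_of_not_adj (h : IsTournament E) {u v : V} (huv : u ≠ v) (hn : ¬ E u v) :
    E v u :=
  (h.2 v u huv.symm).2 hn

lemma ReachWithin.refl (E : V → V → Prop) (S : Set V) (u : V) : ReachWithin E S u u :=
  Relation.ReflTransGen.refl

lemma ReachWithin.single {S : Set V} {u v : V} (hu : u ∈ S) (hv : v ∈ S) (h : E u v) :
    ReachWithin E S u v :=
  Relation.ReflTransGen.single ⟨hu, hv, h⟩

lemma ReachWithin.trans {S : Set V} {u v w : V} (h : ReachWithin E S u v)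
    (h' : ReachWithin E S v w) : ReachWithin E S u w :=
  Relation.ReflTransGen.trans h h'

lemma ReachWithin.mono {S T : Set V} (hST : S ⊆ T) {u v : V} (h : ReachWithin E S u v) :
    ReachWithin E T u v :=
  Relation.ReflTransGen.mono (fun _ _ hab => ⟨hST hab.1, hST hab.2.1, hab.2.2⟩) _ _ h

lemma ReachWithin.reverse {S : Set V} {u v : V} (h : ReachWithin E S u v) :
    ReachWithin (flip E) S v u := by
  induction h with
  | refl => exact ReachWithin.refl _ _ _
  | tail _ hbc ih => exact (ReachWithin.single hbc.2.1 hbc.1 hbc.2.2).trans ih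

lemma ReachWithin.mem_of_closed {S A : Set V} {u v : V} (h : ReachWithin E S u v)
    (hA : ∀ a ∈ A, ∀ b ∈ S, E a b → b ∈ A) (hu : u ∈ A) : v ∈ A := by
  induction h with
  | refl => exact hu
  | tail _ hbc ih => exact hA _ ih _ hbc.2.1 hbc.2.2

lemma StronglyConnectedOn.reverse {S : Set V} (h : StronglyConnectedOn E S) :
    StronglyConnectedOn (flip E) S :=
  fun u hu v hv => (h v hv u hu).reverse

lemma stronglyConnectedOn_coe_of_closed {S : Finset V}
    (h : ∀ A ⊆ S, A.Nonempty → (∀ a ∈ A, ∀ b ∈ S, E a b → b ∈ A) → S ⊆ A) :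
    StronglyConnectedOn E (S : Set V) := by
  classical
  intro u hu v hv
  have hclosed := h {w ∈ S | ReachWithin E (S : Set V) u w} (filter_subset _ _)
    ⟨u, mem_filter.2 ⟨hu, ReachWithin.refl _ _ _⟩⟩ fun a ha b hb hab => by
      obtain ⟨haS, hua⟩ := mem_filter.1 ha
      exact mem_filter.2 ⟨hb, hua.trans (ReachWithin.single haS hb hab)⟩
  exact (mem_filter.1 (hclosed hv)).2

variable [DecidableEq V] {k : ℕ} {S : Finset V}

lemma StronglyKConnectedOn.reverse (h : StronglyKConnectedOn E k S) :
    StronglyKConnectedOn (flip E) k S :=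
  ⟨h.1, fun Z hZ => (h.2 Z hZ).reverse⟩

lemma StronglyKConnectedOn.mono {l : ℕ} (h : StronglyKConnectedOn E k S) (hl : l ≤ k) :
    StronglyKConnectedOn E l S :=
  ⟨(Nat.succ_le_succ hl).trans h.1, fun Z hZ => h.2 Z (hZ.trans hl)⟩

lemma StronglyKConnectedOn.sdiff {K : ℕ} {F : Finset V} (h : StronglyKConnectedOn E K S)
    (hF : #F + k ≤ K) : StronglyKConnectedOn E k (S \ F) := by
  refine ⟨?_, fun Z hZ => ?_⟩
  · have := le_card_sdiff F S
    have := h.1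
    omega
  · rw [sdiff_sdiff_left]
    exact h.2 _ ((card_union_le _ _).trans (by omega))

lemma StronglyKConnectedOn.sdiff_subset_of_closed (h : StronglyKConnectedOn E k S)
    {Z A : Finset V} (hZ : #Z ≤ k) {a : V} (ha : a ∈ A) (haS : a ∈ S \ Z)
    (hA : ∀ a ∈ A, ∀ b ∈ S \ Z, E a b → b ∈ A) : S \ Z ⊆ A := fun v hv =>
  (h.2 Z hZ a haS v hv).mem_of_closed (A := (A : Set V)) (fun a ha b hb => hA a ha b hb) ha

lemma StronglyKConnectedOn.sdiff_outNbrs_subset (h : StronglyKConnectedOn E k S) {v : V}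
    (hv : v ∈ S) (hvv : ¬ E v v) (hk : #(outNbrs E S v) ≤ k) : S \ outNbrs E S v ⊆ {v} := by
  refine h.sdiff_subset_of_closed hk (mem_singleton_self v)
    (mem_sdiff.2 ⟨hv, fun hc => hvv (mem_outNbrs.1 hc).2⟩) fun a ha b hb hab => ?_
  rw [mem_singleton.1 ha] at hab
  exact absurd (mem_outNbrs.2 ⟨(mem_sdiff.1 hb).1, hab⟩) (mem_sdiff.1 hb).2

lemma StronglyKConnectedOn.lt_card_outNbrs (h : StronglyKConnectedOn E k S)
    (hE : IsTournament E) (hk : 1 ≤ k) {v : V} (hv : v ∈ S) : k < #(outNbrs E S v) := by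
  by_contra! hvk
  have hcard : #S - 1 ≤ k := by
    have h1 := card_le_card (h.sdiff_outNbrs_subset hv (hE.1 v) hvk)
    have h2 := card_sdiff_add_card_eq_card (outNbrs_subset E S v)
    rw [card_singleton] at h1
    omega
  obtain ⟨w, hw⟩ : (outNbrs E S v).Nonempty := by
    rw [nonempty_iff_ne_empty]
    intro h0
    have h1 := card_le_card (h.sdiff_outNbrs_subset hv (hE.1 v) hvk)
    rw [h0, sdiff_empty, card_singleton] at h1
    have := h.1
    omega
  obtain ⟨hwS, hvw⟩ := mem_outNbrs.1 hw
  have hwk : #(outNbrs E S w) ≤ k := by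
    have hsub : outNbrs E S w ⊆ S.erase w := fun x hx =>
      mem_erase.2 ⟨(hE.ne (mem_outNbrs.1 hx).2).symm, (mem_outNbrs.1 hx).1⟩
    have := card_le_card hsub
    rw [card_erase_of_mem hwS] at this
    omega
  have hvw' := h.sdiff_outNbrs_subset hwS (hE.1 w) hwk
    (mem_sdiff.2 ⟨hv, fun hc => hE.asymm hvw (mem_outNbrs.1 hc).2⟩)
  exact hE.ne hvw (mem_singleton.1 hvw')

lemma exists_mem_sdiff_reachWithin {S' Z : Finset V} (hSS' : S ⊆ S') (hZ : #Z ≤ k)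
    (hout : ∀ v ∈ S', v ∉ S → k < #(outNbrs E S v)) {u : V} (hu : u ∈ S' \ Z) :
    ∃ s ∈ S \ Z, ReachWithin E ((S' \ Z : Finset V) : Set V) u s := by
  obtain ⟨huS', huZ⟩ := mem_sdiff.1 hu
  by_cases huS : u ∈ S
  · exact ⟨u, mem_sdiff.2 ⟨huS, huZ⟩, ReachWithin.refl _ _ _⟩
  · obtain ⟨s, hs, hsZ⟩ := exists_mem_notMem_of_card_lt_card (hZ.trans_lt (hout u huS' huS))
    obtain ⟨hsS, hus⟩ := mem_outNbrs.1 hs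
    exact ⟨s, mem_sdiff.2 ⟨hsS, hsZ⟩,
      ReachWithin.single hu (mem_coe.2 (mem_sdiff.2 ⟨hSS' hsS, hsZ⟩)) hus⟩

lemma StronglyKConnectedOn.extend {S' : Finset V} (h : StronglyKConnectedOn E k S) (hS : S ⊆ S')
    (hout : ∀ v ∈ S', v ∉ S → k < #(outNbrs E S v))
    (hin : ∀ v ∈ S', v ∉ S → k < #(outNbrs (flip E) S v)) :
    StronglyKConnectedOn E k S' := by
  refine ⟨h.1.trans (card_le_card hS), fun Z hZ u hu v hv => ?_⟩
  have hsub : ((S \ Z : Finset V) : Set V) ⊆ ((S' \ Z : Finset V) : Set V) :=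
    coe_subset.2 (sdiff_subset_sdiff hS (Subset.refl Z))
  obtain ⟨s, hs, hus⟩ := exists_mem_sdiff_reachWithin hS hZ hout hu
  obtain ⟨s', hs', hvs'⟩ := exists_mem_sdiff_reachWithin hS hZ hin hv
  exact (hus.trans ((h.2 Z hZ s hs s' hs').mono hsub)).trans hvs'.reverse

end Tournaments

section ShortestWalks

variable {V : Type*} {E : V → V → Prop} {S X Y : Finset V}

/-- There is a directed walk of length `d` from `u` to `v` inside `S`. -/
def WalkIn (E : V → V → Prop) (S : Finset V) : ℕ → V → V → Prop
  | 0, u, v => u ∈ S ∧ u = v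
  | d + 1, u, v => ∃ w, u ∈ S ∧ E u w ∧ WalkIn E S d w v

lemma WalkIn.single {u v : V} (hu : u ∈ S) (hv : v ∈ S) (h : E u v) : WalkIn E S 1 u v :=
  ⟨v, hu, h, hv, rfl⟩

lemma WalkIn.trans {a b : ℕ} {u v w : V} (h : WalkIn E S a u v) (h' : WalkIn E S b v w) :
    WalkIn E S (a + b) u w := by
  induction a generalizing u with
  | zero =>
    obtain ⟨_, rfl⟩ := h
    rwa [zero_add]
  | succ a ih =>
    obtain ⟨z, hu, hz, hzv⟩ := h
    rw [Nat.succ_add]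
    exact ⟨z, hu, hz, ih hzv⟩

lemma WalkIn.mem_right {d : ℕ} {u v : V} (h : WalkIn E S d u v) : v ∈ S := by
  induction d generalizing u with
  | zero => exact h.2 ▸ h.1
  | succ d ih =>
    obtain ⟨w, -, -, hwv⟩ := h
    exact ih hwv

lemma WalkIn.reverse {d : ℕ} {u v : V} (h : WalkIn E S d u v) : WalkIn (flip E) S d v u := by
  induction d generalizing u with
  | zero => exact ⟨h.2 ▸ h.1, h.2.symm⟩
  | succ d ih =>
    obtain ⟨w, hu, huw, hwv⟩ := h
    exact (ih hwv).trans (.single (ih hwv).mem_right hu huw)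

lemma ReachWithin.exists_walkIn {u v : V} (h : ReachWithin E (S : Set V) u v) (hu : u ∈ S) :
    ∃ d, WalkIn E S d u v := by
  induction h with
  | refl => exact ⟨0, hu, rfl⟩
  | tail _ hbc ih =>
    obtain ⟨d, hd⟩ := ih
    exact ⟨d + 1, hd.trans (.single hbc.1 hbc.2.1 hbc.2.2)⟩

lemma WalkIn.exists_vertices {d : ℕ} {u v : V} (h : WalkIn E S d u v) :
    ∃ p : ℕ → V, p 0 = u ∧ p d = v ∧ (∀ i ≤ d, p i ∈ S) ∧ ∀ i < d, E (p i) (p (i + 1)) := by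
  induction d generalizing u with
  | zero =>
    obtain ⟨hu, rfl⟩ := h
    exact ⟨fun _ => u, rfl, rfl, fun _ _ => hu, fun _ h => absurd h (Nat.not_lt_zero _)⟩
  | succ d ih =>
    obtain ⟨z, hu, hz, hzv⟩ := h
    obtain ⟨p, rfl, hd, hS, hE⟩ := ih hzv
    refine ⟨fun i => Nat.casesOn i u p, rfl, hd, ?_, ?_⟩
    · rintro (_ | i) hi
      · exact hu
      · exact hS i (Nat.le_of_succ_le_succ hi)
    · rintro (_ | i) hi
      · exact hz
      · exact hE i (Nat.lt_of_succ_lt_succ hi)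

/-- `p 0, …, p l` is a shortest walk from `X` to `Y` inside `S`. The values of `p` beyond `l` are
irrelevant. -/
structure IsShortestWalk (E : V → V → Prop) (S X Y : Finset V) (l : ℕ) (p : ℕ → V) : Prop where
  mem : ∀ i ≤ l, p i ∈ S
  adj : ∀ i < l, E (p i) (p (i + 1))
  source_mem : p 0 ∈ X
  target_mem : p l ∈ Y
  length_le : ∀ d, ∀ x ∈ X, ∀ y ∈ Y, WalkIn E S d x y → l ≤ d

lemma StronglyConnectedOn.exists_isShortestWalk (h : StronglyConnectedOn E (S : Set V))
    (hX : X ⊆ S) (hY : Y ⊆ S) (hXne : X.Nonempty) (hYne : Y.Nonempty) :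
    ∃ l p, IsShortestWalk E S X Y l p := by
  classical
  have hex : ∃ d, ∃ x ∈ X, ∃ y ∈ Y, WalkIn E S d x y := by
    obtain ⟨x, hx⟩ := hXne
    obtain ⟨y, hy⟩ := hYne
    obtain ⟨d, hd⟩ := (h x (hX hx) y (hY hy)).exists_walkIn (hX hx)
    exact ⟨d, x, hx, y, hy, hd⟩
  obtain ⟨x, hx, y, hy, hw⟩ := Nat.find_spec hex
  obtain ⟨p, rfl, hpl, hpS, hpE⟩ := hw.exists_vertices
  exact ⟨Nat.find hex, p, hpS, hpE, hx, hpl ▸ hy,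
    fun d x hx y hy hd => Nat.find_min' hex ⟨x, hx, y, hy, hd⟩⟩

namespace IsShortestWalk

variable {l : ℕ} {p : ℕ → V}

lemma reverse (hp : IsShortestWalk E S X Y l p) :
    IsShortestWalk (flip E) S Y X l fun i => p (l - i) where
  mem i _ := hp.mem _ (Nat.sub_le l i)
  adj i hi := by
    have := hp.adj (l - (i + 1)) (by omega)
    rwa [show l - (i + 1) + 1 = l - i by omega] at this
  source_mem := hp.target_mem
  target_mem := by
    rw [Nat.sub_self]
    exact hp.source_mem
  length_le d y hy x hx hw := hp.length_le d x hx y hy hw.reverse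

lemma walkIn_add (hp : IsShortestWalk E S X Y l p) {i d : ℕ} (hid : i + d ≤ l) :
    WalkIn E S d (p i) (p (i + d)) := by
  induction d with
  | zero => exact ⟨hp.mem i hid, rfl⟩
  | succ d ih =>
    exact (ih (by omega)).trans
      (.single (hp.mem _ (by omega)) (hp.mem _ (by omega)) (hp.adj _ (by omega)))

lemma walkIn_source (hp : IsShortestWalk E S X Y l p) {i : ℕ} (hi : i ≤ l) :
    WalkIn E S i (p 0) (p i) := by
  have h := hp.walkIn_add (i := 0) (d := i) (by omega)
  rwa [zero_add] at h

lemma walkIn_target (hp : IsShortestWalk E S X Y l p) {i : ℕ} (hi : i ≤ l) :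
    WalkIn E S (l - i) (p i) (p l) := by
  have h := hp.walkIn_add (i := i) (d := l - i) (by omega)
  rwa [Nat.add_sub_cancel' hi] at h

lemma le_of_walkIn (hp : IsShortestWalk E S X Y l p) {x : V} (hx : x ∈ X) {j d : ℕ} (hj : j ≤ l)
    (hd : WalkIn E S d x (p j)) : j ≤ d := by
  have := hp.length_le _ _ hx _ hp.target_mem (hd.trans (hp.walkIn_target hj))
  omega

lemma le_add_of_walkIn (hp : IsShortestWalk E S X Y l p) {i j d : ℕ} (hi : i ≤ l) (hj : j ≤ l)
    (hd : WalkIn E S d (p i) (p j)) : j ≤ i + d :=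
  hp.le_of_walkIn hp.source_mem hj ((hp.walkIn_source hi).trans hd)

lemma not_adj_of_closed (hp : IsShortestWalk E S X Y l p) (hE : IsTournament E) {A B : Finset V}
    (hA : A ⊆ B) (hB : B ⊆ S) (hcl : ∀ a ∈ A, ∀ b ∈ B, E a b → b ∈ A) {i j : ℕ} (hij : i + 4 ≤ j)
    (hj : j ≤ l) {b : V} (hb : b ∈ B) (hbA : b ∉ A) (hib : E (p i) b) {a : V} (ha : a ∈ A) :
    ¬ E a (p j) := fun haj => by
  have hba : E b a :=
    hE.adj_of_not_adj (ne_of_mem_of_not_mem ha hbA) fun hab => hbA (hcl a ha b hb hab)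
  have haS := hB (hA ha)
  have hia := (WalkIn.single (hp.mem i (by omega)) (hB hb) hib).trans (.single (hB hb) haS hba)
  have := hp.le_add_of_walkIn (by omega) hj (hia.trans (.single haS (hp.mem j hj) haj))
  omega

end IsShortestWalk

lemma exists_first_exit (E : V → V → Prop) (l : ℕ) (p : ℕ → V) (A B : Finset V) :
    ∃ i ≤ l + 1, (i ≤ l → ∃ b ∈ B, b ∉ A ∧ E (p i) b) ∧ ∀ j < i, ∀ b ∈ B, E (p j) b → b ∈ A := by
  classical
  have hex : ∃ i, i ≤ l → ∃ b ∈ B, b ∉ A ∧ E (p i) b := ⟨l + 1, fun h => absurd h (by omega)⟩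
  refine ⟨Nat.find hex, Nat.find_min' hex fun h => absurd h (by omega), Nat.find_spec hex,
    fun j hj b hb hjb => ?_⟩
  by_contra hbA
  exact Nat.find_min hex hj fun _ => ⟨b, hb, hbA, hjb⟩

end ShortestWalks

section Links

variable {V : Type*} {E : V → V → Prop}

/-- The data recorded about a directed path: its two endpoints, its vertex set, and the set of its
first two and last two vertices. -/
structure Link (V : Type*) where
  src : V
  tgt : V
  ends : Finset V
  verts : Finset V

/-- The same path traversed backwards. -/
def Link.reverse (L : Link V) : Link V := ⟨L.tgt, L.src, L.ends, L.verts⟩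

/-- `L` is a path from `X` to `Y` meeting `X` and `Y` only in its endpoints. -/
structure Link.Joins (L : Link V) (E : V → V → Prop) (X Y : Finset V) : Prop where
  ends_subset : L.ends ⊆ L.verts
  card_ends : #L.ends ≤ 4
  src_mem_ends : L.src ∈ L.ends
  tgt_mem_ends : L.tgt ∈ L.ends
  src_mem : L.src ∈ X
  tgt_mem : L.tgt ∈ Y
  eq_src : ∀ v ∈ L.verts, v ∈ X → v = L.src
  eq_tgt : ∀ v ∈ L.verts, v ∈ Y → v = L.tgt
  reachWithin : ReachWithin E (L.verts : Set V) L.src L.tgt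

lemma Link.Joins.reverse {L : Link V} {X Y : Finset V} (h : L.Joins E X Y) :
    L.reverse.Joins (flip E) Y X where
  ends_subset := h.ends_subset
  card_ends := h.card_ends
  src_mem_ends := h.tgt_mem_ends
  tgt_mem_ends := h.src_mem_ends
  src_mem := h.tgt_mem
  tgt_mem := h.src_mem
  eq_src := h.eq_tgt
  eq_tgt := h.eq_src
  reachWithin := h.reachWithin.reverse

/-- The consequences, in a tournament, of `L` being a shortest path from `X` to `Y` inside `S`. -/
structure Link.IsGeodesic (L : Link V) (E : V → V → Prop) (S X Y : Finset V) : Prop where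
  adj_source : ∀ v ∈ L.verts, v ∉ L.ends → ∀ x ∈ X, E v x
  target_adj : ∀ v ∈ L.verts, v ∉ L.ends → ∀ y ∈ Y, E y v
  card_out_le : ∀ u ∈ S, ∀ x ∈ X, E x u → #(outNbrs E L.verts u) ≤ 3
  card_in_le : ∀ u ∈ S, ∀ y ∈ Y, E u y → #(outNbrs (flip E) L.verts u) ≤ 3

lemma Link.IsGeodesic.mono {L : Link V} {S S' X X' Y Y' : Finset V} (h : L.IsGeodesic E S X Y)
    (hS : S' ⊆ S) (hX : X' ⊆ X) (hY : Y' ⊆ Y) : L.IsGeodesic E S' X' Y' where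
  adj_source v hv hve x hx := h.adj_source v hv hve x (hX hx)
  target_adj v hv hve y hy := h.target_adj v hv hve y (hY hy)
  card_out_le u hu x hx := h.card_out_le u (hS hu) x (hX hx)
  card_in_le u hu y hy := h.card_in_le u (hS hu) y (hY hy)

lemma Link.IsGeodesic.reverse {L : Link V} {S X Y : Finset V} (h : L.IsGeodesic E S X Y) :
    L.reverse.IsGeodesic (flip E) S Y X where
  adj_source := h.target_adj
  target_adj := h.adj_source
  card_out_le := h.card_in_le
  card_in_le := h.card_out_le

variable [DecidableEq V]

/-- The link recording the walk `p 0, …, p l`. The truncated `min 1 l` and `l - 1` keep its ends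
inside the walk when `l = 0`. -/
def walkLink (l : ℕ) (p : ℕ → V) : Link V where
  src := p 0
  tgt := p l
  ends := {p 0, p (min 1 l), p (l - 1), p l}
  verts := (range (l + 1)).image p

lemma mem_verts_walkLink {l : ℕ} {p : ℕ → V} {v : V} :
    v ∈ (walkLink l p).verts ↔ ∃ i ≤ l, p i = v := by
  simp only [walkLink, mem_image, mem_range, Nat.lt_succ_iff]

lemma image_subset_verts {l : ℕ} {p : ℕ → V} {s : Finset ℕ} (hs : ∀ i ∈ s, i ≤ l) :
    s.image p ⊆ (walkLink l p).verts := by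
  intro v hv
  obtain ⟨i, hi, rfl⟩ := mem_image.1 hv
  exact mem_verts_walkLink.2 ⟨i, hs i hi, rfl⟩

lemma walkLink_reverse (l : ℕ) (p : ℕ → V) :
    walkLink l (fun i => p (l - i)) = (walkLink l p).reverse := by
  have hends : ({p l, p (l - min 1 l), p (l - (l - 1)), p 0} : Finset V) =
      {p 0, p (min 1 l), p (l - 1), p l} := by
    rw [show l - min 1 l = l - 1 by omega, show l - (l - 1) = min 1 l by omega]
    ext
    simp only [mem_insert, mem_singleton]
    tauto
  have hverts : (range (l + 1)).image (fun i => p (l - i)) = (range (l + 1)).image p := by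
    ext v
    simp only [mem_image, mem_range]
    constructor
    · rintro ⟨i, _, rfl⟩
      exact ⟨l - i, by omega, rfl⟩
    · rintro ⟨i, hi, rfl⟩
      exact ⟨l - i, by omega, by rw [Nat.sub_sub_self (by omega)]⟩
  simp only [walkLink, Link.reverse, Nat.sub_self, Nat.sub_zero, hends, hverts]

lemma index_of_notMem_ends {l j : ℕ} {p : ℕ → V} (hj : j ≤ l) (h : p j ∉ (walkLink l p).ends) :
    2 ≤ j ∧ j + 2 ≤ l := by
  simp only [walkLink, mem_insert, mem_singleton, not_or] at h
  obtain ⟨h0, h1, h2, h3⟩ := h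
  have hne {i : ℕ} (hi : p j ≠ p i) : j ≠ i := fun hji => hi (congrArg p hji)
  have := hne h0
  have := hne h1
  have := hne h2
  have := hne h3
  omega

namespace IsShortestWalk

variable {S X Y : Finset V} {l : ℕ} {p : ℕ → V}

lemma verts_subset (hp : IsShortestWalk E S X Y l p) : (walkLink l p).verts ⊆ S := by
  intro v hv
  obtain ⟨i, hi, rfl⟩ := mem_verts_walkLink.1 hv
  exact hp.mem i hi

lemma eq_src (hp : IsShortestWalk E S X Y l p) {v : V} (hv : v ∈ (walkLink l p).verts)
    (hvX : v ∈ X) : v = p 0 := by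
  obtain ⟨i, hi, rfl⟩ := mem_verts_walkLink.1 hv
  rw [Nat.le_zero.1 (hp.le_of_walkIn hvX hi (d := 0) ⟨hp.mem i hi, rfl⟩)]

lemma reachWithin_verts (hp : IsShortestWalk E S X Y l p) {i : ℕ} (hi : i ≤ l) :
    ReachWithin E ((walkLink l p).verts : Set V) (p 0) (p i) := by
  induction i with
  | zero => exact ReachWithin.refl _ _ _
  | succ i ih =>
    exact (ih (by omega)).trans (.single (mem_coe.2 (mem_verts_walkLink.2 ⟨i, by omega, rfl⟩))
      (mem_coe.2 (mem_verts_walkLink.2 ⟨i + 1, hi, rfl⟩)) (hp.adj i hi))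

lemma joins (hp : IsShortestWalk E S X Y l p) : (walkLink l p).Joins E X Y where
  ends_subset v hv := by
    simp only [walkLink, mem_insert, mem_singleton] at hv
    rw [mem_verts_walkLink]
    rcases hv with rfl | rfl | rfl | rfl
    · exact ⟨0, Nat.zero_le l, rfl⟩
    · exact ⟨min 1 l, min_le_right _ _, rfl⟩
    · exact ⟨l - 1, Nat.sub_le l 1, rfl⟩
    · exact ⟨l, le_rfl, rfl⟩
  card_ends := card_le_four
  src_mem_ends := by simp only [walkLink, mem_insert, true_or]
  tgt_mem_ends := by simp only [walkLink, mem_insert, mem_singleton, or_true]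
  src_mem := hp.source_mem
  tgt_mem := hp.target_mem
  eq_src _ hv hvX := hp.eq_src hv hvX
  eq_tgt v hv hvY := by
    have h := walkLink_reverse l p ▸ hp.reverse.eq_src (v := v)
    exact h hv hvY
  reachWithin := hp.reachWithin_verts le_rfl

lemma adj_source (hp : IsShortestWalk E S X Y l p) (hE : IsTournament E) (hX : X ⊆ S) {v x : V}
    (hv : v ∈ (walkLink l p).verts) (hve : v ∉ (walkLink l p).ends) (hx : x ∈ X) : E v x := by
  obtain ⟨j, hj, rfl⟩ := mem_verts_walkLink.1 hv
  have hj2 := (index_of_notMem_ends hj hve).1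
  refine hE.adj_of_not_adj ?_ fun hxj => ?_
  · rintro rfl
    have := hp.le_of_walkIn hx hj (d := 0) ⟨hp.mem j hj, rfl⟩
    omega
  · have := hp.le_of_walkIn hx hj (.single (hX hx) (hp.mem j hj) hxj)
    omega

lemma card_outNbrs_verts_le (hp : IsShortestWalk E S X Y l p) (hX : X ⊆ S) {u x : V} (hu : u ∈ S)
    (hx : x ∈ X) (hxu : E x u) : #(outNbrs E (walkLink l p).verts u) ≤ 3 := by
  have hsub : outNbrs E (walkLink l p).verts u ⊆ (range 3).image p := by
    intro q hq
    obtain ⟨hq, huq⟩ := mem_outNbrs.1 hq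
    obtain ⟨j, hj, rfl⟩ := mem_verts_walkLink.1 hq
    have := hp.le_of_walkIn hx hj
      ((WalkIn.single (hX hx) hu hxu).trans (.single hu (hp.mem j hj) huq))
    exact mem_image_of_mem _ (mem_range.2 (by omega))
  exact (card_le_card hsub).trans (card_image_le.trans (card_range 3).le)

lemma isGeodesic (hp : IsShortestWalk E S X Y l p) (hE : IsTournament E) (hX : X ⊆ S)
    (hY : Y ⊆ S) : (walkLink l p).IsGeodesic E S X Y where
  adj_source _ hv hve _ hx := hp.adj_source hE hX hv hve hx
  target_adj v hv hve y hy := by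
    have h := walkLink_reverse l p ▸ hp.reverse.adj_source (v := v) (x := y) hE.reverse hY
    exact h hv hve hy
  card_out_le _ hu _ hx hxu := hp.card_outNbrs_verts_le hX hu hx hxu
  card_in_le u hu y hy huy := by
    have h := walkLink_reverse l p ▸ hp.reverse.card_outNbrs_verts_le hY hu hy huy
    exact h

lemma card_le_card_sdiff (hp : IsShortestWalk E S X Y l p) (hE : IsTournament E) :
    #(outNbrs E S (p 0)) ≤ #(S \ (walkLink l p).verts) + 1 := by
  have hsub : outNbrs E S (p 0) \ {p 1} ⊆ S \ (walkLink l p).verts := by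
    intro v hv
    obtain ⟨hv, hv1⟩ := mem_sdiff.1 hv
    obtain ⟨hvS, hv⟩ := mem_outNbrs.1 hv
    refine mem_sdiff.2 ⟨hvS, fun hvP => ?_⟩
    obtain ⟨j, hj, rfl⟩ := mem_verts_walkLink.1 hvP
    have hj1 := hp.le_add_of_walkIn (Nat.zero_le l) hj (.single (hp.mem 0 (Nat.zero_le l)) hvS hv)
    obtain rfl | rfl : j = 0 ∨ j = 1 := by omega
    · exact hE.1 _ hv
    · exact hv1 (mem_singleton_self _)
  have h1 := card_le_card hsub
  have h2 := le_card_sdiff {p 1} (outNbrs E S (p 0))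
  rw [card_singleton] at h2
  omega

lemma closed_union_prefix (hp : IsShortestWalk E S X Y l p) (hE : IsTournament E)
    {A Z : Finset V} {i : ℕ} (hA : A ⊆ (S \ (walkLink l p).verts) \ Z)
    (hcl : ∀ a ∈ A, ∀ b ∈ (S \ (walkLink l p).verts) \ Z, E a b → b ∈ A) (hil : i ≤ l + 1)
    (hi : i ≤ l → ∃ b ∈ (S \ (walkLink l p).verts) \ Z, b ∉ A ∧ E (p i) b)
    (hlt : ∀ j < i, ∀ b ∈ (S \ (walkLink l p).verts) \ Z, E (p j) b → b ∈ A) :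
    ∀ a ∈ A ∪ (range i).image p, ∀ b ∈ S \ (Z ∪ (Ico i (min (i + 4) (l + 1))).image p), E a b →
      b ∈ A ∪ (range i).image p := by
  intro a ha b hb hab
  simp only [mem_sdiff, mem_union, not_or] at hb
  obtain ⟨hbS, hbZ, hbI⟩ := hb
  by_cases hbP : b ∈ (walkLink l p).verts
  · obtain ⟨j, hj, rfl⟩ := mem_verts_walkLink.1 hbP
    by_cases hji : j < i
    · exact mem_union_right _ (mem_image_of_mem p (mem_range.2 hji))
    have hij : i + 4 ≤ j := by
      by_contra hlt
      exact hbI (mem_image_of_mem p (mem_Ico.2 (by omega)))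
    exfalso
    rcases mem_union.1 ha with ha | ha
    · obtain ⟨c, hc, hcA, hic⟩ := hi (by omega)
      exact hp.not_adj_of_closed hE hA (sdiff_subset.trans sdiff_subset) hcl hij hj hc hcA hic ha
        hab
    · obtain ⟨m, hm, rfl⟩ := mem_image.1 ha
      have hm := mem_range.1 hm
      have := hp.le_add_of_walkIn (by omega) hj (.single (hp.mem m (by omega)) hbS hab)
      omega
  · have hb : b ∈ (S \ (walkLink l p).verts) \ Z := mem_sdiff.2 ⟨mem_sdiff.2 ⟨hbS, hbP⟩, hbZ⟩
    refine mem_union_left _ ?_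
    rcases mem_union.1 ha with ha | ha
    · exact hcl a ha b hb hab
    · obtain ⟨m, hm, rfl⟩ := mem_image.1 ha
      exact hlt m (mem_range.1 hm) b hb hab

-- Let `A` be closed in `S \ verts`. If `p i` is the first vertex of the walk with an edge leaving
-- `A`, then `A ∪ {p j | j < i}` is closed in `S` once `p i, …, p (i + 3)` are deleted: an edge from
-- `A` to a later vertex of the walk would give a shortcut.
lemma stronglyKConnectedOn_sdiff (hp : IsShortestWalk E S X Y l p) (hE : IsTournament E) {k : ℕ}
    (h : StronglyKConnectedOn E (k + 4) S) :
    StronglyKConnectedOn E k (S \ (walkLink l p).verts) := by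
  refine ⟨?_, fun Z hZ => stronglyConnectedOn_coe_of_closed fun A hA ⟨a, ha⟩ hcl b hb => ?_⟩
  · have h1 := h.lt_card_outNbrs hE (by omega) (hp.mem 0 (Nat.zero_le l))
    have h2 := hp.card_le_card_sdiff hE
    omega
  obtain ⟨i, hil, hi, hlt⟩ := exists_first_exit E l p A ((S \ (walkLink l p).verts) \ Z)
  set W := (Ico i (min (i + 4) (l + 1))).image p
  have hcard : #(Z ∪ W) ≤ k + 4 := by
    have h1 : #W ≤ min (i + 4) (l + 1) - i := card_image_le.trans (Nat.card_Ico _ _).le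
    have h2 := card_union_le Z W
    omega
  have hWP : W ⊆ (walkLink l p).verts := image_subset_verts fun j hj => by
    have := mem_Ico.1 hj
    omega
  have hprefix : (range i).image p ⊆ (walkLink l p).verts := image_subset_verts fun j hj => by
    have := mem_range.1 hj
    omega
  have hsub : (S \ (walkLink l p).verts) \ Z ⊆ S \ (Z ∪ W) := fun v hv => by
    simp only [mem_sdiff, mem_union, not_or] at hv ⊢
    exact ⟨hv.1.1, hv.2, fun hvW => hv.1.2 (hWP hvW)⟩
  have hall := h.sdiff_subset_of_closed hcard (mem_union_left _ ha) (hsub (hA ha))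
    (hp.closed_union_prefix hE hA hcl hil hi hlt)
  refine (mem_union.1 (hall (hsub hb))).resolve_right fun hbp => ?_
  exact (mem_sdiff.1 (mem_sdiff.1 hb).1).2 (hprefix hbp)

end IsShortestWalk

lemma exists_link (hE : IsTournament E) {K : ℕ} {S X Y : Finset V}
    (h : StronglyKConnectedOn E K S) (hK : 4 ≤ K) (hX : X ⊆ S) (hY : Y ⊆ S)
    (hXne : X.Nonempty) (hYne : Y.Nonempty) :
    ∃ L : Link V, L.verts ⊆ S ∧ L.Joins E X Y ∧ L.IsGeodesic E S X Y ∧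
      StronglyKConnectedOn E (K - 4) (S \ L.verts) := by
  have hS : StronglyConnectedOn E (S : Set V) := by
    rw [← sdiff_empty (s := S)]
    exact h.2 ∅ (by rw [card_empty]; exact K.zero_le)
  obtain ⟨l, p, hp⟩ := hS.exists_isShortestWalk hX hY hXne hYne
  exact ⟨walkLink l p, hp.verts_subset, hp.joins, hp.isGeodesic hE hX hY,
    hp.stronglyKConnectedOn_sdiff hE (by rwa [Nat.sub_add_cancel hK])⟩

end Links

section LinkSystems

variable {V ι : Type*} [DecidableEq V] {E : V → V → Prop} {S X Y : Finset V} {T : Finset ι}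
  {L : ι → Link V}

/-- A family of disjoint links from `X` to `Y`, indexed by `T`, each of which is geodesic with
respect to the vertices of `S` used by none of them. -/
structure LinkSystem (E : V → V → Prop) (S X Y : Finset V) (T : Finset ι) (L : ι → Link V) :
    Prop where
  subset : ∀ α ∈ T, (L α).verts ⊆ S
  joins : ∀ α ∈ T, (L α).Joins E X Y
  disjoint : ∀ α ∈ T, ∀ β ∈ T, α ≠ β → Disjoint (L α).verts (L β).verts
  isGeodesic : ∀ α ∈ T, (L α).IsGeodesic E (S \ T.biUnion fun β => (L β).verts)
    (X \ T.biUnion fun β => (L β).verts) (Y \ T.biUnion fun β => (L β).verts)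

lemma LinkSystem.reverse (h : LinkSystem E S X Y T L) :
    LinkSystem (flip E) S Y X T fun α => (L α).reverse where
  subset := h.subset
  joins α hα := (h.joins α hα).reverse
  disjoint := h.disjoint
  isGeodesic α hα := (h.isGeodesic α hα).reverse

lemma Link.Joins.of_sdiff {Q : Link V} {U : Finset V} (h : Q.Joins E (X \ U) (Y \ U))
    (hU : Disjoint Q.verts U) : Q.Joins E X Y :=
  { h with
    src_mem := sdiff_subset h.src_mem
    tgt_mem := sdiff_subset h.tgt_mem
    eq_src := fun v hv hvX => h.eq_src v hv (mem_sdiff.2 ⟨hvX, disjoint_left.1 hU hv⟩)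
    eq_tgt := fun v hv hvY => h.eq_tgt v hv (mem_sdiff.2 ⟨hvY, disjoint_left.1 hU hv⟩) }

lemma biUnion_insert_update [DecidableEq ι] {a : ι} (ha : a ∉ T) (Q : Link V) :
    ((insert a T).biUnion fun β => (Function.update L a Q β).verts) =
      Q.verts ∪ T.biUnion fun β => (L β).verts := by
  rw [biUnion_insert, Function.update_self]
  congr 1
  exact biUnion_congr rfl fun β hβ => by
    rw [Function.update_of_ne (ne_of_mem_of_not_mem hβ ha)]

lemma LinkSystem.insert_update [DecidableEq ι] (h : LinkSystem E S X Y T L) {a : ι} (ha : a ∉ T)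
    {Q : Link V} {U : Finset V} (hU : U = T.biUnion fun β => (L β).verts) (hQS : Q.verts ⊆ S \ U)
    (hQ : Q.Joins E (X \ U) (Y \ U)) (hQG : Q.IsGeodesic E (S \ U) (X \ U) (Y \ U)) :
    LinkSystem E S X Y (insert a T) (Function.update L a Q) := by
  have hQU : Disjoint Q.verts U := (subset_sdiff.1 hQS).2
  have hold : ∀ α ∈ T, Function.update L a Q α = L α := fun α hα =>
    Function.update_of_ne (ne_of_mem_of_not_mem hα ha) _ _
  have hdisj : ∀ α ∈ T, Disjoint Q.verts (L α).verts := fun α hα =>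
    hQU.mono_right (hU ▸ subset_biUnion_of_mem (fun β => (L β).verts) hα)
  have hsub (Z : Finset V) : Z \ (Q.verts ∪ U) ⊆ Z \ U :=
    sdiff_subset_sdiff subset_rfl subset_union_right
  refine ⟨?_, ?_, ?_, ?_⟩
  · refine (forall_mem_insert _ _ _).2 ⟨?_, fun α hα => ?_⟩
    · rw [Function.update_self]
      exact hQS.trans sdiff_subset
    · exact hold α hα ▸ h.subset α hα
  · refine (forall_mem_insert _ _ _).2 ⟨?_, fun α hα => ?_⟩
    · rw [Function.update_self]
      exact hQ.of_sdiff hQU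
    · exact hold α hα ▸ h.joins α hα
  · intro α hα β hβ hne
    rcases mem_insert.1 hα with rfl | hαT <;> rcases mem_insert.1 hβ with rfl | hβT
    · exact absurd rfl hne
    · rw [Function.update_self, hold β hβT]
      exact hdisj β hβT
    · rw [Function.update_self, hold α hαT]
      exact (hdisj α hαT).symm
    · rw [hold α hαT, hold β hβT]
      exact h.disjoint α hαT β hβT hne
  · rw [biUnion_insert_update ha, ← hU]
    refine (forall_mem_insert _ _ _).2 ⟨?_, fun α hα => ?_⟩
    · rw [Function.update_self]
      exact hQG.mono (hsub _) (hsub _) (hsub _)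
    · rw [hold α hα]
      exact (hU ▸ h.isGeodesic α hα).mono (hsub _) (hsub _) (hsub _)

lemma sdiff_biUnion_nonempty {P : ι → Finset V} {x : ι → V}
    (hx : ∀ α ∈ T, ∀ v ∈ P α, v ∈ X → v = x α) (hX : #T < #X) : (X \ T.biUnion P).Nonempty := by
  obtain ⟨v, hv, hvT⟩ := exists_mem_notMem_of_card_lt_card
    ((card_image_le (s := T) (f := x)).trans_lt hX)
  refine ⟨v, mem_sdiff.2 ⟨hv, fun hvP => hvT ?_⟩⟩
  obtain ⟨α, hα, hvα⟩ := mem_biUnion.1 hvP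
  exact mem_image.2 ⟨α, hα, (hx α hα v hvα hv).symm⟩

lemma exists_linkSystem (hE : IsTournament E) {K : ℕ} (h : StronglyKConnectedOn E K S)
    (hX : X ⊆ S) (hY : Y ⊆ S) (T : Finset ι) (hK : 4 * #T ≤ K) (hXc : #T ≤ #X) (hYc : #T ≤ #Y) :
    ∃ L : ι → Link V, LinkSystem E S X Y T L ∧
      StronglyKConnectedOn E (K - 4 * #T) (S \ T.biUnion fun α => (L α).verts) := by
  classical
  induction T using Finset.induction_on with
  | empty =>
    obtain ⟨v, -⟩ : S.Nonempty := card_pos.1 (Nat.zero_lt_of_lt h.1)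
    refine ⟨fun _ => ⟨v, v, ∅, ∅⟩, ⟨?_, ?_, ?_, ?_⟩, ?_⟩
    · exact fun α hα => absurd hα (notMem_empty α)
    · exact fun α hα => absurd hα (notMem_empty α)
    · exact fun α hα => absurd hα (notMem_empty α)
    · exact fun α hα => absurd hα (notMem_empty α)
    · rwa [biUnion_empty, sdiff_empty, card_empty, mul_zero, Nat.sub_zero]
  | insert a T ha ih =>
    rw [card_insert_of_notMem ha] at hK hXc hYc
    obtain ⟨L, hL, hC⟩ := ih (by omega) (by omega) (by omega)
    obtain ⟨Q, hQS, hQ, hQG, hQC⟩ := exists_link hE hC (by omega)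
      (sdiff_subset_sdiff hX subset_rfl) (sdiff_subset_sdiff hY subset_rfl)
      (sdiff_biUnion_nonempty (fun α hα => (hL.joins α hα).eq_src) hXc)
      (sdiff_biUnion_nonempty (fun α hα => (hL.joins α hα).eq_tgt) hYc)
    refine ⟨Function.update L a Q, hL.insert_update ha rfl hQS hQ hQG, ?_⟩
    rw [biUnion_insert_update ha, union_comm, card_insert_of_notMem ha]
    rw [sdiff_sdiff_left] at hQC
    exact hQC.mono (by omega)

end LinkSystems

section DominatingSets

variable {V : Type*} {E : V → V → Prop}

lemma IsTournament.card_outNbrs_add_card_le (hE : IsTournament E) (S : Finset V) (v : V) :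
    #(outNbrs E S v) + #(outNbrs (flip E) S v) ≤ #S := by
  classical
  rw [← card_union_of_disjoint]
  · exact card_le_card (union_subset (outNbrs_subset _ _ _) (outNbrs_subset _ _ _))
  · exact disjoint_left.2 fun x hx hx' => hE.asymm (mem_outNbrs.1 hx).2 (mem_outNbrs.1 hx').2

lemma sum_card_outNbrs_eq (E : V → V → Prop) (S T : Finset V) :
    ∑ v ∈ S, #(outNbrs E T v) = ∑ v ∈ T, #(outNbrs (flip E) S v) := by
  classical
  exact sum_card_bipartiteAbove_eq_sum_card_bipartiteBelow E

lemma IsTournament.exists_two_mul_card_outNbrs_le (hE : IsTournament E) {D : Finset V}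
    (hD : D.Nonempty) : ∃ d ∈ D, 2 * #(outNbrs E D d) ≤ #D := by
  obtain ⟨d, hd, hle⟩ := exists_le_of_sum_le hD (sum_card_outNbrs_eq E D D).le
  refine ⟨d, hd, ?_⟩
  have := hE.card_outNbrs_add_card_le D d
  omega

variable [DecidableEq V]

/-- `A` is small, all vertices of `A` other than `e ∈ A` send an edge to `e`, and all but at most
`n / 2 ^ s` vertices of `S \ A` send an edge to `A`. -/
structure IsDominating (E : V → V → Prop) (S : Finset V) (s n : ℕ) (A : Finset V) (e : V) :
    Prop where
  card_le : #A ≤ s + 1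
  exit_mem : e ∈ A
  adj_exit : ∀ v ∈ A, v = e ∨ E v e
  card_miss_le : ∀ D ⊆ S \ A, (∀ v ∈ D, ∀ a ∈ A, ¬ E v a) → #D * 2 ^ s ≤ n

lemma IsDominating.mono {S S' A : Finset V} {s n n' : ℕ} {e : V} (h : IsDominating E S s n A e)
    (hS : S' ⊆ S) (hn : n ≤ n') : IsDominating E S' s n' A e where
  card_le := h.card_le
  exit_mem := h.exit_mem
  adj_exit := h.adj_exit
  card_miss_le D hD hmiss :=
    (h.card_miss_le D (hD.trans (sdiff_subset_sdiff hS subset_rfl)) hmiss).trans hn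

open Classical in
-- `A` is chosen greedily: each new vertex is a sink of small out-degree in the set of common
-- out-neighbours of the previous ones, which therefore halves at every step.
lemma exists_small_common_outNbrs (hE : IsTournament E) (S : Finset V) (a : V) (s : ℕ) :
    ∃ A, a ∈ A ∧ A ⊆ insert a S ∧ #A ≤ s + 1 ∧ (∃ e ∈ A, ∀ v ∈ A, v = e ∨ E v e) ∧
      #{v ∈ S | ∀ w ∈ A, E w v} * 2 ^ s ≤ #(outNbrs E S a) := by
  induction s with
  | zero =>
    refine ⟨{a}, mem_singleton_self a, singleton_subset_iff.2 (mem_insert_self a S),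
      (card_singleton a).le, ⟨a, mem_singleton_self a, fun v hv => .inl (mem_singleton.1 hv)⟩, ?_⟩
    rw [pow_zero, mul_one]
    exact card_le_card fun v hv => mem_outNbrs.2
      ⟨(mem_filter.1 hv).1, (mem_filter.1 hv).2 a (mem_singleton_self a)⟩
  | succ s ih =>
    obtain ⟨A, haA, hAS, hcard, hexit, hD⟩ := ih
    rcases ({v ∈ S | ∀ w ∈ A, E w v} : Finset V).eq_empty_or_nonempty with hempty | hne
    · refine ⟨A, haA, hAS, by omega, hexit, ?_⟩
      rw [hempty, card_empty, zero_mul]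
      exact Nat.zero_le _
    obtain ⟨d, hd, hdD⟩ := hE.exists_two_mul_card_outNbrs_le hne
    obtain ⟨hdS, hAd⟩ := mem_filter.1 hd
    refine ⟨insert d A, mem_insert_of_mem haA,
      insert_subset (mem_insert_of_mem hdS) hAS, (card_insert_le _ _).trans (by omega),
      ⟨d, mem_insert_self d A, fun v hv => (mem_insert.1 hv).imp_right (hAd v)⟩, ?_⟩
    have hsub : {v ∈ S | ∀ w ∈ insert d A, E w v} ⊆ outNbrs E {v ∈ S | ∀ w ∈ A, E w v} d := by
      intro v hv
      obtain ⟨hvS, hv⟩ := mem_filter.1 hv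
      obtain ⟨hdv, hAv⟩ := (forall_mem_insert _ _ _).1 hv
      exact mem_outNbrs.2 ⟨mem_filter.2 ⟨hvS, hAv⟩, hdv⟩
    calc _ ≤ #(outNbrs E {v ∈ S | ∀ w ∈ A, E w v} d) * 2 ^ (s + 1) :=
          Nat.mul_le_mul_right _ (card_le_card hsub)
      _ = 2 * #(outNbrs E {v ∈ S | ∀ w ∈ A, E w v} d) * 2 ^ s := by ring
      _ ≤ #{v ∈ S | ∀ w ∈ A, E w v} * 2 ^ s := Nat.mul_le_mul_right _ hdD
      _ ≤ _ := hD

lemma exists_isDominating (hE : IsTournament E) (S : Finset V) (x : V) (s : ℕ) :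
    ∃ A, x ∈ A ∧ A ⊆ insert x S ∧ ∃ e, IsDominating E S s #(outNbrs E S x) A e := by
  classical
  obtain ⟨A, hxA, hAS, hcard, ⟨e, heA, he⟩, hA⟩ := exists_small_common_outNbrs hE S x s
  refine ⟨A, hxA, hAS, e, hcard, heA, he, fun D hD hmiss => ?_⟩
  refine (Nat.mul_le_mul_right _ (card_le_card fun v hv => ?_)).trans hA
  obtain ⟨hvS, hvA⟩ := mem_sdiff.1 (hD hv)
  exact mem_filter.2 ⟨hvS, fun w hw =>
    hE.adj_of_not_adj (ne_of_mem_of_not_mem hw hvA).symm (hmiss v hv w hw)⟩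

/-- For every `x ∈ X`, the set `A x` contains `x`, takes its other vertices from `S`, and dominates
the part of `S` used by none of these sets, which are pairwise disjoint. -/
structure DominatesFrom (E : V → V → Prop) (S X : Finset V) (s : ℕ) (A : V → Finset V) : Prop where
  mem : ∀ x ∈ X, x ∈ A x
  subset_insert : ∀ x ∈ X, A x ⊆ insert x S
  isDominating : ∀ x ∈ X, ∃ e, IsDominating E (S \ X.biUnion A) s #(outNbrs E S x) (A x) e
  disjoint : (X : Set V).PairwiseDisjoint A

lemma DominatesFrom.insert_update {S X : Finset V} {s : ℕ} {A : V → Finset V}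
    (hA : DominatesFrom E S X s A) {x : V} (hxS : x ∉ S) (hx : x ∉ X) {A' : Finset V}
    (hxA' : x ∈ A') (hA'S : A' ⊆ insert x (S \ X.biUnion A)) {e : V}
    (hA' : IsDominating E (S \ X.biUnion A) s #(outNbrs E (S \ X.biUnion A) x) A' e) :
    DominatesFrom E S (insert x X) s (Function.update A x A') := by
  have hold : ∀ y ∈ X, Function.update A x A' y = A y := fun y hy =>
    Function.update_of_ne (ne_of_mem_of_not_mem hy hx) _ _
  have hU : (insert x X).biUnion (Function.update A x A') = A' ∪ X.biUnion A := by
    rw [biUnion_insert, Function.update_self]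
    exact congrArg _ (biUnion_congr rfl hold)
  have hsub : S \ (A' ∪ X.biUnion A) ⊆ S \ X.biUnion A :=
    sdiff_subset_sdiff subset_rfl subset_union_right
  have hdisj : ∀ y ∈ X, Disjoint A' (A y) := fun y hy => by
    refine (disjoint_insert_left.2 ⟨fun hxy => ?_, ?_⟩).mono_left hA'S
    · exact (mem_insert.1 (hA.subset_insert y hy hxy)).elim
        (ne_of_mem_of_not_mem hy hx).symm hxS
    · exact (sdiff_disjoint (t := S)).mono_right (subset_biUnion_of_mem A hy)
  refine ⟨?_, ?_, ?_, ?_⟩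
  · refine (forall_mem_insert _ _ _).2 ⟨?_, fun y hy => ?_⟩
    · rwa [Function.update_self]
    · exact hold y hy ▸ hA.mem y hy
  · refine (forall_mem_insert _ _ _).2 ⟨?_, fun y hy => ?_⟩
    · rw [Function.update_self]
      exact hA'S.trans (insert_subset_insert x sdiff_subset)
    · exact hold y hy ▸ hA.subset_insert y hy
  · rw [hU]
    refine (forall_mem_insert _ _ _).2 ⟨⟨e, ?_⟩, fun y hy => ?_⟩
    · rw [Function.update_self]
      exact hA'.mono hsub (card_le_card (outNbrs_mono E sdiff_subset x))
    · rw [hold y hy]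
      exact (hA.isDominating y hy).imp fun _ h => h.mono hsub le_rfl
  · rw [coe_insert]
    refine Set.PairwiseDisjoint.insert (fun y hy z hz hyz => ?_) fun y hy _ => ?_
    · rw [Function.onFun, hold y hy, hold z hz]
      exact hA.disjoint hy hz hyz
    · rw [Function.update_self, hold y hy]
      exact hdisj y hy

lemma exists_dominatesFrom (hE : IsTournament E) {S X : Finset V} (hSX : Disjoint S X) (s : ℕ) :
    ∃ A, DominatesFrom E S X s A := by
  induction X using Finset.induction_on with
  | empty =>
    refine ⟨fun _ => ∅, fun x hx => absurd hx (notMem_empty x),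
      fun x hx => absurd hx (notMem_empty x), fun x hx => absurd hx (notMem_empty x), ?_⟩
    rw [coe_empty]
    exact Set.pairwiseDisjoint_empty
  | insert x X hx ih =>
    obtain ⟨hxS, hSX⟩ := disjoint_insert_right.1 hSX
    obtain ⟨A, hA⟩ := ih hSX
    obtain ⟨A', hxA', hA'S, e, hA'⟩ := exists_isDominating hE (S \ X.biUnion A) x s
    exact ⟨_, hA.insert_update hxS hx hxA' hA'S hA'⟩

end DominatingSets

section DominatingSystems

variable {V J : Type*} [DecidableEq V] {E : V → V → Prop}

lemma exists_subset_card_eq_forall_le {α : Type*} [DecidableEq α] (f : α → ℕ) {S : Finset α}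
    {m : ℕ} (hm : m ≤ #S) : ∃ X ⊆ S, #X = m ∧ ∀ x ∈ X, ∀ v ∈ S \ X, f x ≤ f v := by
  induction m with
  | zero => exact ⟨∅, empty_subset S, card_empty, fun x hx => absurd hx (notMem_empty x)⟩
  | succ m ih =>
    obtain ⟨X, hXS, rfl, hX⟩ := ih (by omega)
    obtain ⟨w, hw, hmin⟩ := exists_min_image (S \ X) f
      (sdiff_nonempty.2 fun hSX => by have := card_le_card hSX; omega)
    obtain ⟨hwS, hwX⟩ := mem_sdiff.1 hw
    have hsub : S \ insert w X ⊆ S \ X := sdiff_subset_sdiff subset_rfl (subset_insert w X)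
    exact ⟨insert w X, insert_subset hwS hXS, card_insert_of_notMem hwX,
      (forall_mem_insert _ _ _).2
        ⟨fun v hv => hmin v (hsub hv), fun x hx v hv => hX x hx v (hsub hv)⟩⟩

lemma DominatesFrom.subset_biUnion {S X : Finset V} {s : ℕ} {A : V → Finset V}
    (hA : DominatesFrom E S X s A) : X ⊆ X.biUnion A :=
  fun x hx => mem_biUnion.2 ⟨x, hx, hA.mem x hx⟩

lemma DominatesFrom.disjoint_of_disjoint {E' : V → V → Prop} {S X Y : Finset V} {s s' : ℕ}
    {A B : V → Finset V} (hA : DominatesFrom E S X s A)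
    (hB : DominatesFrom E' (S \ X.biUnion A) Y s' B) (hXY : Disjoint X Y) (hSY : Disjoint S Y)
    {x y : V} (hx : x ∈ X) (hy : y ∈ Y) : Disjoint (A x) (B y) := by
  refine Disjoint.mono_right (hB.subset_insert y hy) (disjoint_insert_right.2 ⟨fun hyA => ?_, ?_⟩)
  · rcases mem_insert.1 (hA.subset_insert x hx hyA) with rfl | hyS
    · exact disjoint_left.1 hXY hx hy
    · exact disjoint_left.1 hSY hyS hy
  · exact disjoint_sdiff.mono_left (subset_biUnion_of_mem A hx)

variable [Fintype V]

/-- Disjoint subsets `A j` and `B j` of `D`, where `A j` dominates with exit `a j` and `B j` does so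
in the reversed tournament. The number of vertices missed by them is measured relative to lower
bounds `dP` and `dM` for the out-degrees and in-degrees outside `D`. -/
structure DominatingSystem (E : V → V → Prop) (s : ℕ) (D : Finset V) (A B : J → Finset V)
    (a b : J → V) (dP dM : ℕ) : Prop where
  inDom : ∀ j, IsDominating E Dᶜ s dP (A j) (a j)
  outDom : ∀ j, IsDominating (flip E) Dᶜ s dM (B j) (b j)
  inDom_subset : ∀ j, A j ⊆ D
  outDom_subset : ∀ j, B j ⊆ D
  disjoint_inDom : ∀ i j, i ≠ j → Disjoint (A i) (A j)
  disjoint_outDom : ∀ i j, i ≠ j → Disjoint (B i) (B j)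
  disjoint_inDom_outDom : ∀ i j, Disjoint (A i) (B j)
  le_outDegree : ∀ v ∉ D, dP ≤ #(outNbrs E univ v)
  le_inDegree : ∀ v ∉ D, dM ≤ #(outNbrs (flip E) univ v)

lemma DominatingSystem.reverse {s : ℕ} {D : Finset V} {A B : J → Finset V} {a b : J → V}
    {dP dM : ℕ} (h : DominatingSystem E s D A B a b dP dM) :
    DominatingSystem (flip E) s D B A b a dM dP where
  inDom := h.outDom
  outDom := h.inDom
  inDom_subset := h.outDom_subset
  outDom_subset := h.inDom_subset
  disjoint_inDom := h.disjoint_outDom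
  disjoint_outDom := h.disjoint_inDom
  disjoint_inDom_outDom i j := (h.disjoint_inDom_outDom j i).symm
  le_outDegree := h.le_inDegree
  le_inDegree := h.le_outDegree

lemma exists_dominatingSystem_of_smallest (hE : IsTournament E) {X Y : Finset V}
    (hXY : Disjoint X Y) {x₀ y₀ : V}
    (hx₀ : ∀ x ∈ X, #(outNbrs E univ x) ≤ #(outNbrs E univ x₀))
    (hy₀ : ∀ y ∈ Y, #(outNbrs (flip E) univ y) ≤ #(outNbrs (flip E) univ y₀))
    (hX : ∀ v ∈ Xᶜ, #(outNbrs E univ x₀) ≤ #(outNbrs E univ v))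
    (hY : ∀ v ∈ Xᶜ \ Y, #(outNbrs (flip E) univ y₀) ≤ #(outNbrs (flip E) univ v))
    (eX : J ≃ X) (eY : J ≃ Y) (s : ℕ) :
    ∃ D A B a b, DominatingSystem (J := J) E s D A B a b #(outNbrs E univ x₀)
      #(outNbrs (flip E) univ y₀) ∧ #D ≤ (#X + #Y) * (s + 1) := by
  set S := (X ∪ Y)ᶜ
  have hSX : Disjoint S X := disjoint_compl_left.mono_right subset_union_left
  have hSY : Disjoint S Y := disjoint_compl_left.mono_right subset_union_right
  obtain ⟨A, hA⟩ := exists_dominatesFrom hE hSX s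
  set U := X.biUnion A
  obtain ⟨B, hB⟩ := exists_dominatesFrom hE.reverse (hSY.mono_left (sdiff_subset (t := U))) s
  choose! a ha using hA.isDominating
  choose! b hb using hB.isDominating
  have hDc : (U ∪ Y.biUnion B)ᶜ ⊆ (S \ U) \ Y.biUnion B := fun v hv => by
    simp only [mem_compl, mem_union, not_or, S, mem_sdiff] at hv ⊢
    exact ⟨⟨⟨fun hvX => hv.1 (hA.subset_biUnion hvX), fun hvY => hv.2 (hB.subset_biUnion hvY)⟩,
      hv.1⟩, hv.2⟩
  have hXD : ∀ v ∉ U ∪ Y.biUnion B, v ∈ Xᶜ := fun v hv =>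
    mem_compl.2 fun hvX => hv (mem_union_left _ (hA.subset_biUnion hvX))
  refine ⟨U ∪ Y.biUnion B, fun j => A (eX j), fun j => B (eY j), fun j => a (eX j),
    fun j => b (eY j), ⟨fun j => ?_, fun j => ?_, fun j => ?_, fun j => ?_, fun i j hij => ?_,
    fun i j hij => ?_, fun i j => ?_, fun v hv => ?_, fun v hv => ?_⟩, ?_⟩
  · exact (ha _ (eX j).2).mono (hDc.trans sdiff_subset)
      ((card_le_card (outNbrs_mono E (subset_univ S) _)).trans (hx₀ _ (eX j).2))
  · exact (hb _ (eY j).2).mono hDc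
      ((card_le_card (outNbrs_mono (flip E) (subset_univ (S \ U)) _)).trans (hy₀ _ (eY j).2))
  · exact (subset_biUnion_of_mem A (eX j).2).trans subset_union_left
  · exact (subset_biUnion_of_mem B (eY j).2).trans subset_union_right
  · exact hA.disjoint (eX i).2 (eX j).2 (Subtype.coe_injective.ne (eX.injective.ne hij))
  · exact hB.disjoint (eY i).2 (eY j).2 (Subtype.coe_injective.ne (eY.injective.ne hij))
  · exact hA.disjoint_of_disjoint hB hXY hSY (eX i).2 (eY j).2
  · exact hX v (hXD v hv)
  · exact hY v (mem_sdiff.2 ⟨hXD v hv, fun hvY => hv (mem_union_right _ (hB.subset_biUnion hvY))⟩)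
  · rw [add_mul]
    exact (card_union_le _ _).trans (add_le_add
      (card_biUnion_le_card_mul _ _ _ fun x hx => (ha x hx).card_le)
      (card_biUnion_le_card_mul _ _ _ fun y hy => (hb y hy).card_le))

lemma exists_dominatingSystem [Fintype J] [Nonempty J] (hE : IsTournament E) {K : ℕ}
    (h : StronglyKConnectedOn E K univ) (hK : 2 * Fintype.card J ≤ K) (s : ℕ) :
    ∃ D A B a b dP dM, DominatingSystem (J := J) E s D A B a b dP dM ∧
      #D ≤ 2 * Fintype.card J * (s + 1) ∧ K ≤ dP ∧ K ≤ dM := by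
  have hJ : 0 < Fintype.card J := Fintype.card_pos
  have hV : K + 1 ≤ Fintype.card V := h.1
  obtain ⟨X, -, hXc, hX⟩ := exists_subset_card_eq_forall_le (fun v => #(outNbrs E univ v))
    (S := univ) (m := Fintype.card J) (by rw [card_univ]; omega)
  obtain ⟨Y, hYX, hYc, hY⟩ := exists_subset_card_eq_forall_le
    (fun v => #(outNbrs (flip E) univ v)) (S := Xᶜ) (m := Fintype.card J)
    (by rw [card_compl]; omega)
  obtain ⟨x₀, hx₀, hmaxX⟩ := exists_max_image X (fun v => #(outNbrs E univ v))
    (card_pos.1 (by omega))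
  obtain ⟨y₀, hy₀, hmaxY⟩ := exists_max_image Y (fun v => #(outNbrs (flip E) univ v))
    (card_pos.1 (by omega))
  obtain ⟨D, A, B, a, b, hD, hcard⟩ :=
    exists_dominatingSystem_of_smallest hE (disjoint_compl_right.mono_right hYX) hmaxX hmaxY
    (fun v hv => hX x₀ hx₀ v (mem_sdiff.2 ⟨mem_univ v, mem_compl.1 hv⟩)) (hY y₀ hy₀)
    (Fintype.equivOfCardEq (α := J) (by rw [Fintype.card_coe, hXc]))
    (Fintype.equivOfCardEq (by rw [Fintype.card_coe, hYc])) s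
  refine ⟨D, A, B, a, b, _, _, hD, ?_, ?_, ?_⟩
  · rwa [hXc, hYc, ← two_mul] at hcard
  · exact (h.lt_card_outNbrs hE (by omega) (mem_univ x₀)).le
  · exact (h.reverse.lt_card_outNbrs hE.reverse (by omega) (mem_univ y₀)).le

end DominatingSystems

section Gadgets

variable {V ι κ : Type*} [DecidableEq V] {E : V → V → Prop}

/-- A gadget `U` of the paper: a small `body`, which contains sets `inDom` and `outDom` meant to
receive edges from, respectively to send edges to, almost all vertices, and the remaining vertices
`path` of a path from `inDom` to `outDom`. Vertices of the body called hubs serve as alternatives: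
all path vertices send an edge to `inHub` and receive one from `outHub`. -/
structure Gadget (V : Type*) where
  inDom : Finset V
  outDom : Finset V
  body : Finset V
  path : Finset V
  inHub : V
  outHub : V

/-- The same gadget seen in the reversed tournament. -/
def Gadget.reverse (G : Gadget V) : Gadget V :=
  ⟨G.outDom, G.inDom, G.body, G.path, G.outHub, G.inHub⟩

/-- The vertices of a gadget. -/
def Gadget.verts (G : Gadget V) : Finset V := G.body ∪ G.path

/-- Pairwise disjoint gadgets with the properties described at `Gadget`. -/
structure GadgetFamily (E : V → V → Prop) (G : ι → Gadget V) : Prop where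
  inDom_subset : ∀ α, (G α).inDom ⊆ (G α).body
  outDom_subset : ∀ α, (G α).outDom ⊆ (G α).body
  inHub_mem : ∀ α, (G α).inHub ∈ (G α).body
  outHub_mem : ∀ α, (G α).outHub ∈ (G α).body
  disjoint_body : ∀ α β, α ≠ β → Disjoint (G α).body (G β).body
  disjoint_path : ∀ α β, α ≠ β → Disjoint (G α).path (G β).path
  disjoint_body_path : ∀ α β, Disjoint (G α).body (G β).path
  reachWithin : ∀ α, ∀ a ∈ (G α).inDom, ∀ b ∈ (G α).outDom,
    ReachWithin E ((G α).verts : Set V) a b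
  adj_inHub : ∀ α β, ∀ p ∈ (G α).path, E p (G β).inHub
  outHub_adj : ∀ α β, ∀ p ∈ (G α).path, E (G β).outHub p

lemma GadgetFamily.reverse {G : ι → Gadget V} (h : GadgetFamily E G) :
    GadgetFamily (flip E) fun α => (G α).reverse where
  inDom_subset := h.outDom_subset
  outDom_subset := h.inDom_subset
  inHub_mem := h.outHub_mem
  outHub_mem := h.inHub_mem
  disjoint_body := h.disjoint_body
  disjoint_path := h.disjoint_path
  disjoint_body_path := h.disjoint_body_path
  reachWithin α b hb a ha := (h.reachWithin α a ha b hb).reverse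
  adj_inHub := h.outHub_adj
  outHub_adj := h.adj_inHub

lemma GadgetFamily.comp {G : ι → Gadget V} (h : GadgetFamily E G) (f : κ ↪ ι) :
    GadgetFamily E (G ∘ f) where
  inDom_subset α := h.inDom_subset (f α)
  outDom_subset α := h.outDom_subset (f α)
  inHub_mem α := h.inHub_mem (f α)
  outHub_mem α := h.outHub_mem (f α)
  disjoint_body _ _ hne := h.disjoint_body _ _ (f.injective.ne hne)
  disjoint_path _ _ hne := h.disjoint_path _ _ (f.injective.ne hne)
  disjoint_body_path α β := h.disjoint_body_path (f α) (f β)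
  reachWithin α := h.reachWithin (f α)
  adj_inHub α β := h.adj_inHub (f α) (f β)
  outHub_adj α β := h.outHub_adj (f α) (f β)

lemma GadgetFamily.injective_inHub {G : ι → Gadget V} (h : GadgetFamily E G) :
    Function.Injective fun α => (G α).inHub := fun α β hαβ => by
  by_contra hne
  exact disjoint_left.1 (h.disjoint_body α β hne) (h.inHub_mem α)
    ((show (G α).inHub = (G β).inHub from hαβ) ▸ h.inHub_mem β)

lemma GadgetFamily.disjoint_verts {G : ι → Gadget V} (h : GadgetFamily E G) {α β : ι}
    (hne : α ≠ β) : Disjoint (G α).verts (G β).verts :=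
  disjoint_union_left.2
    ⟨disjoint_union_right.2 ⟨h.disjoint_body α β hne, h.disjoint_body_path α β⟩,
      disjoint_union_right.2 ⟨(h.disjoint_body_path β α).symm, h.disjoint_path α β hne⟩⟩

variable [Fintype V]

/-- Gadgets whose sets `inDom` and `outDom` miss only a `2 ^ (-s)` fraction of `dP` and `dM`
vertices, where the latter bound from below the out-degrees and in-degrees outside the exceptional
set `Exc`. -/
structure DominatingFamily (E : V → V → Prop) (s : ℕ) (Exc : Finset V) (G : ι → Gadget V)
    (dP dM : ℕ) : Prop extends GadgetFamily E G where
  card_body_le : ∀ α, #(G α).body ≤ 2 * s + 8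
  body_subset : ∀ α, (G α).body ⊆ Exc
  disjoint_path_exc : ∀ α, Disjoint (G α).path Exc
  le_outDegree : ∀ v ∉ Exc, dP ≤ #(outNbrs E univ v)
  le_inDegree : ∀ v ∉ Exc, dM ≤ #(outNbrs (flip E) univ v)
  card_missOut_le : ∀ α, ∀ D ⊆ Excᶜ, (∀ v ∈ D, ∀ a ∈ (G α).inDom, ¬ E v a) → #D * 2 ^ s ≤ dP
  card_missIn_le : ∀ α, ∀ D ⊆ Excᶜ, (∀ v ∈ D, ∀ b ∈ (G α).outDom, ¬ E b v) → #D * 2 ^ s ≤ dM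
  adj_inHub_or : ∀ v ∉ Exc, (∀ β, E v (G β).inHub) ∨ ∀ β, #(outNbrs E (G β).path v) ≤ 3
  outHub_adj_or : ∀ v ∉ Exc, (∀ β, E (G β).outHub v) ∨ ∀ β, #(outNbrs (flip E) (G β).path v) ≤ 3

namespace DominatingFamily

variable {s dP dM : ℕ} {Exc : Finset V} {G : ι → Gadget V}

lemma reverse (h : DominatingFamily E s Exc G dP dM) :
    DominatingFamily (flip E) s Exc (fun α => (G α).reverse) dM dP where
  toGadgetFamily := h.toGadgetFamily.reverse
  card_body_le := h.card_body_le
  body_subset := h.body_subset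
  disjoint_path_exc := h.disjoint_path_exc
  le_outDegree := h.le_inDegree
  le_inDegree := h.le_outDegree
  card_missOut_le := h.card_missIn_le
  card_missIn_le := h.card_missOut_le
  adj_inHub_or := h.outHub_adj_or
  outHub_adj_or := h.adj_inHub_or

lemma comp (h : DominatingFamily E s Exc G dP dM) (f : κ ↪ ι) :
    DominatingFamily E s Exc (G ∘ f) dP dM where
  toGadgetFamily := h.toGadgetFamily.comp f
  card_body_le α := h.card_body_le (f α)
  body_subset α := h.body_subset (f α)
  disjoint_path_exc α := h.disjoint_path_exc (f α)
  le_outDegree := h.le_outDegree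
  le_inDegree := h.le_inDegree
  card_missOut_le α := h.card_missOut_le (f α)
  card_missIn_le α := h.card_missIn_le (f α)
  adj_inHub_or v hv := (h.adj_inHub_or v hv).imp (fun h β => h (f β)) fun h β => h (f β)
  outHub_adj_or v hv := (h.outHub_adj_or v hv).imp (fun h β => h (f β)) fun h β => h (f β)

end DominatingFamily

end Gadgets

section LinkedSystems

variable {V ι J : Type*} [Fintype V] [DecidableEq V] [Fintype ι] [Fintype J] {E : V → V → Prop}
  {s dP dM : ℕ} {D : Finset V} {A B : J → Finset V} {a b : J → V} {σ τ ζ ξ : ι → J}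
  {L : ι → Link V}

/-- A dominating system whose exits are joined by disjoint links, the link `L α` going from
`a (σ α)` to `b (τ α)`. The exits `a (ζ α)` and `b (ξ α)` are not used by any link. -/
structure LinkedSystem (E : V → V → Prop) (s : ℕ) (D : Finset V) (A B : J → Finset V)
    (a b : J → V) (dP dM : ℕ) (σ τ ζ ξ : ι → J) (L : ι → Link V) : Prop
    extends DominatingSystem E s D A B a b dP dM where
  linkSystem : LinkSystem E (univ \ (D \ (univ.image a ∪ univ.image b))) (univ.image a)
    (univ.image b) univ L
  src_eq : ∀ α, (L α).src = a (σ α)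
  tgt_eq : ∀ α, (L α).tgt = b (τ α)
  injective_left : ζ.Injective
  injective_right : ξ.Injective
  ne_left : ∀ α β, ζ α ≠ σ β
  ne_right : ∀ α β, ξ α ≠ τ β

/-- The gadget formed by the dominating sets `A (σ α)` and `B (τ α)`, the link between them, and the
unused exits `a (ζ α)` and `b (ξ α)` as hubs. -/
def linkGadget (A B : J → Finset V) (a b : J → V) (σ τ ζ ξ : ι → J) (L : ι → Link V) (α : ι) :
    Gadget V where
  inDom := A (σ α)
  outDom := B (τ α)
  body := A (σ α) ∪ B (τ α) ∪ {a (ζ α), b (ξ α)} ∪ (L α).ends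
  path := (L α).verts \ (L α).ends
  inHub := a (ζ α)
  outHub := b (ξ α)

omit [Fintype J] in
lemma DominatingSystem.injective (h : DominatingSystem E s D A B a b dP dM) : a.Injective := by
  intro i j hij
  by_contra hne
  exact disjoint_left.1 (h.disjoint_inDom i j hne) (h.inDom i).exit_mem
    (hij ▸ (h.inDom j).exit_mem)

namespace LinkedSystem

lemma reverse (h : LinkedSystem E s D A B a b dP dM σ τ ζ ξ L) :
    LinkedSystem (flip E) s D B A b a dM dP τ σ ξ ζ fun α => (L α).reverse where
  toDominatingSystem := h.toDominatingSystem.reverse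
  linkSystem := union_comm (univ.image a) _ ▸ h.linkSystem.reverse
  src_eq := h.tgt_eq
  tgt_eq := h.src_eq
  injective_left := h.injective_right
  injective_right := h.injective_left
  ne_left := h.ne_right
  ne_right := h.ne_left

lemma joins (h : LinkedSystem E s D A B a b dP dM σ τ ζ ξ L) (α : ι) :
    (L α).Joins E (univ.image a) (univ.image b) :=
  h.linkSystem.joins α (mem_univ α)

lemma disjoint_verts (h : LinkedSystem E s D A B a b dP dM σ τ ζ ξ L) {α β : ι} (hne : α ≠ β) :
    Disjoint (L α).verts (L β).verts :=
  h.linkSystem.disjoint α (mem_univ α) β (mem_univ β) hne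

lemma exit_mem_ends (h : LinkedSystem E s D A B a b dP dM σ τ ζ ξ L) (α : ι) :
    a (σ α) ∈ (L α).ends :=
  h.src_eq α ▸ (h.joins α).src_mem_ends

lemma injective_src (h : LinkedSystem E s D A B a b dP dM σ τ ζ ξ L) : σ.Injective := by
  intro α β hαβ
  by_contra hne
  exact disjoint_left.1 (h.disjoint_verts hne) ((h.joins α).ends_subset (h.exit_mem_ends α))
    ((h.joins β).ends_subset (hαβ ▸ h.exit_mem_ends β))

lemma inHub_notMem_verts (h : LinkedSystem E s D A B a b dP dM σ τ ζ ξ L) (α β : ι) :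
    a (ζ α) ∉ (L β).verts := fun hv =>
  h.ne_left α β (h.injective
    (((h.joins β).eq_src _ hv (mem_image_of_mem a (mem_univ _))).trans (h.src_eq β)))

lemma eq_exit_or_eq_exit (h : LinkedSystem E s D A B a b dP dM σ τ ζ ξ L) {α : ι} {v : V}
    (hv : v ∈ (L α).verts) (hvD : v ∈ D) : v = a (σ α) ∨ v = b (τ α) := by
  have hvXY : v ∈ univ.image a ∪ univ.image b := by
    by_contra hvXY
    exact (mem_sdiff.1 (h.linkSystem.subset α (mem_univ α) hv)).2 (mem_sdiff.2 ⟨hvD, hvXY⟩)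
  rcases mem_union.1 hvXY with hvX | hvY
  · exact .inl (((h.joins α).eq_src v hv hvX).trans (h.src_eq α))
  · exact .inr (((h.joins α).eq_tgt v hv hvY).trans (h.tgt_eq α))

lemma notMem_of_mem_verts_sdiff_ends (h : LinkedSystem E s D A B a b dP dM σ τ ζ ξ L) {α : ι}
    {v : V} (hv : v ∈ (L α).verts \ (L α).ends) : v ∉ D := fun hvD => by
  obtain ⟨hv, hve⟩ := mem_sdiff.1 hv
  rcases h.eq_exit_or_eq_exit hv hvD with rfl | rfl
  · exact hve (h.exit_mem_ends α)
  · exact hve (h.reverse.exit_mem_ends α)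

lemma disjoint_inDom_union (h : LinkedSystem E s D A B a b dP dM σ τ ζ ξ L) {α β : ι}
    (hne : α ≠ β) : Disjoint (A (σ α) ∪ A (ζ α)) (A (σ β) ∪ A (ζ β)) := by
  simp only [disjoint_union_left, disjoint_union_right]
  exact ⟨⟨h.disjoint_inDom _ _ (h.injective_src.ne hne), h.disjoint_inDom _ _ (h.ne_left α β)⟩,
    h.disjoint_inDom _ _ (h.ne_left β α).symm, h.disjoint_inDom _ _ (h.injective_left.ne hne)⟩

lemma body_subset (h : LinkedSystem E s D A B a b dP dM σ τ ζ ξ L) (α : ι) :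
    (linkGadget A B a b σ τ ζ ξ L α).body ⊆
      ((A (σ α) ∪ A (ζ α)) ∪ (B (τ α) ∪ B (ξ α))) ∪ (L α).ends \ D := by
  intro v hv
  simp only [linkGadget, mem_union, mem_insert, mem_singleton, mem_sdiff] at hv ⊢
  rcases hv with ((hv | hv) | (rfl | rfl)) | hv
  · tauto
  · tauto
  · exact .inl (.inl (.inr (h.inDom _).exit_mem))
  · exact .inl (.inr (.inr (h.outDom _).exit_mem))
  · by_cases hvD : v ∈ D
    · rcases h.eq_exit_or_eq_exit ((h.joins α).ends_subset hv) hvD with rfl | rfl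
      · exact .inl (.inl (.inl (h.inDom _).exit_mem))
      · exact .inl (.inr (.inl (h.outDom _).exit_mem))
    · exact .inr ⟨hv, hvD⟩

lemma union_subset_dominated (h : LinkedSystem E s D A B a b dP dM σ τ ζ ξ L) (α : ι) :
    (A (σ α) ∪ A (ζ α)) ∪ (B (τ α) ∪ B (ξ α)) ⊆ D :=
  union_subset (union_subset (h.inDom_subset _) (h.inDom_subset _))
    (union_subset (h.outDom_subset _) (h.outDom_subset _))

lemma disjoint_body (h : LinkedSystem E s D A B a b dP dM σ τ ζ ξ L) {α β : ι} (hne : α ≠ β) :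
    Disjoint (linkGadget A B a b σ τ ζ ξ L α).body (linkGadget A B a b σ τ ζ ξ L β).body := by
  have hAB (α β : ι) : Disjoint (A (σ α) ∪ A (ζ α)) (B (τ β) ∪ B (ξ β)) := by
    simp only [disjoint_union_left, disjoint_union_right]
    exact ⟨⟨h.disjoint_inDom_outDom _ _, h.disjoint_inDom_outDom _ _⟩,
      h.disjoint_inDom_outDom _ _, h.disjoint_inDom_outDom _ _⟩
  refine Disjoint.mono (h.body_subset α) (h.body_subset β) ?_
  refine disjoint_union_left.2
    ⟨disjoint_union_right.2 ⟨?_, ?_⟩, disjoint_union_right.2 ⟨?_, ?_⟩⟩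
  · exact disjoint_union_left.2
      ⟨disjoint_union_right.2 ⟨h.disjoint_inDom_union hne, hAB α β⟩,
        disjoint_union_right.2 ⟨(hAB β α).symm, h.reverse.disjoint_inDom_union hne⟩⟩
  · exact disjoint_sdiff.mono_left (h.union_subset_dominated α)
  · exact sdiff_disjoint.mono_right (h.union_subset_dominated β)
  · exact (h.disjoint_verts hne).mono (sdiff_subset.trans (h.joins α).ends_subset)
      (sdiff_subset.trans (h.joins β).ends_subset)

lemma disjoint_ends (h : LinkedSystem E s D A B a b dP dM σ τ ζ ξ L) (α β : ι) :
    Disjoint (L α).ends ((L β).verts \ (L β).ends) := by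
  by_cases hαβ : α = β
  · exact hαβ ▸ disjoint_sdiff
  · exact (h.disjoint_verts hαβ).mono (h.joins α).ends_subset sdiff_subset

lemma disjoint_body_path (h : LinkedSystem E s D A B a b dP dM σ τ ζ ξ L) (α β : ι) :
    Disjoint (linkGadget A B a b σ τ ζ ξ L α).body (linkGadget A B a b σ τ ζ ξ L β).path := by
  refine Disjoint.mono_left (h.body_subset α) (disjoint_union_left.2 ⟨?_, ?_⟩)
  · exact disjoint_right.2 fun v hv hvD =>
      h.notMem_of_mem_verts_sdiff_ends hv (h.union_subset_dominated α hvD)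
  · exact (h.disjoint_ends α β).mono_left sdiff_subset

lemma reachWithin (h : LinkedSystem E s D A B a b dP dM σ τ ζ ξ L) (α : ι) {x y : V}
    (hx : x ∈ A (σ α)) (hy : y ∈ B (τ α)) :
    ReachWithin E ((linkGadget A B a b σ τ ζ ξ L α).verts : Set V) x y := by
  set W := (linkGadget A B a b σ τ ζ ξ L α).verts
  have hAW : A (σ α) ⊆ W := fun v hv => by
    simp only [W, Gadget.verts, linkGadget, mem_union, hv, true_or]
  have hBW : B (τ α) ⊆ W := fun v hv => by
    simp only [W, Gadget.verts, linkGadget, mem_union, hv, true_or, or_true]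
  have hLW : (L α).verts ⊆ W := fun v hv => by
    simp only [W, Gadget.verts, linkGadget, mem_union, mem_sdiff]
    tauto
  have hlink : ReachWithin E (W : Set V) (a (σ α)) (b (τ α)) :=
    h.src_eq α ▸ h.tgt_eq α ▸ (h.joins α).reachWithin.mono (coe_subset.2 hLW)
  refine (ReachWithin.trans ?_ hlink).trans ?_
  · rcases (h.inDom (σ α)).adj_exit x hx with rfl | hxa
    · exact .refl _ _ _
    · exact .single (hAW hx) (hAW (h.inDom _).exit_mem) hxa
  · rcases (h.outDom (τ α)).adj_exit y hy with rfl | hby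
    · exact .refl _ _ _
    · exact .single (hBW (h.outDom _).exit_mem) (hBW hy) hby

lemma exit_mem_sdiff (h : LinkedSystem E s D A B a b dP dM σ τ ζ ξ L) (α : ι) :
    a (ζ α) ∈ univ.image a \ univ.biUnion fun β => (L β).verts := by
  refine mem_sdiff.2 ⟨mem_image_of_mem a (mem_univ _), fun hU => ?_⟩
  obtain ⟨β, -, hβ⟩ := mem_biUnion.1 hU
  exact h.inHub_notMem_verts α β hβ

lemma adj_exit (h : LinkedSystem E s D A B a b dP dM σ τ ζ ξ L) (α β : ι) {p : V}
    (hp : p ∈ (L α).verts \ (L α).ends) : E p (a (ζ β)) :=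
  (h.linkSystem.isGeodesic α (mem_univ α)).adj_source p (mem_sdiff.1 hp).1 (mem_sdiff.1 hp).2 _
    (h.exit_mem_sdiff β)

lemma adj_exit_or (h : LinkedSystem E s D A B a b dP dM σ τ ζ ξ L) (hE : IsTournament E) {v : V}
    (hvD : v ∉ D) (hv : ∀ α, v ∉ (L α).ends) :
    (∀ β, E v (a (ζ β))) ∨ ∀ β, #(outNbrs E ((L β).verts \ (L β).ends) v) ≤ 3 := by
  by_cases hvU : v ∈ univ.biUnion fun β => (L β).verts
  · obtain ⟨α, -, hα⟩ := mem_biUnion.1 hvU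
    exact .inl fun β => h.adj_exit α β (mem_sdiff.2 ⟨hα, hv α⟩)
  refine or_iff_not_imp_left.2 fun hadj β => ?_
  obtain ⟨γ, hγ⟩ := not_forall.1 hadj
  have hne : v ≠ a (ζ γ) := (ne_of_mem_of_not_mem (h.inDom_subset _ (h.inDom _).exit_mem) hvD).symm
  refine (card_le_card (outNbrs_mono E sdiff_subset v)).trans
    ((h.linkSystem.isGeodesic β (mem_univ β)).card_out_le v ?_ _ (h.exit_mem_sdiff γ)
      (hE.adj_of_not_adj hne hγ))
  exact mem_sdiff.2 ⟨mem_sdiff.2 ⟨mem_univ v, fun hv => hvD (mem_sdiff.1 hv).1⟩, hvU⟩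

lemma gadgetFamily (h : LinkedSystem E s D A B a b dP dM σ τ ζ ξ L) :
    GadgetFamily E (linkGadget A B a b σ τ ζ ξ L) where
  inDom_subset _ := subset_union_left.trans (subset_union_left.trans subset_union_left)
  outDom_subset _ := subset_union_right.trans (subset_union_left.trans subset_union_left)
  inHub_mem _ := mem_union_left _ (mem_union_right _ (mem_insert_self _ _))
  outHub_mem _ := mem_union_left _ (mem_union_right _ (mem_insert_of_mem (mem_singleton_self _)))
  disjoint_body _ _ hne := h.disjoint_body hne
  disjoint_path _ _ hne := (h.disjoint_verts hne).mono sdiff_subset sdiff_subset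
  disjoint_body_path := h.disjoint_body_path
  reachWithin α _ hx _ hy := h.reachWithin α hx hy
  adj_inHub α β _ hp := h.adj_exit α β hp
  outHub_adj α β _ hp := h.reverse.adj_exit α β hp

lemma card_body_le (h : LinkedSystem E s D A B a b dP dM σ τ ζ ξ L) (α : ι) :
    #(linkGadget A B a b σ τ ζ ξ L α).body ≤ 2 * s + 8 := by
  have h1 := card_union_le (A (σ α)) (B (τ α))
  have h2 := card_union_le (A (σ α) ∪ B (τ α)) {a (ζ α), b (ξ α)}
  have h3 := card_union_le (A (σ α) ∪ B (τ α) ∪ {a (ζ α), b (ξ α)}) (L α).ends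
  have h4 := card_le_two (a := a (ζ α)) (b := b (ξ α))
  have hA := (h.inDom (σ α)).card_le
  have hB := (h.outDom (τ α)).card_le
  have hL := (h.joins α).card_ends
  change #(A (σ α) ∪ B (τ α) ∪ {a (ζ α), b (ξ α)} ∪ (L α).ends) ≤ _
  omega

lemma dominatingFamily (h : LinkedSystem E s D A B a b dP dM σ τ ζ ξ L) (hE : IsTournament E) :
    DominatingFamily E s (D ∪ univ.biUnion fun α => (L α).ends) (linkGadget A B a b σ τ ζ ξ L)
      dP dM := by
  set Exc := D ∪ univ.biUnion fun α => (L α).ends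
  have hends (α : ι) : (L α).ends ⊆ Exc :=
    (subset_biUnion_of_mem (fun α => (L α).ends) (mem_univ α)).trans subset_union_right
  have hD {v : V} (hv : v ∉ Exc) : v ∉ D := fun hvD => hv (mem_union_left _ hvD)
  have hmiss {F : Finset V} (hF : F ⊆ Excᶜ) {C : Finset V} (hC : C ⊆ D) : F ⊆ Dᶜ \ C :=
    fun v hv => mem_sdiff.2 ⟨mem_compl.2 (hD (mem_compl.1 (hF hv))),
      fun hvC => hD (mem_compl.1 (hF hv)) (hC hvC)⟩
  refine ⟨h.gadgetFamily, h.card_body_le, fun α => ?_, fun α => ?_,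
    fun v hv => h.le_outDegree v (hD hv), fun v hv => h.le_inDegree v (hD hv),
    fun α F hF => (h.inDom _).card_miss_le F (hmiss hF (h.inDom_subset _)),
    fun α F hF => (h.outDom _).card_miss_le F (hmiss hF (h.outDom_subset _)),
    fun v hv => h.adj_exit_or hE (hD hv) fun α hvα => hv (hends α hvα),
    fun v hv => h.reverse.adj_exit_or hE.reverse (hD hv) fun α hvα => hv (hends α hvα)⟩
  · exact (h.body_subset α).trans (union_subset_union (h.union_subset_dominated α)
      (sdiff_subset.trans (subset_biUnion_of_mem (fun α => (L α).ends) (mem_univ α))))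
  · refine disjoint_union_right.2 ⟨?_, (disjoint_biUnion_right _ _ _).2 fun β _ => ?_⟩
    · exact disjoint_left.2 fun v hv => h.notMem_of_mem_verts_sdiff_ends hv
    · exact (h.disjoint_ends β α).symm

end LinkedSystem

lemma exists_injective_avoiding {ι J : Type*} [Fintype ι] [Fintype J] (σ : ι → J)
    (h : 2 * Fintype.card ι ≤ Fintype.card J) :
    ∃ ζ : ι → J, ζ.Injective ∧ ∀ α β, ζ α ≠ σ β := by
  classical
  have hcard : Fintype.card ι ≤ Fintype.card ((univ.image σ)ᶜ : Finset J) := by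
    have := card_image_le (s := univ) (f := σ)
    rw [card_univ] at this
    rw [Fintype.card_coe, card_compl]
    omega
  obtain ⟨f⟩ := Function.Embedding.nonempty_of_card_le hcard
  exact ⟨fun α => f α, Subtype.coe_injective.comp f.injective, fun α β hαβ =>
    mem_compl.1 (f α).2 (mem_image.2 ⟨β, mem_univ β, hαβ.symm⟩)⟩

lemma DominatingSystem.exists_linkedSystem (h : DominatingSystem E s D A B a b dP dM)
    (hE : IsTournament E) {K : ℕ} (hK : StronglyKConnectedOn E K univ)
    (hD : #D + 4 * Fintype.card ι ≤ K) (hJ : 2 * Fintype.card ι ≤ Fintype.card J) :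
    ∃ (σ τ ζ ξ : ι → J) (L : ι → Link V), LinkedSystem E s D A B a b dP dM σ τ ζ ξ L := by
  have hS (Z : Finset V) (hZ : Z ⊆ univ.image a ∪ univ.image b) :
      Z ⊆ univ \ (D \ (univ.image a ∪ univ.image b)) := fun v hv =>
    mem_sdiff.2 ⟨mem_univ v, fun hv' => (mem_sdiff.1 hv').2 (hZ hv)⟩
  have hconn : StronglyKConnectedOn E (4 * Fintype.card ι)
      (univ \ (D \ (univ.image a ∪ univ.image b))) :=
    hK.sdiff ((Nat.add_le_add_right (card_le_card sdiff_subset) _).trans hD)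
  have hcard {c : J → V} (hc : c.Injective) : #(univ : Finset ι) ≤ #(univ.image c) := by
    rw [card_image_of_injective _ hc, card_univ, card_univ]
    omega
  obtain ⟨L, hL, -⟩ := exists_linkSystem hE hconn (hS _ subset_union_left)
    (hS _ subset_union_right) univ (by rw [card_univ]) (hcard h.injective)
    (hcard h.reverse.injective)
  choose σ _ hσ using fun α => mem_image.1 (hL.joins α (mem_univ α)).src_mem
  choose τ _ hτ using fun α => mem_image.1 (hL.joins α (mem_univ α)).tgt_mem
  obtain ⟨ζ, hζ, hζσ⟩ := exists_injective_avoiding σ hJ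
  obtain ⟨ξ, hξ, hξτ⟩ := exists_injective_avoiding τ hJ
  exact ⟨σ, τ, ζ, ξ, L, h, hL, fun α => (hσ α).symm, fun α => (hτ α).symm, hζ, hξ, hζσ, hξτ⟩

lemma exists_dominatingFamily (hE : IsTournament E) {K N s : ℕ} (hN : 1 ≤ N)
    (h : StronglyKConnectedOn E K univ) (hK : 4 * N * (s + 2) ≤ K) :
    ∃ Exc G dP dM, DominatingFamily (ι := Fin N) E s Exc G dP dM ∧
      #Exc ≤ 4 * N * (s + 2) ∧ K ≤ dP ∧ K ≤ dM := by
  have : Nonempty (Fin (2 * N)) := ⟨⟨0, by omega⟩⟩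
  obtain ⟨D, A, B, a, b, dP, dM, hsys, hD, hP, hM⟩ :=
    exists_dominatingSystem (J := Fin (2 * N)) hE h (by rw [Fintype.card_fin]; nlinarith) s
  rw [Fintype.card_fin] at hD
  obtain ⟨σ, τ, ζ, ξ, L, hL⟩ := hsys.exists_linkedSystem (ι := Fin N) hE h
    (by rw [Fintype.card_fin]; linarith) (by rw [Fintype.card_fin, Fintype.card_fin])
  refine ⟨_, _, dP, dM, hL.dominatingFamily hE, ?_, hP, hM⟩
  have hends := card_biUnion_le_card_mul univ (fun α => (L α).ends) 4
    fun α _ => (hL.joins α).card_ends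
  have hunion := card_union_le D (univ.biUnion fun α => (L α).ends)
  rw [card_fin] at hends
  linarith

end LinkedSystems

section Selection

variable {ι : Type*} {f : ι → ι → ℝ}

lemma exists_erase_light [DecidableEq ι] (h0 : ∀ α, f α α = 0) {S : Finset ι} (hS : S.Nonempty) :
    ∃ x ∈ S, (∑ α ∈ S.erase x, ∑ β ∈ S.erase x, f α β) * #S ≤
      (∑ α ∈ S, ∑ β ∈ S, f α β) * (#S - 2) := by
  have hdec : ∀ x ∈ S, ∑ α ∈ S.erase x, ∑ β ∈ S.erase x, f α β =
      ∑ α ∈ S, ∑ β ∈ S, f α β - ∑ β ∈ S, f x β - ∑ α ∈ S, f α x := by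
    intro x hx
    simp only [sum_erase_eq_sub hx, sum_sub_distrib, h0]
    ring
  refine exists_le_of_sum_le hS (le_of_eq ?_)
  rw [← sum_mul, sum_congr rfl hdec, sum_sub_distrib, sum_sub_distrib,
    sum_comm (f := fun x α => f α x)]
  simp only [sum_const, nsmul_eq_mul]
  ring

lemma exists_light_subset (h0 : ∀ α, f α α = 0) (U : Finset ι) {m : ℕ} (hm : 2 ≤ m)
    (hmU : m ≤ #U) :
    ∃ S ⊆ U, #S = m ∧ (∑ α ∈ S, ∑ β ∈ S, f α β) * (#U * (#U - 1)) ≤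
      (∑ α ∈ U, ∑ β ∈ U, f α β) * (m * (m - 1)) := by
  classical
  obtain ⟨d, hd⟩ := Nat.exists_eq_add_of_le hmU
  induction d generalizing m with
  | zero => exact ⟨U, Subset.refl _, by omega, by rw [hd, add_zero]⟩
  | succ d ih =>
    obtain ⟨S, hSU, hSc, hS⟩ := ih (m := m + 1) (by omega) (by omega) (by omega)
    obtain ⟨x, hx, hxS⟩ := exists_erase_light h0 (S := S) (by rw [← card_pos]; omega)
    refine ⟨S.erase x, (erase_subset _ _).trans hSU, by rw [card_erase_of_mem hx]; omega, ?_⟩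
    rw [hSc] at hxS
    push_cast at hS hxS
    have hm' : (2 : ℝ) ≤ m := by exact_mod_cast hm
    have hU : (m : ℝ) ≤ #U := by exact_mod_cast hmU
    have hU0 : (0 : ℝ) ≤ #U * (#U - 1) := by nlinarith
    have h1 := mul_le_mul_of_nonneg_right hxS hU0
    have h2 := mul_le_mul_of_nonneg_right hS (show (0 : ℝ) ≤ m + 1 - 2 by linarith)
    refine le_of_mul_le_mul_right ?_ (show (0 : ℝ) < m + 1 by linarith)
    nlinarith

lemma exists_subset_forall_sum_le (hf : ∀ α β, 0 ≤ f α β) {S : Finset ι} {r : ℕ} {θ : ℝ}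
    (hθ : 0 < θ) (hcard : 2 * r ≤ #S) (hS : ∑ α ∈ S, ∑ β ∈ S, f α β ≤ r * θ) :
    ∃ S' ⊆ S, #S' = r ∧ ∀ α ∈ S', ∑ β ∈ S', f α β ≤ θ := by
  classical
  set B : Finset ι := {α ∈ S | θ < ∑ β ∈ S, f α β}
  have hBr : #B ≤ r := by
    have hmarkov : #B * θ ≤ ∑ α ∈ B, ∑ β ∈ S, f α β := by
      rw [← nsmul_eq_mul]
      exact card_nsmul_le_sum B _ θ fun α hα => (mem_filter.1 hα).2.le
    have hmono : ∑ α ∈ B, ∑ β ∈ S, f α β ≤ ∑ α ∈ S, ∑ β ∈ S, f α β :=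
      sum_le_sum_of_subset_of_nonneg (filter_subset _ _) fun α _ _ => sum_nonneg fun β _ => hf α β
    exact_mod_cast le_of_mul_le_mul_right (hmarkov.trans (hmono.trans hS)) hθ
  have hsdiff : r ≤ #(S \ B) := by
    have := card_sdiff_add_card_eq_card (show B ⊆ S from filter_subset _ _)
    omega
  obtain ⟨S', hS', hcard'⟩ := exists_subset_card_eq hsdiff
  refine ⟨S', hS'.trans sdiff_subset, hcard', fun α hα => ?_⟩
  obtain ⟨hαS, hαB⟩ := mem_sdiff.1 (hS' hα)
  refine (sum_le_sum_of_subset_of_nonneg (hS'.trans sdiff_subset) fun β _ _ => hf α β).trans ?_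
  exact not_lt.1 fun hlt => hαB (mem_filter.2 ⟨hαS, hlt⟩)

lemma exists_sparse_subset (h0 : ∀ α, f α α = 0) (hf : ∀ α β, 0 ≤ f α β) {U : Finset ι}
    {ρ θ : ℝ} (hθ : 0 < θ) (hρ : ∀ α ∈ U, ∑ β ∈ U, f α β ≤ ρ) {r : ℕ} (hr : 1 ≤ r)
    (hrU : 2 * r ≤ #U) (hU : 4 * r * ρ ≤ θ * (#U - 1)) :
    ∃ S ⊆ U, #S = r ∧ ∀ α ∈ S, ∑ β ∈ S, f α β ≤ θ := by
  obtain ⟨S, hSU, hcard, hS⟩ := exists_light_subset h0 U (m := 2 * r) (by omega) hrU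
  have hr' : (1 : ℝ) ≤ r := by exact_mod_cast hr
  have hrU' : (2 : ℝ) * r ≤ #U := by exact_mod_cast hrU
  have htotal : ∑ α ∈ U, ∑ β ∈ U, f α β ≤ #U * ρ := by
    rw [← nsmul_eq_mul]
    exact sum_le_card_nsmul U _ ρ hρ
  have hρ0 : 0 ≤ ρ := by
    obtain ⟨α, hα⟩ : U.Nonempty := by rw [← card_pos]; omega
    exact (sum_nonneg fun β _ => hf α β).trans (hρ α hα)
  have hlight : ∑ α ∈ S, ∑ β ∈ S, f α β ≤ r * θ := by
    push_cast at hS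
    refine le_of_mul_le_mul_right ?_ (show (0 : ℝ) < #U * (#U - 1) by nlinarith)
    calc (∑ α ∈ S, ∑ β ∈ S, f α β) * (#U * (#U - 1))
        ≤ (∑ α ∈ U, ∑ β ∈ U, f α β) * (2 * r * (2 * r - 1)) := hS
      _ ≤ #U * ρ * (2 * r * (2 * r - 1)) := by gcongr; nlinarith
      _ ≤ #U * ρ * (2 * r * (2 * r)) := by gcongr; linarith
      _ = #U * (r * (4 * r * ρ)) := by ring
      _ ≤ #U * (r * (θ * (#U - 1))) := by gcongr
      _ = r * θ * (#U * (#U - 1)) := by ring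
  obtain ⟨S', hS', hcard', hsum⟩ := exists_subset_forall_sum_le hf hθ hcard.ge hlight
  exact ⟨S', hS'.trans hSU, hcard', hsum⟩

end Selection

section RandomChoice

variable {V κ : Type*} [DecidableEq κ]

/-- The proportion of `Ω` that lies in `J`; it is `0` for `Ω = ∅`. -/
noncomputable def share (Ω J : Finset κ) : ℝ := #(Ω ∩ J) / #Ω

lemma share_nonneg (Ω J : Finset κ) : 0 ≤ share Ω J := by
  unfold share
  positivity

lemma card_filter_mem_le_of_forall_le {N : Finset V} {J : Finset κ} {g : V → κ} {k t : ℕ}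
    (hJ : #J ≤ t) (h : ∀ i ∈ J, #{v ∈ N | g v = i} ≤ k) : #{v ∈ N | g v ∈ J} ≤ k * t := by
  have hmaps : ∀ v ∈ ({v ∈ N | g v ∈ J} : Finset V), g v ∈ J := fun v hv => (mem_filter.1 hv).2
  calc #{v ∈ N | g v ∈ J} ≤ k * #J := card_le_mul_card_image_of_maps_to hmaps k fun i hi =>
        (card_le_card (filter_subset_filter _ (filter_subset _ _))).trans (h i hi)
    _ ≤ k * t := Nat.mul_le_mul_left k hJ

lemma sum_ite_half_le {Ω : Finset κ} (hΩ : Ω.Nonempty) (J : Finset κ) :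
    ∑ j ∈ Ω, (if j ∈ J then (1 / 2 : ℝ) else 1) ≤
      #Ω * Real.exp (-(share Ω J / 2)) := by
  have hpos : (0 : ℝ) < #Ω := by exact_mod_cast hΩ.card_pos
  have hite (j : κ) : (if j ∈ J then (1 / 2 : ℝ) else 1) = 1 - if j ∈ J then 1 / 2 else 0 := by
    split_ifs <;> norm_num
  have hsum : ∑ j ∈ Ω, (if j ∈ J then (1 / 2 : ℝ) else 1) =
      #Ω * (1 - share Ω J / 2) := by
    simp only [share, hite, sum_sub_distrib, ← sum_filter, filter_mem_eq_inter, sum_const,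
      nsmul_eq_mul]
    field_simp
  rw [hsum]
  exact mul_le_mul_of_nonneg_left (Real.one_sub_le_exp_neg _) hpos.le

lemma sum_half_pow_card_le [Fintype V] [DecidableEq V] {Ω : V → Finset κ}
    (hΩ : ∀ v, (Ω v).Nonempty) (N : Finset V) (J : Finset κ) :
    ∑ f ∈ Fintype.piFinset Ω, (1 / 2 : ℝ) ^ #{v ∈ N | f v ∈ J} ≤
      #(Fintype.piFinset Ω) * Real.exp (-((∑ v ∈ N, share (Ω v) J) / 2)) := by
  set g : V → κ → ℝ := fun v j => if v ∈ N then (if j ∈ J then 1 / 2 else 1) else 1 with hg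
  have hprod (f : V → κ) : (1 / 2 : ℝ) ^ #{v ∈ N | f v ∈ J} = ∏ v, g v (f v) := by
    simp only [hg, prod_ite_mem, univ_inter]
    rw [prod_ite, prod_const_one, mul_one, prod_const]
  have hfactor (v : V) : ∑ j ∈ Ω v, g v j ≤
      #(Ω v) * Real.exp (-((if v ∈ N then share (Ω v) J else 0) / 2)) := by
    by_cases hv : v ∈ N
    · simpa only [hg, hv, if_true] using sum_ite_half_le (hΩ v) J
    · simp [hg, hv]
  calc ∑ f ∈ Fintype.piFinset Ω, (1 / 2 : ℝ) ^ #{v ∈ N | f v ∈ J}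
      = ∏ v, ∑ j ∈ Ω v, g v j := by rw [prod_univ_sum]; exact sum_congr rfl fun f _ => hprod f
    _ ≤ ∏ v, #(Ω v) * Real.exp (-((if v ∈ N then share (Ω v) J else 0) / 2)) :=
        prod_le_prod (fun v _ => sum_nonneg fun j _ => by simp only [hg]; split_ifs <;> norm_num)
          fun v _ => hfactor v
    _ = _ := by
        rw [prod_mul_distrib, ← Real.exp_sum, Fintype.card_piFinset, Nat.cast_prod,
          sum_neg_distrib, ← sum_div, sum_ite_mem, univ_inter]

/-- A Chernoff bound: the left-hand side counts the colourings, with colours of `v` from `Ω v`,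
under which few elements of `N` get a colour from `J`. -/
lemma card_few_colour_le [Fintype V] [DecidableEq V] {Ω : V → Finset κ}
    (hΩ : ∀ v, (Ω v).Nonempty) (N : Finset V) (J : Finset κ) (m : ℕ) :
    (#{f ∈ Fintype.piFinset Ω | #{v ∈ N | f v ∈ J} ≤ m} : ℝ) ≤
      #(Fintype.piFinset Ω) *
        (2 ^ m * Real.exp (-((∑ v ∈ N, share (Ω v) J) / 2))) := by
  set F := {f ∈ Fintype.piFinset Ω | #{v ∈ N | f v ∈ J} ≤ m}
  have hmarkov : #F * (1 / 2 : ℝ) ^ m ≤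
      ∑ f ∈ Fintype.piFinset Ω, (1 / 2 : ℝ) ^ #{v ∈ N | f v ∈ J} := by
    rw [← nsmul_eq_mul]
    refine (card_nsmul_le_sum F _ _ fun f hf => ?_).trans
      (sum_le_sum_of_subset_of_nonneg (filter_subset _ _) fun f _ _ => by positivity)
    exact pow_le_pow_of_le_one (by norm_num) (by norm_num) (mem_filter.1 hf).2
  have hcancel : (1 / 2 : ℝ) ^ m * 2 ^ m = 1 := by rw [← mul_pow]; norm_num
  calc (#F : ℝ) = #F * (1 / 2) ^ m * 2 ^ m := by rw [mul_assoc, hcancel, mul_one]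
    _ ≤ #(Fintype.piFinset Ω) * Real.exp (-((∑ v ∈ N, share (Ω v) J) / 2)) * 2 ^ m := by
        exact mul_le_mul_of_nonneg_right (hmarkov.trans (sum_half_pow_card_le hΩ N J))
          (by positivity)
    _ = _ := by ring

lemma exists_choice [Finite V] [Nonempty κ] {ε : Type*} {L : Finset V} {Λ : V → Finset κ}
    (hΛ : ∀ v ∈ L, (Λ v).Nonempty) (k t : ℕ) (Ev : Finset ε) {N : ε → Finset V}
    (hN : ∀ e ∈ Ev, N e ⊆ L) {J : ε → Finset κ} (hJ : ∀ e ∈ Ev, #(J e) ≤ t) {x : ε → ℝ}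
    (hx : ∀ e ∈ Ev, x e ≤ ∑ v ∈ N e, share (Λ v) (J e))
    (hsum : ∑ e ∈ Ev, (2 : ℝ) ^ (k * t) * Real.exp (-(x e / 2)) < 1) :
    ∃ g : V → κ, (∀ v ∈ L, g v ∈ Λ v) ∧ ∀ e ∈ Ev, ∃ i ∈ J e, k < #{v ∈ N e | g v = i} := by
  classical
  have := Fintype.ofFinite V
  obtain ⟨i₀⟩ := ‹Nonempty κ›
  set Ω : V → Finset κ := fun v => if v ∈ L then Λ v else {i₀}
  have hΩL : ∀ v ∈ L, Ω v = Λ v := fun v hv => if_pos hv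
  have hΩ (v : V) : (Ω v).Nonempty := by
    by_cases hv : v ∈ L
    · exact hΩL v hv ▸ hΛ v hv
    · simp only [Ω, if_neg hv, singleton_nonempty]
  set bad : ε → Finset (V → κ) := fun e =>
    {f ∈ Fintype.piFinset Ω | #{v ∈ N e | f v ∈ J e} ≤ k * t}
  have hbad : ∀ e ∈ Ev, (#(bad e) : ℝ) ≤
      #(Fintype.piFinset Ω) * ((2 : ℝ) ^ (k * t) * Real.exp (-(x e / 2))) := fun e he => by
    refine (card_few_colour_le hΩ (N e) (J e) (k * t)).trans ?_
    gcongr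
    exact (hx e he).trans_eq (sum_congr rfl fun v hv => by rw [hΩL v (hN e he hv)])
  have hpos : (0 : ℝ) < #(Fintype.piFinset Ω) := by
    exact_mod_cast (Fintype.piFinset_nonempty.2 hΩ).card_pos
  have hunion : (#(Ev.biUnion bad) : ℝ) < #(Fintype.piFinset Ω) :=
    calc (#(Ev.biUnion bad) : ℝ) ≤ ∑ e ∈ Ev, (#(bad e) : ℝ) := by exact_mod_cast card_biUnion_le
      _ ≤ #(Fintype.piFinset Ω) * ∑ e ∈ Ev, ((2 : ℝ) ^ (k * t) * Real.exp (-(x e / 2))) := by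
          rw [mul_sum]
          exact sum_le_sum hbad
      _ < #(Fintype.piFinset Ω) := mul_lt_of_lt_one_right hpos hsum
  obtain ⟨g, hg, hgbad⟩ := exists_mem_notMem_of_card_lt_card (Nat.cast_lt.1 hunion)
  refine ⟨g, fun v hv => hΩL v hv ▸ Fintype.mem_piFinset.1 hg v, fun e he => ?_⟩
  by_contra! hfew
  exact hgbad (mem_biUnion.2 ⟨e, he, mem_filter.2
    ⟨hg, card_filter_mem_le_of_forall_le (hJ e he) hfew⟩⟩)

end RandomChoice

section RandomColouring

variable {V κ : Type*} [Fintype V] [DecidableEq V] [Fintype κ] [DecidableEq κ]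

lemma card_mul_card_colour_eq (v : V) (i : κ) {Q : (V → κ) → Prop} [DecidablePred Q]
    (hQ : ∀ f j, Q (Function.update f v j) ↔ Q f) :
    Fintype.card κ * #{f : V → κ | f v = i ∧ Q f} = #{f : V → κ | Q f} := by
  have hfibre (j : κ) : #{f ∈ {f : V → κ | Q f} | f v = j} = #{f : V → κ | f v = i ∧ Q f} := by
    refine card_nbij' (fun f => Function.update f v i) (fun f => Function.update f v j)
      (fun f hf => ?_) (fun f hf => ?_) (fun f hf => ?_) (fun f hf => ?_)
    all_goals simp only [coe_filter, mem_filter, mem_univ, true_and, Set.mem_ofPred_eq] at hf ⊢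
    · exact ⟨Function.update_self _ _ _, (hQ f i).2 hf.1⟩
    · exact ⟨(hQ f j).2 hf.2, Function.update_self _ _ _⟩
    · rw [Function.update_idem, ← hf.2, Function.update_eq_self]
    · rw [Function.update_idem, ← hf.1, Function.update_eq_self]
  have hsum := card_eq_sum_card_fiberwise (s := {f : V → κ | Q f}) (f := fun f => f v)
    (t := univ) fun f _ => mem_univ _
  rw [hsum, sum_congr rfl fun j _ => hfibre j, sum_const, card_univ, smul_eq_mul]

lemma two_pow_mul_exp_neg_le (a : ℕ) :
    (2 : ℝ) ^ (2 * a) * Real.exp (-(4 * a)) ≤ (1 / 8) ^ a := by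
  have hexp : Real.exp (-(4 * (a : ℝ))) = (Real.exp 4)⁻¹ ^ a := by
    rw [← Real.exp_neg, ← Real.exp_nat_mul]
    ring_nf
  have h32 : (32 : ℝ) ≤ Real.exp 4 :=
    calc (32 : ℝ) ≤ 2.7 ^ 4 := by norm_num
      _ ≤ Real.exp 1 ^ 4 := by gcongr; linarith [Real.exp_one_gt_d9]
      _ = Real.exp 4 := by rw [← Real.exp_nat_mul]; norm_num
  rw [hexp, pow_mul, ← mul_pow]
  refine pow_le_pow_left₀ (by positivity) ?_ a
  have : (Real.exp 4)⁻¹ ≤ 32⁻¹ := by gcongr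
  linarith

lemma card_few_eq_colour_le (i : κ) {N : Finset V} {a : ℕ} (hN : #N = 8 * a * Fintype.card κ) :
    (#{f : V → κ | #{v ∈ N | f v = i} ≤ 2 * a} : ℝ) ≤
      (1 / 8) ^ a * #(univ : Finset (V → κ)) := by
  have : Nonempty κ := ⟨i⟩
  have hchernoff := card_few_colour_le (Ω := fun _ : V => (univ : Finset κ))
    (fun _ => univ_nonempty) N {i} (2 * a)
  have hmean : (∑ _v ∈ N, share (univ : Finset κ) {i}) / 2 = 4 * a := by
    rw [share, univ_inter, card_singleton, card_univ, sum_const, hN, nsmul_eq_mul]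
    push_cast
    field_simp
    ring
  simp only [Fintype.piFinset_univ, mem_singleton] at hchernoff
  rw [hmean] at hchernoff
  refine hchernoff.trans ?_
  rw [mul_comm]
  gcongr
  exact two_pow_mul_exp_neg_le a

lemma card_many_bad_mul_le (i : κ) {N : Finset V} (a : ℕ) (bad : V → (V → κ) → Prop)
    [∀ v f, Decidable (bad v f)] (hinv : ∀ v ∈ N, ∀ f j, bad v (Function.update f v j) ↔ bad v f)
    {x : ℝ} (hx : ∀ v ∈ N, (#{f : V → κ | bad v f} : ℝ) ≤ x) :
    (#{f : V → κ | a ≤ #{v ∈ N | f v = i ∧ bad v f}} : ℝ) * (a * Fintype.card κ) ≤ #N * x := by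
  set F : Finset (V → κ) := {f : V → κ | a ≤ #{v ∈ N | f v = i ∧ bad v f}}
  have hmarkov : #F * a ≤ ∑ f : V → κ, #{v ∈ N | f v = i ∧ bad v f} := by
    rw [← smul_eq_mul]
    exact (card_nsmul_le_sum F _ _ fun f hf => (mem_filter.1 hf).2).trans
      (sum_le_sum_of_subset (subset_univ _))
  have hswap : ∑ f : V → κ, #{v ∈ N | f v = i ∧ bad v f} =
      ∑ v ∈ N, #{f : V → κ | f v = i ∧ bad v f} :=
    sum_card_bipartiteAbove_eq_sum_card_bipartiteBelow fun f v => f v = i ∧ bad v f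
  have hsum : #F * (a * Fintype.card κ) ≤ ∑ v ∈ N, #{f : V → κ | bad v f} := by
    rw [← mul_assoc, mul_comm, ← sum_congr rfl fun v hv => card_mul_card_colour_eq v i (hinv v hv),
      ← mul_sum, ← hswap]
    exact Nat.mul_le_mul_left _ hmarkov
  calc (#F : ℝ) * (a * Fintype.card κ) ≤ ∑ v ∈ N, (#{f : V → κ | bad v f} : ℝ) := by
        exact_mod_cast hsum
    _ ≤ #N * x := by
        rw [← nsmul_eq_mul]
        exact sum_le_card_nsmul _ _ _ hx

/-- Few elements of `N` being good of colour `i` is unlikely if every element is likely to be good,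
since its goodness is independent of its own colour. -/
lemma card_few_good_le {a k : ℕ} (ha : 0 < a) (hka : k ≤ a) (i : κ) {N : Finset V}
    (hN : 8 * a * Fintype.card κ ≤ #N) (good : V → (V → κ) → Prop) [∀ v f, Decidable (good v f)]
    (hinv : ∀ v ∈ N, ∀ f j, good v (Function.update f v j) ↔ good v f) {p : ℝ}
    (hp : ∀ v ∈ N, (#{f : V → κ | ¬ good v f} : ℝ) ≤ p * #(univ : Finset (V → κ))) :
    (#{f : V → κ | #{v ∈ N | f v = i ∧ good v f} ≤ k} : ℝ) ≤
      ((1 / 8) ^ a + 8 * p) * #(univ : Finset (V → κ)) := by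
  have : Nonempty κ := ⟨i⟩
  obtain ⟨N', hN', hcard⟩ := exists_subset_card_eq hN
  set F₁ : Finset (V → κ) := {f : V → κ | #{v ∈ N' | f v = i} ≤ 2 * a} with hF₁
  set F₂ : Finset (V → κ) := {f : V → κ | a ≤ #{v ∈ N' | f v = i ∧ ¬ good v f}} with hF₂
  have hsub : ({f : V → κ | #{v ∈ N | f v = i ∧ good v f} ≤ k} : Finset (V → κ)) ⊆ F₁ ∪ F₂ := by
    refine fun f hf => by_contra fun hnot => ?_
    simp only [hF₁, hF₂, mem_union, mem_filter, mem_univ, true_and, not_or, not_le] at hnot hf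
    have hsplit := card_filter_add_card_filter_not (s := {v ∈ N' | f v = i}) fun v => good v f
    rw [filter_filter, filter_filter] at hsplit
    have hmono : #{v ∈ N' | f v = i ∧ good v f} ≤ #{v ∈ N | f v = i ∧ good v f} :=
      card_le_card (filter_subset_filter _ hN')
    omega
  have hF₂le : (#F₂ : ℝ) ≤ 8 * p * #(univ : Finset (V → κ)) := by
    have hbad := card_many_bad_mul_le i a (fun v f => ¬ good v f)
      (fun v hv f j => not_congr (hinv v (hN' hv) f j))
      fun v hv => hp v (hN' hv)
    have hpos : (0 : ℝ) < a * Fintype.card κ := by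
      have := Fintype.card_pos (α := κ)
      positivity
    refine le_of_mul_le_mul_right (hbad.trans_eq ?_) hpos
    rw [hcard]
    push_cast
    ring
  calc (#{f : V → κ | #{v ∈ N | f v = i ∧ good v f} ≤ k} : ℝ) ≤ #F₁ + #F₂ := by
        exact_mod_cast (card_le_card hsub).trans (card_union_le _ _)
    _ ≤ (1 / 8) ^ a * #(univ : Finset (V → κ)) + 8 * p * #(univ : Finset (V → κ)) :=
        add_le_add (card_few_eq_colour_le i hcard) hF₂le
    _ = _ := by ring

end RandomColouring

section MissesFew

variable {V κ : Type*} {E : V → V → Prop} {A : κ → Finset V} {k : ℕ}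

/-- The vertex `v` has an out-neighbour in all but at most `k` of the sets `A α`. -/
def MissesFew (E : V → V → Prop) (A : κ → Finset V) (k : ℕ) (v : V) : Prop :=
  ∃ F : Finset κ, #F ≤ k ∧ ∀ α ∉ F, ∃ a ∈ A α, E v a

variable [Fintype κ]

open Classical in
lemma lt_card_of_not_missesFew {v : V} (h : ¬ MissesFew E A k v) :
    k < #{α | ∀ a ∈ A α, ¬ E v a} := by
  refine not_le.1 fun hle => h ⟨_, hle, fun α hα => ?_⟩
  simpa only [mem_filter, mem_univ, true_and, not_forall, not_not, exists_prop] using hα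

lemma card_not_missesFew_le {D : Finset V} {d s : ℕ} (hκ : Fintype.card κ ≤ 4 * k)
    (hmiss : ∀ α, ∀ D' ⊆ D, (∀ v ∈ D', ∀ a ∈ A α, ¬ E v a) → #D' * 2 ^ s ≤ d)
    (hD : ∀ v ∈ D, ¬ MissesFew E A k v) : #D * 2 ^ s ≤ 4 * d := by
  classical
  have hswap : ∑ v ∈ D, #({α | ∀ a ∈ A α, ¬ E v a} : Finset κ) =
      ∑ α : κ, #{v ∈ D | ∀ a ∈ A α, ¬ E v a} :=
    sum_card_bipartiteAbove_eq_sum_card_bipartiteBelow fun v α => ∀ a ∈ A α, ¬ E v a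
  have hcount : #D * (k + 1) ≤ ∑ α : κ, #{v ∈ D | ∀ a ∈ A α, ¬ E v a} := by
    rw [← hswap, ← smul_eq_mul]
    exact card_nsmul_le_sum D _ _ fun v hv => lt_card_of_not_missesFew (hD v hv)
  have hsum : (∑ α : κ, #{v ∈ D | ∀ a ∈ A α, ¬ E v a}) * 2 ^ s ≤ 4 * k * d := by
    rw [sum_mul]
    refine (sum_le_card_nsmul univ _ d fun α _ =>
      hmiss α _ (filter_subset _ _) fun v hv => (mem_filter.1 hv).2).trans ?_
    rw [card_univ, smul_eq_mul]
    exact Nat.mul_le_mul_right _ hκ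
  refine Nat.le_of_mul_le_mul_right (c := k + 1) ?_ k.succ_pos
  calc #D * 2 ^ s * (k + 1) = #D * (k + 1) * 2 ^ s := by ring
    _ ≤ 4 * k * d := (Nat.mul_le_mul_right _ hcount).trans hsum
    _ ≤ 4 * d * (k + 1) := by linarith

lemma card_not_disjoint_le [DecidableEq V] {B : κ → Finset V}
    (hB : ∀ α β, α ≠ β → Disjoint (B α) (B β)) (Z : Finset V) :
    #{α | ¬ Disjoint (B α) Z} ≤ #Z := by
  refine card_le_card_of_forall_subsingleton (fun α z => z ∈ B α) (fun α hα => ?_) fun z _ => ?_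
  · obtain ⟨z, hzB, hzZ⟩ := not_disjoint_iff.1 (mem_filter.1 hα).2
    exact ⟨z, hzZ, hzB⟩
  · rintro α ⟨-, hα⟩ β ⟨-, hβ⟩
    by_contra hne
    exact disjoint_left.1 (hB α β hne) hα hβ

lemma MissesFew.card_le (hA : ∀ α β, α ≠ β → Disjoint (A α) (A β)) {v : V}
    (h : MissesFew E A k v) {S : Finset V} (hS : ∀ α, A α ⊆ S) :
    Fintype.card κ ≤ #(outNbrs E S v) + k := by
  classical
  obtain ⟨F, hF, hadj⟩ := h
  set H : Finset κ := {α | ¬ Disjoint (A α) (outNbrs E S v)}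
  have hcover : univ ⊆ H ∪ F := fun α _ => by
    refine mem_union.2 (or_iff_not_imp_right.2 fun hα => mem_filter.2 ⟨mem_univ α, ?_⟩)
    obtain ⟨a, ha, hva⟩ := hadj α hα
    exact not_disjoint_iff.2 ⟨a, ha, mem_outNbrs.2 ⟨hS α ha, hva⟩⟩
  calc Fintype.card κ ≤ #H + #F := (card_le_card hcover).trans (card_union_le _ _)
    _ ≤ #(outNbrs E S v) + k := add_le_add (card_not_disjoint_le hA _) hF

end MissesFew

section Attached

variable {V : Type*} {E : V → V → Prop} {k : ℕ}

/-- The data to which the further vertices of a core are attached: predicates saying that a vertex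
is joined to most gadgets, respectively to all hubs, in either direction, and the vertices in the
bodies and on the paths of the gadgets. -/
structure Anchor (V : Type*) where
  SendsMost : V → Prop
  ReceivesMost : V → Prop
  SendsHubs : V → Prop
  ReceivesHubs : V → Prop
  body : Finset V
  path : Finset V

/-- The same anchor seen in the reversed tournament. -/
def Anchor.reverse (Φ : Anchor V) : Anchor V :=
  ⟨Φ.ReceivesMost, Φ.SendsMost, Φ.ReceivesHubs, Φ.SendsHubs, Φ.body, Φ.path⟩

/-- The vertices of `W` are attached to the anchor in a way that survives the deletion of `k`
vertices. -/
structure IsAttached (E : V → V → Prop) (k : ℕ) (Φ : Anchor V) (W : Finset V) : Prop where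
  out_or : ∀ w ∈ W, Φ.SendsMost w ∨ Φ.SendsHubs w ∨
    ∃ T ⊆ W, k < #T ∧ ∀ x ∈ T, E w x ∧ Φ.SendsMost x
  in_or : ∀ w ∈ W, Φ.ReceivesMost w ∨ Φ.ReceivesHubs w ∨
    ∃ T ⊆ W, k < #T ∧ ∀ x ∈ T, E x w ∧ Φ.ReceivesMost x
  lt_out_or : ∀ z ∈ Φ.body, k < #(outNbrs E W z) ∨ k < #(outNbrs E Φ.path z)
  lt_in_or : ∀ z ∈ Φ.body, k < #(outNbrs (flip E) W z) ∨ k < #(outNbrs (flip E) Φ.path z)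

lemma IsAttached.reverse {Φ : Anchor V} {W : Finset V} (h : IsAttached E k Φ W) :
    IsAttached (flip E) k Φ.reverse W :=
  ⟨h.in_or, h.out_or, h.lt_in_or, h.lt_out_or⟩

end Attached

section Core

variable {V κ : Type*} [DecidableEq V] [Fintype κ] {E : V → V → Prop} {k : ℕ}
  {G : κ → Gadget V} {W Z : Finset V}

/-- The anchor given by a group of gadgets. -/
def gadgetAnchor (E : V → V → Prop) (k : ℕ) (G : κ → Gadget V) : Anchor V where
  SendsMost := MissesFew E (fun α => (G α).inDom) k
  ReceivesMost := MissesFew (flip E) (fun α => (G α).outDom) k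
  SendsHubs v := ∀ α, E v (G α).inHub
  ReceivesHubs v := ∀ α, E (G α).outHub v
  body := univ.biUnion fun α => (G α).body
  path := univ.biUnion fun α => (G α).path

/-- A group of gadgets together with a set `W` of further vertices attached to it. -/
structure IsCore (E : V → V → Prop) (k : ℕ) (G : κ → Gadget V) (W : Finset V) : Prop
    extends GadgetFamily E G, IsAttached E k (gadgetAnchor E k G) W

/-- The vertices of a core. -/
def coreVerts (G : κ → Gadget V) (W : Finset V) : Finset V :=
  univ.biUnion (fun α => (G α).body) ∪ univ.biUnion (fun α => (G α).path) ∪ W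

lemma body_subset_coreVerts (G : κ → Gadget V) (W : Finset V) (α : κ) :
    (G α).body ⊆ coreVerts G W :=
  (subset_biUnion_of_mem (fun α => (G α).body) (mem_univ α)).trans
    (subset_union_left.trans subset_union_left)

lemma path_subset_coreVerts (G : κ → Gadget V) (W : Finset V) :
    univ.biUnion (fun α => (G α).path) ⊆ coreVerts G W :=
  subset_union_right.trans subset_union_left

lemma verts_subset_coreVerts (G : κ → Gadget V) (W : Finset V) (α : κ) :
    (G α).verts ⊆ coreVerts G W :=
  union_subset (body_subset_coreVerts G W α)
    ((subset_biUnion_of_mem (fun α => (G α).path) (mem_univ α)).trans (path_subset_coreVerts G W))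

lemma subset_coreVerts (G : κ → Gadget V) (W : Finset V) : W ⊆ coreVerts G W :=
  subset_union_right

/-- In the core with `Z` deleted, some vertex of `W` sending edges to most gadgets can be reached
from `v`. -/
def Escapes (E : V → V → Prop) (k : ℕ) (G : κ → Gadget V) (W Z : Finset V) (v : V) : Prop :=
  ∃ w ∈ W \ Z, MissesFew E (fun α => (G α).inDom) k w ∧
    ReachWithin E ((coreVerts G W \ Z : Finset V) : Set V) v w

lemma Escapes.of_adj {x y : V} (hy : Escapes E k G W Z y) (hxy : E x y)
    (hxS : x ∈ coreVerts G W \ Z) (hyS : y ∈ coreVerts G W \ Z) : Escapes E k G W Z x := by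
  obtain ⟨w, hw, hmiss, hreach⟩ := hy
  exact ⟨w, hw, hmiss, (ReachWithin.single hxS hyS hxy).trans hreach⟩

namespace IsCore

lemma reverse (h : IsCore E k G W) : IsCore (flip E) k (fun α => (G α).reverse) W :=
  ⟨h.toGadgetFamily.reverse, h.toIsAttached.reverse⟩

lemma escapes_or_adj (h : IsCore E k G W) (hZ : #Z ≤ k) {w : V} (hw : w ∈ W \ Z) :
    Escapes E k G W Z w ∨ ∀ α, E w (G α).inHub := by
  rcases h.out_or w (mem_sdiff.1 hw).1 with hmiss | hadj | ⟨T, hTW, hT, hadj⟩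
  · exact .inl ⟨w, hw, hmiss, ReachWithin.refl _ _ _⟩
  · exact .inr hadj
  · obtain ⟨x, hxT, hxZ⟩ := exists_mem_notMem_of_card_lt_card (hZ.trans_lt hT)
    have hx : x ∈ W \ Z := mem_sdiff.2 ⟨hTW hxT, hxZ⟩
    have hsub := sdiff_subset_sdiff (subset_coreVerts G W) (le_refl Z)
    exact .inl ⟨x, hx, (hadj x hxT).2,
      .single (mem_coe.2 (hsub hw)) (mem_coe.2 (hsub hx)) (hadj x hxT).1⟩

lemma escapes_inHub (h : IsCore E k G W) (hE : IsTournament E) (hZ : #Z ≤ k) {α : κ}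
    (hα : (G α).inHub ∉ Z) : Escapes E k G W Z (G α).inHub := by
  rcases h.lt_out_or _ (mem_biUnion.2 ⟨α, mem_univ α, h.inHub_mem α⟩) with hlt | hlt
  · obtain ⟨w, hw, hwZ⟩ := exists_mem_notMem_of_card_lt_card (hZ.trans_lt hlt)
    obtain ⟨hwW, hadj⟩ := mem_outNbrs.1 hw
    refine ((h.escapes_or_adj hZ (mem_sdiff.2 ⟨hwW, hwZ⟩)).resolve_right fun hall =>
      hE.asymm hadj (hall α)).of_adj hadj ?_ ?_
    · exact mem_sdiff.2 ⟨body_subset_coreVerts G W α (h.inHub_mem α), hα⟩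
    · exact mem_sdiff.2 ⟨subset_coreVerts G W hwW, hwZ⟩
  · obtain ⟨p, hp⟩ := card_pos.1 (k.zero_le.trans_lt hlt)
    obtain ⟨hpath, hadj⟩ := mem_outNbrs.1 hp
    obtain ⟨β, -, hpβ⟩ := mem_biUnion.1 hpath
    exact absurd (h.adj_inHub β α p hpβ) (hE.asymm hadj)

lemma exists_inHub_notMem (h : IsCore E k G W) (hκ : k < Fintype.card κ) (hZ : #Z ≤ k) :
    ∃ α, (G α).inHub ∉ Z := by
  obtain ⟨x, hx, hxZ⟩ := exists_mem_notMem_of_card_lt_card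
    (t := univ.image fun α => (G α).inHub) (s := Z) (by
      rw [card_image_of_injective _ h.injective_inHub, card_univ]
      exact hZ.trans_lt hκ)
  obtain ⟨α, -, rfl⟩ := mem_image.1 hx
  exact ⟨α, hxZ⟩

lemma escapes (h : IsCore E k G W) (hE : IsTournament E) (hκ : k < Fintype.card κ) (hZ : #Z ≤ k)
    {v : V} (hv : v ∈ coreVerts G W \ Z) : Escapes E k G W Z v := by
  obtain ⟨α, hα⟩ := h.exists_inHub_notMem hκ hZ
  have hub : (G α).inHub ∈ coreVerts G W \ Z :=
    mem_sdiff.2 ⟨body_subset_coreVerts G W α (h.inHub_mem α), hα⟩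
  have of_mem_W : ∀ w ∈ W, w ∉ Z → Escapes E k G W Z w := fun w hw hwZ =>
    (h.escapes_or_adj hZ (mem_sdiff.2 ⟨hw, hwZ⟩)).elim id fun hadj =>
      (h.escapes_inHub hE hZ hα).of_adj (hadj α)
        (mem_sdiff.2 ⟨subset_coreVerts G W hw, hwZ⟩) hub
  have of_mem_path : ∀ p ∈ univ.biUnion fun α => (G α).path, p ∉ Z → Escapes E k G W Z p := by
    intro p hp hpZ
    obtain ⟨β, -, hpβ⟩ := mem_biUnion.1 hp
    exact (h.escapes_inHub hE hZ hα).of_adj (h.adj_inHub β α p hpβ)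
      (mem_sdiff.2 ⟨path_subset_coreVerts G W hp, hpZ⟩) hub
  obtain ⟨hvS, hvZ⟩ := mem_sdiff.1 hv
  rcases mem_union.1 hvS with hvG | hvW
  swap
  · exact of_mem_W v hvW hvZ
  rcases mem_union.1 hvG with hbody | hpath
  swap
  · exact of_mem_path v hpath hvZ
  rcases h.lt_out_or v hbody with hlt | hlt
  all_goals
    obtain ⟨w, hw, hwZ⟩ := exists_mem_notMem_of_card_lt_card (hZ.trans_lt hlt)
    obtain ⟨hwW, hadj⟩ := mem_outNbrs.1 hw
  · exact (of_mem_W w hwW hwZ).of_adj hadj hv (mem_sdiff.2 ⟨subset_coreVerts G W hwW, hwZ⟩)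
  · exact (of_mem_path w hwW hwZ).of_adj hadj hv
      (mem_sdiff.2 ⟨path_subset_coreVerts G W hwW, hwZ⟩)

lemma lt_card_outNbrs (h : IsCore E k G W) (α : κ) :
    k < #(outNbrs E (coreVerts G W) (G α).inHub) := by
  rcases h.lt_out_or _ (mem_biUnion.2 ⟨α, mem_univ α, h.inHub_mem α⟩) with hlt | hlt
  · exact hlt.trans_le (card_le_card (outNbrs_mono E (subset_coreVerts G W) _))
  · exact hlt.trans_le (card_le_card (outNbrs_mono E (path_subset_coreVerts G W) _))

lemma lt_card_inNbrs (h : IsCore E k G W) (α : κ) :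
    k < #(outNbrs (flip E) (coreVerts G W) (G α).inHub) := by
  rcases h.lt_in_or _ (mem_biUnion.2 ⟨α, mem_univ α, h.inHub_mem α⟩) with hlt | hlt
  · exact hlt.trans_le (card_le_card (outNbrs_mono (flip E) (subset_coreVerts G W) _))
  · exact hlt.trans_le (card_le_card (outNbrs_mono (flip E) (path_subset_coreVerts G W) _))

lemma two_mul_add_two_le_card [Nonempty κ] (h : IsCore E k G W) (hE : IsTournament E) :
    2 * k + 2 ≤ #(coreVerts G W) := by
  obtain ⟨α⟩ := ‹Nonempty κ›
  have hdisj : Disjoint (outNbrs E (coreVerts G W) (G α).inHub)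
      (outNbrs (flip E) (coreVerts G W) (G α).inHub) :=
    disjoint_left.2 fun x hx hx' => hE.asymm (mem_outNbrs.1 hx).2 (mem_outNbrs.1 hx').2
  have hcard := card_le_card (union_subset (outNbrs_subset E (coreVerts G W) (G α).inHub)
    (outNbrs_subset (flip E) (coreVerts G W) (G α).inHub))
  rw [card_union_of_disjoint hdisj] at hcard
  linarith [h.lt_card_outNbrs α, h.lt_card_inNbrs α]

lemma exists_gadget_joining (h : IsCore E k G W) (hκ : 3 * k < Fintype.card κ) (hZ : #Z ≤ k)
    {w x : V} (hw : MissesFew E (fun α => (G α).inDom) k w)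
    (hx : MissesFew (flip E) (fun α => (G α).outDom) k x) :
    ∃ α, Disjoint (G α).verts Z ∧ (∃ a ∈ (G α).inDom, E w a) ∧ ∃ b ∈ (G α).outDom, E b x := by
  classical
  obtain ⟨F, hF, hadjw⟩ := hw
  obtain ⟨F', hF', hadjx⟩ := hx
  set H : Finset κ := {α | ¬ Disjoint (G α).verts Z}
  have hH : #H ≤ #Z := card_not_disjoint_le (fun α β => h.disjoint_verts) Z
  obtain ⟨α, -, hα⟩ := exists_mem_notMem_of_card_lt_card (s := F ∪ F' ∪ H) (t := univ) (by
    rw [card_univ]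
    linarith [card_union_le (F ∪ F') H, card_union_le F F'])
  simp only [mem_union, not_or, H, mem_filter, mem_univ, true_and, not_not] at hα
  exact ⟨α, hα.2, hadjw α hα.1.1, hadjx α hα.1.2⟩

lemma stronglyKConnectedOn (h : IsCore E k G W) (hE : IsTournament E)
    (hκ : 3 * k < Fintype.card κ) : StronglyKConnectedOn E k (coreVerts G W) := by
  have : Nonempty κ := Fintype.card_pos_iff.1 (by omega)
  refine ⟨by linarith [h.two_mul_add_two_le_card hE], fun Z hZ u hu v hv => ?_⟩
  obtain ⟨w, hw, hwmiss, huw⟩ := h.escapes hE (by omega) hZ (mem_coe.1 hu)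
  obtain ⟨x, hx, hxmiss, hvx⟩ := h.reverse.escapes hE.reverse (by omega) hZ (mem_coe.1 hv)
  obtain ⟨α, hdisj, ⟨a, ha, hwa⟩, b, hb, hbx⟩ := h.exists_gadget_joining hκ hZ hwmiss hxmiss
  have hsub : (G α).verts ⊆ coreVerts G W \ Z :=
    subset_sdiff.2 ⟨verts_subset_coreVerts G W α, hdisj⟩
  have hW : W \ Z ⊆ coreVerts G W \ Z := sdiff_subset_sdiff (subset_coreVerts G W) (le_refl Z)
  have haS := hsub (mem_union_left _ (h.inDom_subset α ha))
  have hbS := hsub (mem_union_left _ (h.outDom_subset α hb))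
  have hwa' := ReachWithin.single (mem_coe.2 (hW hw)) (mem_coe.2 haS) hwa
  have hbx' := ReachWithin.single (mem_coe.2 hbS) (mem_coe.2 (hW hx)) hbx
  exact huw.trans <| hwa'.trans <|
    ((h.reachWithin α a ha b hb).mono (coe_subset.2 hsub)).trans <| hbx'.trans hvx.reverse

end IsCore

end Core

section RandomCore

variable {V κ : Type*} {E : V → V → Prop} {k m : ℕ} {Φ : Anchor V} {U : Finset V} {i : κ}

open Classical in
/-- Every vertex of `U`, respectively of the body of the anchor, which is not joined to the anchor
directly can be joined to it through at least `m` vertices of `U`. -/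
structure IsAttachable (E : V → V → Prop) (k m : ℕ) (Φ : Anchor V) (U : Finset V) : Prop where
  out_or : ∀ v ∈ U, Φ.SendsMost v ∨ Φ.SendsHubs v ∨ m ≤ #{u ∈ U | E v u ∧ Φ.SendsMost u}
  in_or : ∀ v ∈ U, Φ.ReceivesMost v ∨ Φ.ReceivesHubs v ∨
    m ≤ #{u ∈ U | E u v ∧ Φ.SendsMost u ∧ Φ.ReceivesMost u}
  le_out_or : ∀ z ∈ Φ.body, m ≤ #(outNbrs E U z) ∨ k < #(outNbrs E Φ.path z)
  le_in_or : ∀ z ∈ Φ.body, m ≤ #(outNbrs (flip E) U z) ∨ k < #(outNbrs (flip E) Φ.path z)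

open Classical in
/-- In the colouring `f`, the vertex `v` can be reached from the anchor directly or through
vertices of colour `i`. -/
def InAttached (E : V → V → Prop) (k : ℕ) (Φ : Anchor V) (U : Finset V) (i : κ) (v : V)
    (f : V → κ) : Prop :=
  Φ.ReceivesMost v ∨ Φ.ReceivesHubs v ∨
    k < #{u ∈ {u ∈ U | E u v ∧ Φ.SendsMost u ∧ Φ.ReceivesMost u} | f u = i}

open Classical in
/-- In the colouring `f`, the vertex `v` is joined to the anchor in both directions, directly or
through vertices of colour `i` with the same property. -/
def Attached (E : V → V → Prop) (k : ℕ) (Φ : Anchor V) (U : Finset V) (i : κ) (v : V)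
    (f : V → κ) : Prop :=
  InAttached E k Φ U i v f ∧ (Φ.SendsMost v ∨ Φ.SendsHubs v ∨
    k < #{u ∈ {u ∈ U | E v u ∧ Φ.SendsMost u} | f u = i ∧ InAttached E k Φ U i u f})

open Classical in
/-- The attached vertices of colour `i`. -/
noncomputable def attachedSet (E : V → V → Prop) (k : ℕ) (Φ : Anchor V) (U : Finset V) (i : κ)
    (f : V → κ) : Finset V :=
  {v ∈ U | f v = i ∧ Attached E k Φ U i v f}

lemma mem_attachedSet {v : V} {f : V → κ} :
    v ∈ attachedSet E k Φ U i f ↔ v ∈ U ∧ f v = i ∧ Attached E k Φ U i v f := by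
  classical
  exact mem_filter

lemma isAttached_attachedSet {f : V → κ}
    (hout : ∀ z ∈ Φ.body,
      k < #(outNbrs E (attachedSet E k Φ U i f) z) ∨ k < #(outNbrs E Φ.path z))
    (hin : ∀ z ∈ Φ.body,
      k < #(outNbrs (flip E) (attachedSet E k Φ U i f) z) ∨ k < #(outNbrs (flip E) Φ.path z)) :
    IsAttached E k Φ (attachedSet E k Φ U i f) where
  out_or w hw := by
    classical
    refine (mem_attachedSet.1 hw).2.2.2.imp_right (Or.imp_right fun hcard =>
      ⟨{u ∈ attachedSet E k Φ U i f | E w u ∧ Φ.SendsMost u}, filter_subset _ _,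
        hcard.trans_le (card_le_card fun u hu => ?_), fun u hu => (mem_filter.1 hu).2⟩)
    obtain ⟨hu, hcol, hin⟩ := mem_filter.1 hu
    obtain ⟨huU, hadj⟩ := mem_filter.1 hu
    exact mem_filter.2 ⟨mem_attachedSet.2 ⟨huU, hcol, hin, .inl hadj.2⟩, hadj⟩
  in_or w hw := by
    classical
    refine (mem_attachedSet.1 hw).2.2.1.imp_right (Or.imp_right fun hcard =>
      ⟨{u ∈ attachedSet E k Φ U i f | E u w ∧ Φ.ReceivesMost u}, filter_subset _ _,
        hcard.trans_le (card_le_card fun u hu => ?_), fun u hu => (mem_filter.1 hu).2⟩)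
    obtain ⟨hu, hcol⟩ := mem_filter.1 hu
    obtain ⟨huU, hadj, hsends, hreceives⟩ := mem_filter.1 hu
    exact mem_filter.2
      ⟨mem_attachedSet.2 ⟨huU, hcol, .inl hreceives, .inl hsends⟩, hadj, hreceives⟩
  lt_out_or := hout
  lt_in_or := hin

section Invariance

variable [DecidableEq V]

lemma inAttached_update {x v : V} (hxv : ¬ (E x v ∧ Φ.SendsMost x)) (f : V → κ) (j : κ) :
    InAttached E k Φ U i v (Function.update f x j) ↔ InAttached E k Φ U i v f := by
  classical
  have hcol : ∀ u ∈ U.filter fun u => E u v ∧ Φ.SendsMost u ∧ Φ.ReceivesMost u,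
      (Function.update f x j u = i ↔ f u = i) := fun u hu => by
    obtain ⟨-, hadj, hsends, -⟩ := mem_filter.1 hu
    rw [Function.update_of_ne]
    rintro rfl
    exact hxv ⟨hadj, hsends⟩
  simp only [InAttached, filter_congr hcol]

lemma attached_update (hE : IsTournament E) (v : V) (f : V → κ) (j : κ) :
    Attached E k Φ U i v (Function.update f v j) ↔ Attached E k Φ U i v f := by
  classical
  refine and_congr (inAttached_update (fun h => hE.1 v h.1) f j) (or_congr_right' fun hv => ?_)
  have hcol : ∀ u ∈ U.filter fun u => E v u ∧ Φ.SendsMost u,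
      (Function.update f v j u = i ∧ InAttached E k Φ U i u (Function.update f v j) ↔
        f u = i ∧ InAttached E k Φ U i u f) := fun u hu => by
    obtain ⟨-, hadj, -⟩ := mem_filter.1 hu
    rw [Function.update_of_ne (hE.ne hadj).symm, inAttached_update fun h => hv h.2]
  simp only [filter_congr hcol]

end Invariance

variable [Fintype V] [DecidableEq V] [Fintype κ] {a : ℕ}

open Classical in
lemma card_not_inAttached_le (ha : 0 < a) (hka : k ≤ a)
    (h : IsAttachable E k (8 * a * Fintype.card κ) Φ U) {v : V} (hv : v ∈ U) :
    (#{f : V → κ | ¬ InAttached E k Φ U i v f} : ℝ) ≤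
      (1 / 8) ^ a * #(univ : Finset (V → κ)) := by
  rcases h.in_or v hv with hmost | hhubs | hcard
  · simp only [InAttached, hmost, true_or, not_true, filter_false, card_empty, Nat.cast_zero]
    positivity
  · simp only [InAttached, hhubs, true_or, or_true, not_true, filter_false, card_empty,
      Nat.cast_zero]
    positivity
  · have hfew := card_few_good_le ha hka i hcard (p := 0) (fun _ _ => True)
      (fun _ _ _ _ => Iff.rfl) (by simp)
    simp only [and_true, mul_zero, add_zero] at hfew
    refine le_trans (Nat.cast_le.2 (card_le_card fun f hf => ?_)) hfew
    simp only [mem_filter, mem_univ, true_and, InAttached, not_or, not_lt] at hf ⊢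
    exact hf.2.2

open Classical in
lemma card_not_attached_le (hE : IsTournament E) (ha : 0 < a) (hka : k ≤ a)
    (h : IsAttachable E k (8 * a * Fintype.card κ) Φ U) {v : V} (hv : v ∈ U) :
    (#{f : V → κ | ¬ Attached E k Φ U i v f} : ℝ) ≤
      10 * (1 / 8) ^ a * #(univ : Finset (V → κ)) := by
  have hin (u : V) (hu : u ∈ U) := card_not_inAttached_le (i := i) ha hka h hu
  by_cases hdirect : Φ.SendsMost v ∨ Φ.SendsHubs v
  · have hiff (f : V → κ) : Attached E k Φ U i v f ↔ InAttached E k Φ U i v f :=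
      and_iff_left (hdirect.imp_right .inl)
    simp only [hiff]
    have hpos : (0 : ℝ) ≤ (1 / 8) ^ a * #(univ : Finset (V → κ)) := by positivity
    linarith [hin v hv]
  · have hcard := (or_assoc.2 (h.out_or v hv)).resolve_left hdirect
    have hfew := card_few_good_le ha hka i hcard (InAttached E k Φ U i)
      (fun u _ => inAttached_update fun h => hE.1 u h.1) fun u hu => hin u (mem_filter.1 hu).1
    have hsub : (#{f : V → κ | ¬ Attached E k Φ U i v f} : ℝ) ≤
        #{f : V → κ | ¬ InAttached E k Φ U i v f} +
        #{f : V → κ | #{u ∈ {u ∈ U | E v u ∧ Φ.SendsMost u} |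
          f u = i ∧ InAttached E k Φ U i u f} ≤ k} := by
      rw [← Nat.cast_add, Nat.cast_le]
      refine (card_le_card fun f hf => ?_).trans (card_union_le _ _)
      simp only [mem_filter, mem_univ, true_and, mem_union, Attached, not_and_or, not_or,
        not_lt] at hf ⊢
      exact hf.imp_right fun hf => hf.2.2
    linarith [hin v hv]

open Classical in
lemma card_few_attached_le (hE : IsTournament E) (ha : 0 < a) (hka : k ≤ a)
    (h : IsAttachable E k (8 * a * Fintype.card κ) Φ U) {F : V → V → Prop} {z : V}
    (hz : 8 * a * Fintype.card κ ≤ #(outNbrs F U z)) :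
    (#{f : V → κ | #(outNbrs F (attachedSet E k Φ U i f) z) ≤ k} : ℝ) ≤
      81 * (1 / 8) ^ a * #(univ : Finset (V → κ)) := by
  have hfew := card_few_good_le ha hka i hz (Attached E k Φ U i)
    (fun u _ => attached_update hE u)
    fun u hu => card_not_attached_le hE ha hka h (outNbrs_subset F U z hu)
  refine le_trans (Nat.cast_le.2 (card_le_card fun f hf => ?_)) (hfew.trans_eq (by ring))
  simp only [mem_filter, mem_univ, true_and] at hf ⊢
  refine (card_le_card fun u hu => ?_).trans hf
  obtain ⟨hu, hcol, hatt⟩ := mem_filter.1 hu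
  obtain ⟨huU, hadj⟩ := mem_outNbrs.1 hu
  exact mem_outNbrs.2 ⟨mem_attachedSet.2 ⟨huU, hcol, hatt⟩, hadj⟩

open Classical in
lemma card_exists_few_attached_le (hE : IsTournament E) (ha : 0 < a) (hka : k ≤ a)
    (h : IsAttachable E k (8 * a * Fintype.card κ) Φ U) {F : V → V → Prop} {Q J : Finset V}
    (hQ : ∀ z ∈ Q, 8 * a * Fintype.card κ ≤ #(outNbrs F U z) ∨ k < #(outNbrs F J z)) :
    (#{f : V → κ | ∃ z ∈ Q, #(outNbrs F (attachedSet E k Φ U i f) z) ≤ k ∧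
      #(outNbrs F J z) ≤ k} : ℝ) ≤ #Q * (81 * (1 / 8) ^ a * #(univ : Finset (V → κ))) := by
  have hz (z : V) (hz : z ∈ Q) : (#{f : V → κ | #(outNbrs F (attachedSet E k Φ U i f) z) ≤ k ∧
      #(outNbrs F J z) ≤ k} : ℝ) ≤ 81 * (1 / 8) ^ a * #(univ : Finset (V → κ)) := by
    rcases hQ z hz with hcard | hlt
    · exact le_trans (Nat.cast_le.2 (card_le_card fun f hf =>
        mem_filter.2 ⟨mem_univ f, (mem_filter.1 hf).2.1⟩)) (card_few_attached_le hE ha hka h hcard)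
    · simp only [hlt.not_ge, and_false, filter_false, card_empty, Nat.cast_zero]
      positivity
  calc _ ≤ ((∑ z ∈ Q, #{f : V → κ | #(outNbrs F (attachedSet E k Φ U i f) z) ≤ k ∧
        #(outNbrs F J z) ≤ k} : ℕ) : ℝ) := by
        refine Nat.cast_le.2 ((card_le_card fun f hf => ?_).trans card_biUnion_le)
        simpa only [mem_biUnion, mem_filter, mem_univ, true_and] using hf
    _ ≤ _ := by
        rw [Nat.cast_sum, ← nsmul_eq_mul]
        exact sum_le_card_nsmul Q _ _ hz

open Classical in
lemma card_not_exists_isAttached_le (hE : IsTournament E) (ha : 0 < a) (hka : k ≤ a)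
    (h : IsAttachable E k (8 * a * Fintype.card κ) Φ U) (i : κ) :
    (#{f : V → κ | ¬ ∃ W ⊆ U, (∀ w ∈ W, f w = i) ∧ IsAttached E k Φ W} : ℝ) ≤
      162 * #Φ.body * (1 / 8) ^ a * #(univ : Finset (V → κ)) := by
  have hsub : (#{f : V → κ | ¬ ∃ W ⊆ U, (∀ w ∈ W, f w = i) ∧ IsAttached E k Φ W} : ℝ) ≤
      #{f : V → κ | ∃ z ∈ Φ.body, #(outNbrs E (attachedSet E k Φ U i f) z) ≤ k ∧
        #(outNbrs E Φ.path z) ≤ k} +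
      #{f : V → κ | ∃ z ∈ Φ.body, #(outNbrs (flip E) (attachedSet E k Φ U i f) z) ≤ k ∧
        #(outNbrs (flip E) Φ.path z) ≤ k} := by
    rw [← Nat.cast_add, Nat.cast_le]
    refine (card_le_card fun f hf => by_contra fun hcon => ?_).trans (card_union_le _ _)
    simp only [mem_union, mem_filter, mem_univ, true_and, not_or, not_exists, not_and_or,
      not_le] at hcon
    refine (mem_filter.1 hf).2 ⟨attachedSet E k Φ U i f, fun w hw => (mem_attachedSet.1 hw).1,
      fun w hw => (mem_attachedSet.1 hw).2.1,
      isAttached_attachedSet (fun z hz => ?_) fun z hz => ?_⟩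
    · exact (hcon.1 z).resolve_left (not_not.2 hz)
    · exact (hcon.2 z).resolve_left (not_not.2 hz)
  linarith [card_exists_few_attached_le (i := i) hE ha hka h h.le_out_or,
    card_exists_few_attached_le (i := i) hE ha hka h h.le_in_or]

end RandomCore

section Sparse

variable {V ι κ : Type*} {E : V → V → Prop} {R I : ι → Finset V}

lemma sum_card_outNbrs_le (hI : ∀ α β, α ≠ β → Disjoint (I α) (I β)) {U : Finset V}
    (hU : ∀ α, I α ⊆ U) (v : V) (S : Finset ι) :
    ∑ β ∈ S, #(outNbrs E (I β) v) ≤ #(outNbrs E U v) := by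
  classical
  rw [← card_biUnion fun α _ β _ hne =>
    (hI α β hne).mono (outNbrs_subset _ _ _) (outNbrs_subset _ _ _)]
  exact card_le_card (biUnion_subset.2 fun β _ => outNbrs_mono E (hU β) v)

variable [Fintype V]

/-- Every vertex of `R α` has at most a quarter of its out-neighbours in the sets `I β` with
`β ≠ α`. -/
def IsSparse (E : V → V → Prop) (R I : ι → Finset V) : Prop :=
  ∀ α, ∀ z ∈ R α, ∀ T : Finset ι, α ∉ T →
    4 * ∑ β ∈ T, #(outNbrs E (I β) z) ≤ #(outNbrs E univ z)

/-- The proportion of the out-neighbours of `z` lying in `S`, which is `0` if there are none. -/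
noncomputable def outShare (E : V → V → Prop) (S : Finset V) (z : V) : ℝ :=
  #(outNbrs E S z) / #(outNbrs E univ z)

lemma outShare_nonneg (E : V → V → Prop) (S : Finset V) (z : V) : 0 ≤ outShare E S z := by
  unfold outShare
  positivity

lemma sum_outShare_le_one (hI : ∀ α β, α ≠ β → Disjoint (I α) (I β)) (z : V) (S : Finset ι) :
    ∑ β ∈ S, outShare E (I β) z ≤ 1 := by
  simp only [outShare, ← sum_div]
  refine div_le_one_of_le₀ ?_ (by positivity)
  exact_mod_cast sum_card_outNbrs_le hI (fun β => subset_univ (I β)) z S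

lemma four_mul_sum_card_outNbrs_le {z : V} {T : Finset ι}
    (h : ∑ β ∈ T, outShare E (I β) z ≤ 1 / 4) :
    4 * ∑ β ∈ T, #(outNbrs E (I β) z) ≤ #(outNbrs E univ z) := by
  simp only [outShare, ← sum_div] at h
  rcases Nat.eq_zero_or_pos #(outNbrs E univ z) with h0 | hpos
  · rw [sum_eq_zero fun β _ => Nat.eq_zero_of_le_zero
      (h0 ▸ card_le_card (outNbrs_mono E (subset_univ (I β)) z))]
    exact Nat.zero_le _
  · rw [div_le_iff₀ (by exact_mod_cast hpos)] at h
    have : (4 : ℝ) * ∑ β ∈ T, (#(outNbrs E (I β) z) : ℝ) ≤ #(outNbrs E univ z) := by linarith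
    exact_mod_cast this

open Classical in
/-- The total proportion of the out-neighbours and in-neighbours of the vertices of `R α` lying in
`I β`, for `β ≠ α`. -/
noncomputable def crossShare (E : V → V → Prop) (R I : ι → Finset V) (α β : ι) : ℝ :=
  if α = β then 0 else ∑ z ∈ R α, (outShare E (I β) z + outShare (flip E) (I β) z)

lemma crossShare_self (E : V → V → Prop) (R I : ι → Finset V) (α : ι) :
    crossShare E R I α α = 0 :=
  if_pos rfl

lemma crossShare_flip (E : V → V → Prop) (R I : ι → Finset V) :
    crossShare (flip E) R I = crossShare E R I := by
  funext α β
  unfold crossShare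
  split_ifs
  exacts [rfl, sum_congr rfl fun z _ => add_comm _ _]

lemma sum_outShare_add_nonneg (E : V → V → Prop) (R I : ι → Finset V) (α β : ι) :
    0 ≤ ∑ z ∈ R α, (outShare E (I β) z + outShare (flip E) (I β) z) :=
  sum_nonneg fun _ _ => add_nonneg (outShare_nonneg _ _ _) (outShare_nonneg _ _ _)

lemma crossShare_nonneg (E : V → V → Prop) (R I : ι → Finset V) (α β : ι) :
    0 ≤ crossShare E R I α β := by
  unfold crossShare
  split_ifs
  exacts [le_rfl, sum_outShare_add_nonneg E R I α β]

lemma outShare_le_crossShare {α β : ι} (hne : α ≠ β) {z : V} (hz : z ∈ R α) :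
    outShare E (I β) z ≤ crossShare E R I α β := by
  rw [crossShare, if_neg hne]
  exact (le_add_of_nonneg_right (outShare_nonneg _ _ _)).trans <|
    single_le_sum (f := fun z => outShare E (I β) z + outShare (flip E) (I β) z)
      (fun _ _ => add_nonneg (outShare_nonneg _ _ _) (outShare_nonneg _ _ _)) hz

lemma sum_crossShare_le [Fintype ι] (hI : ∀ α β, α ≠ β → Disjoint (I α) (I β)) (α : ι) :
    ∑ β, crossShare E R I α β ≤ 2 * #(R α) := by
  calc ∑ β, crossShare E R I α β
      ≤ ∑ β, ∑ z ∈ R α, (outShare E (I β) z + outShare (flip E) (I β) z) :=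
        sum_le_sum fun β _ => by
          unfold crossShare
          split_ifs
          exacts [sum_outShare_add_nonneg E R I α β, le_rfl]
    _ = ∑ z ∈ R α, (∑ β, outShare E (I β) z + ∑ β, outShare (flip E) (I β) z) := by
        rw [sum_comm]
        simp only [sum_add_distrib]
    _ ≤ ∑ _z ∈ R α, (2 : ℝ) := sum_le_sum fun z _ => by
        linarith [sum_outShare_le_one (E := E) hI z univ,
          sum_outShare_le_one (E := flip E) hI z univ]
    _ = 2 * #(R α) := by rw [sum_const, nsmul_eq_mul, mul_comm]

lemma isSparse_of_sum_crossShare_le [Fintype κ] {g : κ ↪ ι}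
    (h : ∀ α, ∑ β, crossShare E R I (g α) (g β) ≤ 1 / 4) : IsSparse E (R ∘ g) (I ∘ g) := by
  refine fun α z hz T hT => four_mul_sum_card_outNbrs_le ?_
  calc ∑ β ∈ T, outShare E (I (g β)) z
      ≤ ∑ β ∈ T, crossShare E R I (g α) (g β) := sum_le_sum fun β hβ =>
        outShare_le_crossShare (g.injective.ne (ne_of_mem_of_not_mem hβ hT).symm) hz
    _ ≤ ∑ β, crossShare E R I (g α) (g β) :=
        sum_le_sum_of_subset_of_nonneg (subset_univ T) fun _ _ _ => crossShare_nonneg _ _ _ _ _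
    _ ≤ 1 / 4 := h α

lemma exists_embedding_isSparse [Fintype ι] [Fintype κ] [Nonempty κ]
    (hI : ∀ α β, α ≠ β → Disjoint (I α) (I β)) {w : ℕ} (hR : ∀ α, #(R α) ≤ w) (hw : 1 ≤ w)
    (hι : 33 * w * Fintype.card κ ≤ Fintype.card ι) (E : V → V → Prop) :
    ∃ g : κ ↪ ι, IsSparse E (R ∘ g) (I ∘ g) ∧ IsSparse (flip E) (R ∘ g) (I ∘ g) := by
  have hκ : 1 ≤ Fintype.card κ := Fintype.card_pos
  have hιR : (33 : ℝ) * w * Fintype.card κ ≤ Fintype.card ι := by exact_mod_cast hι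
  have hwκ : (1 : ℝ) ≤ w * Fintype.card κ := by exact_mod_cast Nat.mul_pos hw hκ
  have hsum (α : ι) : ∑ β, crossShare E R I α β ≤ 2 * w :=
    (sum_crossShare_le hI α).trans (by gcongr; exact hR α)
  obtain ⟨S, -, hcard, hS⟩ := exists_sparse_subset (U := univ) (crossShare_self E R I)
    (crossShare_nonneg E R I) (θ := 1 / 4) (by norm_num) (fun α _ => hsum α) hκ
    (by rw [card_univ]; nlinarith) (by rw [card_univ]; nlinarith)
  let e : κ ≃ S := Fintype.equivOfCardEq (by rw [Fintype.card_coe, hcard])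
  let g : κ ↪ ι := e.toEmbedding.trans (Function.Embedding.subtype _)
  have hg (α : κ) : ∑ β, crossShare E R I (g α) (g β) ≤ 1 / 4 := by
    refine le_of_eq_of_le ?_ (hS (g α) (e α).2)
    rw [← sum_coe_sort S]
    exact e.sum_comp fun β : S => crossShare E R I (g α) β
  refine ⟨g, isSparse_of_sum_crossShare_le hg, isSparse_of_sum_crossShare_le ?_⟩
  simpa only [crossShare_flip] using hg

end Sparse

section Attachable

variable {V : Type*} [Fintype V] [DecidableEq V]

/-- The vertices outside the exceptional set and outside all gadget paths. -/
def freeVerts {α : Type*} [Fintype α] (Exc : Finset V) (G : α → Gadget V) : Finset V :=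
  univ \ (Exc ∪ univ.biUnion fun a => (G a).path)

variable {ι κ : Type*} [Fintype ι] [Fintype κ] {E F : V → V → Prop} {k m K s dP dM : ℕ}
  {Exc : Finset V}

lemma notMem_exc_of_mem_freeVerts {G : κ → Gadget V} {v : V} (hv : v ∈ freeVerts Exc G) :
    v ∉ Exc := fun h =>
  (mem_sdiff.1 hv).2 (mem_union_left _ h)

lemma disjoint_path_freeVerts (Exc : Finset V) (G : κ → Gadget V) (α : κ) :
    Disjoint (G α).path (freeVerts Exc G) :=
  (disjoint_sdiff.mono_left subset_union_right).mono_left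
    (subset_biUnion_of_mem (fun α => (G α).path) (mem_univ α))

lemma card_outNbrs_univ_le (F : V → V → Prop) (Exc : Finset V) (G : κ → Gadget V) (v : V) :
    #(outNbrs F univ v) ≤ #Exc + #(outNbrs F (univ.biUnion fun α => (G α).path) v) +
      #(outNbrs F (freeVerts Exc G) v) := by
  have hsub : outNbrs F univ v ⊆ Exc ∪ outNbrs F (univ.biUnion fun α => (G α).path) v ∪
      outNbrs F (freeVerts Exc G) v := fun u hu => by
    simp only [freeVerts, mem_union, mem_outNbrs, mem_sdiff, mem_univ, true_and] at hu ⊢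
    tauto
  calc _ ≤ _ := (card_le_card hsub).trans (card_union_le _ _)
    _ ≤ _ := Nat.add_le_add_right (card_union_le _ _) _

lemma card_outNbrs_univ_le_of_path_le {G : κ → Gadget V} {v : V} {r : ℕ}
    (h : ∀ α, #(outNbrs F (G α).path v) ≤ r) :
    #(outNbrs F univ v) ≤ #Exc + r * Fintype.card κ + #(outNbrs F (freeVerts Exc G) v) := by
  have hpaths : #(outNbrs F (univ.biUnion fun α => (G α).path) v) ≤ r * Fintype.card κ := by
    have hsub : outNbrs F (univ.biUnion fun α => (G α).path) v ⊆
        univ.biUnion fun α => outNbrs F (G α).path v := fun u hu => by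
      simp only [mem_outNbrs, mem_biUnion, mem_univ, true_and] at hu ⊢
      exact hu.1.imp fun α hα => ⟨hα, hu.2⟩
    calc _ ≤ _ := (card_le_card hsub).trans card_biUnion_le
      _ ≤ #(univ : Finset κ) • r := sum_le_card_nsmul _ _ r fun α _ => h α
      _ = r * Fintype.card κ := by rw [card_univ, smul_eq_mul, mul_comm]
  exact (card_outNbrs_univ_le F Exc G v).trans (by gcongr)

lemma le_card_outNbrs_freeVerts_or {G : ι × κ → Gadget V}
    (hs : IsSparse F (fun α => (G α).body) fun α => (G α).path) (hK : 2 * (#Exc + k + m) ≤ K)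
    (i : ι) {z : V} (hz : z ∈ univ.biUnion fun j => (G (i, j)).body)
    (hdeg : K ≤ #(outNbrs F univ z)) :
    m ≤ #(outNbrs F (freeVerts Exc G) z) ∨
      k < #(outNbrs F (univ.biUnion fun j => (G (i, j)).path) z) := by
  classical
  refine or_iff_not_imp_right.2 fun hle => ?_
  obtain ⟨j, -, hj⟩ := mem_biUnion.1 hz
  have hsub : outNbrs F (univ.biUnion fun α => (G α).path) z ⊆
      outNbrs F (univ.biUnion fun j => (G (i, j)).path) z ∪
        (univ.erase (i, j)).biUnion fun β => outNbrs F (G β).path z := fun u hu => by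
    obtain ⟨hu, hzu⟩ := mem_outNbrs.1 hu
    obtain ⟨β, -, hβ⟩ := mem_biUnion.1 hu
    rcases eq_or_ne β (i, j) with rfl | hne
    · exact mem_union_left _ (mem_outNbrs.2 ⟨mem_biUnion.2 ⟨j, mem_univ j, hβ⟩, hzu⟩)
    · exact mem_union_right _
        (mem_biUnion.2 ⟨β, mem_erase.2 ⟨hne, mem_univ β⟩, mem_outNbrs.2 ⟨hβ, hzu⟩⟩)
  have hpaths := (card_le_card hsub).trans
    ((card_union_le _ _).trans (Nat.add_le_add_left card_biUnion_le _))
  have hother := hs (i, j) z hj (univ.erase (i, j)) (notMem_erase _ _)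
  have htotal := card_outNbrs_univ_le F Exc G z
  lia

namespace DominatingFamily

variable {G : κ → Gadget V}

lemma card_not_sendsMost_le (h : DominatingFamily E s Exc G dP dM)
    (hκ : Fintype.card κ ≤ 4 * k) {D : Finset V} (hD : D ⊆ Excᶜ)
    (hmiss : ∀ v ∈ D, ¬ (gadgetAnchor E k G).SendsMost v) : #D * 2 ^ s ≤ 4 * dP :=
  card_not_missesFew_le hκ (fun α D' hD' => h.card_missOut_le α D' (hD'.trans hD)) hmiss

open Classical in
lemma four_mul_card_not_sendsMost_le (h : DominatingFamily E s Exc G dP dM)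
    (hκ : Fintype.card κ ≤ 4 * k) (hs : 4 ≤ s) {D : Finset V} (hD : D ⊆ Excᶜ) :
    4 * #{v ∈ D | ¬ (gadgetAnchor E k G).SendsMost v} ≤ dP := by
  have hmiss := h.card_not_sendsMost_le (D := {v ∈ D | ¬ (gadgetAnchor E k G).SendsMost v}) hκ
    ((filter_subset _ _).trans hD) fun v hv => (mem_filter.1 hv).2
  have hpow : 2 ^ 4 ≤ 2 ^ s := Nat.pow_le_pow_right two_pos hs
  nlinarith

open Classical in
lemma four_mul_card_not_receivesMost_le (h : DominatingFamily E s Exc G dP dM)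
    (hκ : Fintype.card κ ≤ 4 * k) (hs : 4 ≤ s) {D : Finset V} (hD : D ⊆ Excᶜ) :
    4 * #{v ∈ D | ¬ (gadgetAnchor E k G).ReceivesMost v} ≤ dM :=
  h.reverse.four_mul_card_not_sendsMost_le hκ hs hD

end DominatingFamily

namespace DominatingFamily

variable {G : ι × κ → Gadget V}

omit [Fintype ι] [Fintype κ] in
lemma comp_mk (h : DominatingFamily E s Exc G dP dM) (i : ι) :
    DominatingFamily E s Exc (fun j => G (i, j)) dP dM :=
  h.comp (Function.Embedding.sectR i κ)

open Classical in
lemma le_card_sendsMost_or (h : DominatingFamily E s Exc G dP dM)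
    (hκ : Fintype.card κ ≤ 4 * k) (hs : 4 ≤ s)
    (hP : 2 * (#Exc + 3 * Fintype.card (ι × κ) + m) ≤ dP) (i : ι) {v : V} (hv : v ∉ Exc) :
    (gadgetAnchor E k fun j => G (i, j)).SendsHubs v ∨
      m ≤ #{u ∈ freeVerts Exc G | E v u ∧ (gadgetAnchor E k fun j => G (i, j)).SendsMost u} := by
  refine (h.adj_inHub_or v hv).imp (fun hall j => hall (i, j)) fun hfew => ?_
  have hsub : outNbrs E (freeVerts Exc G) v ⊆
      {u ∈ freeVerts Exc G | E v u ∧ (gadgetAnchor E k fun j => G (i, j)).SendsMost u} ∪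
        {u ∈ freeVerts Exc G | ¬ (gadgetAnchor E k fun j => G (i, j)).SendsMost u} :=
    fun u hu => by
      simp only [mem_outNbrs, mem_union, mem_filter] at hu ⊢
      tauto
  have hcard := (card_le_card hsub).trans (card_union_le _ _)
  have hmiss := (h.comp_mk i).four_mul_card_not_sendsMost_le hκ hs
    fun u (hu : u ∈ freeVerts Exc G) => mem_compl.2 (notMem_exc_of_mem_freeVerts hu)
  have htotal := card_outNbrs_univ_le_of_path_le (Exc := Exc) hfew
  have hdeg := h.le_outDegree v hv
  lia

open Classical in
lemma le_card_sendsMost_receivesMost_or (h : DominatingFamily E s Exc G dP dM)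
    (hκ : Fintype.card κ ≤ 4 * k) (hs : 4 ≤ s)
    (hP : 2 * (#Exc + 3 * Fintype.card (ι × κ) + m) ≤ dP) (hPM : dP ≤ dM) (i : ι) {v : V}
    (hv : v ∉ Exc) :
    (gadgetAnchor E k fun j => G (i, j)).ReceivesHubs v ∨
      m ≤ #{u ∈ freeVerts Exc G | E u v ∧ (gadgetAnchor E k fun j => G (i, j)).SendsMost u ∧
        (gadgetAnchor E k fun j => G (i, j)).ReceivesMost u} := by
  refine (h.outHub_adj_or v hv).imp (fun hall j => hall (i, j)) fun hfew => ?_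
  have hsub : outNbrs (flip E) (freeVerts Exc G) v ⊆
      {u ∈ freeVerts Exc G | E u v ∧ (gadgetAnchor E k fun j => G (i, j)).SendsMost u ∧
        (gadgetAnchor E k fun j => G (i, j)).ReceivesMost u} ∪
      ({u ∈ freeVerts Exc G | ¬ (gadgetAnchor E k fun j => G (i, j)).SendsMost u} ∪
        {u ∈ freeVerts Exc G | ¬ (gadgetAnchor E k fun j => G (i, j)).ReceivesMost u}) :=
    fun u hu => by
      simp only [mem_outNbrs, mem_union, mem_filter, flip] at hu ⊢
      tauto
  have hcard := (card_le_card hsub).trans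
    ((card_union_le _ _).trans (Nat.add_le_add_left (card_union_le _ _) _))
  have hD : freeVerts Exc G ⊆ Excᶜ := fun u hu => mem_compl.2 (notMem_exc_of_mem_freeVerts hu)
  have hmissOut := (h.comp_mk i).four_mul_card_not_sendsMost_le hκ hs hD
  have hmissIn := (h.comp_mk i).four_mul_card_not_receivesMost_le hκ hs hD
  have htotal := card_outNbrs_univ_le_of_path_le (Exc := Exc) hfew
  have hdeg := h.le_inDegree v hv
  lia

lemma isAttachable (h : DominatingFamily E s Exc G dP dM)
    (hsOut : IsSparse E (fun α => (G α).body) fun α => (G α).path)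
    (hsIn : IsSparse (flip E) (fun α => (G α).body) fun α => (G α).path)
    (hκ : Fintype.card κ = 4 * k) (hs : 4 ≤ s)
    (hK : 2 * (#Exc + 3 * Fintype.card (ι × κ) + m) ≤ K) (hKP : K ≤ dP) (hPM : dP ≤ dM)
    (hout : ∀ v, K ≤ #(outNbrs E univ v)) (hin : ∀ v, K ≤ #(outNbrs (flip E) univ v)) (i : ι) :
    IsAttachable E k m (gadgetAnchor E k fun j => G (i, j)) (freeVerts Exc G) := by
  have hk : k ≤ 3 * Fintype.card (ι × κ) := by
    have hι : 1 ≤ Fintype.card ι := Fintype.card_pos_iff.2 ⟨i⟩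
    rw [Fintype.card_prod, hκ]
    nlinarith
  exact
    { out_or := fun v hv => .inr (h.le_card_sendsMost_or hκ.le hs (hK.trans hKP) i
        (notMem_exc_of_mem_freeVerts hv))
      in_or := fun v hv => .inr (h.le_card_sendsMost_receivesMost_or hκ.le hs (hK.trans hKP) hPM i
        (notMem_exc_of_mem_freeVerts hv))
      le_out_or := fun z hz => le_card_outNbrs_freeVerts_or hsOut (by lia) i hz (hout z)
      le_in_or := fun z hz => le_card_outNbrs_freeVerts_or hsIn (by lia) i hz (hin z) }

end DominatingFamily

end Attachable

section RandomColouring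

variable {V ι : Type*} {E : V → V → Prop} {k a : ℕ}

lemma exists_card_le_of_forall_card_le {α : Type*} [Fintype α] [Nonempty α] [Fintype ι]
    (bad : ι → α → Prop) [∀ i x, Decidable (bad i x)] {p : ℝ}
    (h : ∀ i, (#{x | bad i x} : ℝ) ≤ p * Fintype.card α) :
    ∃ x, (#{i | bad i x} : ℝ) ≤ p * Fintype.card ι := by
  have hswap : ∑ x, (#{i | bad i x} : ℝ) = ∑ i, (#{x | bad i x} : ℝ) := by
    exact_mod_cast (sum_card_bipartiteAbove_eq_sum_card_bipartiteBelow (s := (univ : Finset α))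
      (t := (univ : Finset ι)) fun x i => bad i x)
  have hsum : ∑ x, (#{i | bad i x} : ℝ) ≤ ∑ _x : α, p * Fintype.card ι := by
    rw [hswap]
    refine (sum_le_card_nsmul univ _ _ fun i _ => h i).trans_eq ?_
    simp only [sum_const, card_univ, nsmul_eq_mul]
    ring
  exact (exists_le_of_sum_le univ_nonempty hsum).imp fun x hx => hx.2

open Classical in
lemma exists_half_isAttached [Finite V] [Fintype ι] [Nonempty ι] (hE : IsTournament E)
    (ha : 0 < a) (hka : k ≤ a) {Φ : ι → Anchor V} {U : Finset V}
    (h : ∀ i, IsAttachable E k (8 * a * Fintype.card ι) (Φ i) U)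
    (hbody : ∀ i, (162 : ℝ) * #(Φ i).body * (1 / 8) ^ a ≤ 1 / 2) :
    ∃ (S : Finset ι) (W : ι → Finset V), Fintype.card ι ≤ 2 * #S ∧
      (∀ i ∈ S, W i ⊆ U ∧ IsAttached E k (Φ i) (W i)) ∧
      ∀ i ∈ S, ∀ j ∈ S, i ≠ j → Disjoint (W i) (W j) := by
  have := Fintype.ofFinite V
  obtain ⟨f, hf⟩ := exists_card_le_of_forall_card_le (p := 1 / 2)
    (fun i (f : V → ι) => ¬ ∃ W ⊆ U, (∀ w ∈ W, f w = i) ∧ IsAttached E k (Φ i) W)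
    fun i => (card_not_exists_isAttached_le hE ha hka (h i) i).trans
      (by rw [card_univ]; gcongr; exact hbody i)
  set S : Finset ι := {i | ∃ W ⊆ U, (∀ w ∈ W, f w = i) ∧ IsAttached E k (Φ i) W}
  have hcard : Fintype.card ι ≤ 2 * #S := by
    have hadd : (#S : ℝ) + #{i | ¬ ∃ W ⊆ U, (∀ w ∈ W, f w = i) ∧ IsAttached E k (Φ i) W} =
        Fintype.card ι := by
      exact_mod_cast card_filter_add_card_filter_not (s := (univ : Finset ι)) _
    have : (Fintype.card ι : ℝ) ≤ 2 * #S := by linarith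
    exact_mod_cast this
  have hS (i : ι) (hi : i ∈ S) := (mem_filter.1 hi).2
  choose! W hWU hWf hW using hS
  refine ⟨S, W, hcard, fun i hi => ⟨hWU i hi, hW i hi⟩, fun i hi j hj hne => ?_⟩
  exact disjoint_left.2 fun x hxi hxj => hne ((hWf i hi x hxi).symm.trans (hWf j hj x hxj))

lemma card_filter_lt_card_mul_le [Fintype V] {S : Finset ι} {C : ι → Finset V}
    (hC : ∀ i ∈ S, ∀ j ∈ S, i ≠ j → Disjoint (C i) (C j)) (m : ℕ) :
    #{i ∈ S | Fintype.card V < #(C i) * m} ≤ m := by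
  classical
  set B : Finset ι := {i ∈ S | Fintype.card V < #(C i) * m}
  have hsum : ∑ i ∈ B, #(C i) ≤ Fintype.card V := by
    rw [← card_biUnion fun i hi j hj hne => hC i (mem_filter.1 hi).1 j (mem_filter.1 hj).1 hne]
    exact card_le_univ _
  have hB : #B * (Fintype.card V + 1) ≤ Fintype.card V * m :=
    calc #B * (Fintype.card V + 1) ≤ ∑ i ∈ B, #(C i) * m :=
          card_nsmul_le_sum B (fun i => #(C i) * m) _ fun i hi => (mem_filter.1 hi).2
      _ = (∑ i ∈ B, #(C i)) * m := (sum_mul _ _ _).symm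
      _ ≤ Fintype.card V * m := Nat.mul_le_mul_right m hsum
  by_contra! hlt
  nlinarith

end RandomColouring

section CoreSystem

variable {V : Type*} [Fintype V] [DecidableEq V]

/-- Disjoint strongly `k`-connected sets `C i`, each of size at most `|V| / m`, such that outside
an exceptional set only few vertices (a `2 ^ (-s)` fraction of `dP` and `dM`, which bound the
degrees there) have at most `k` out-neighbours or at most `k` in-neighbours in a given `C i`. -/
structure CoreSystem {ι : Type*} (E : V → V → Prop) (k m s : ℕ) (Exc : Finset V)
    (C : ι → Finset V) (dP dM : ℕ) : Prop where
  disjoint : ∀ i j, i ≠ j → Disjoint (C i) (C j)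
  stronglyKConnectedOn : ∀ i, StronglyKConnectedOn E k (C i)
  two_mul_add_two_le_card : ∀ i, 2 * k + 2 ≤ #(C i)
  card_mul_le : ∀ i, #(C i) * m ≤ Fintype.card V
  card_fewOut_le : ∀ i, ∀ D ⊆ Excᶜ, (∀ v ∈ D, #(outNbrs E (C i) v) ≤ k) → #D * 2 ^ s ≤ dP
  card_fewIn_le : ∀ i, ∀ D ⊆ Excᶜ, (∀ v ∈ D, #(outNbrs (flip E) (C i) v) ≤ k) → #D * 2 ^ s ≤ dM
  le_outDegree : ∀ v ∉ Exc, dP ≤ #(outNbrs E univ v)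
  le_inDegree : ∀ v ∉ Exc, dM ≤ #(outNbrs (flip E) univ v)

variable {ι κ : Type*} [Fintype κ] {E : V → V → Prop} {k m s dP dM : ℕ} {Exc : Finset V}

lemma CoreSystem.reverse {C : ι → Finset V} (h : CoreSystem E k m s Exc C dP dM) :
    CoreSystem (flip E) k m s Exc C dM dP where
  disjoint := h.disjoint
  stronglyKConnectedOn i := (h.stronglyKConnectedOn i).reverse
  two_mul_add_two_le_card := h.two_mul_add_two_le_card
  card_mul_le := h.card_mul_le
  card_fewOut_le := h.card_fewIn_le
  card_fewIn_le := h.card_fewOut_le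
  le_outDegree := h.le_inDegree
  le_inDegree := h.le_outDegree

lemma mul_mul_one_div_eight_pow_le (hk : 1 ≤ k) :
    (162 : ℝ) * (352 * k : ℕ) * (1 / 8) ^ (100 * k) ≤ 1 / 2 := by
  have hk2 : (k : ℝ) ≤ 2 ^ k := by exact_mod_cast Nat.lt_two_pow_self.le
  have hpow : (1 / 8 : ℝ) ^ (100 * k) ≤ (1 / 8) ^ 50 * (1 / 2) ^ k :=
    calc (1 / 8 : ℝ) ^ (100 * k) ≤ (1 / 8) ^ (50 + k) :=
          pow_le_pow_of_le_one (by norm_num) (by norm_num) (by lia)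
      _ = (1 / 8) ^ 50 * (1 / 8) ^ k := pow_add _ _ _
      _ ≤ (1 / 8) ^ 50 * (1 / 2) ^ k := by gcongr; norm_num
  calc (162 : ℝ) * (352 * k : ℕ) * (1 / 8) ^ (100 * k)
      ≤ 162 * (352 * 2 ^ k) * ((1 / 8) ^ 50 * (1 / 2) ^ k) := by push_cast; gcongr
    _ = 162 * 352 * (1 / 8) ^ 50 * (2 * (1 / 2)) ^ k := by rw [mul_pow]; ring
    _ ≤ 1 / 2 := by norm_num

namespace DominatingFamily

lemma card_fewOut_le {G : κ → Gadget V} (h : DominatingFamily E (s + 2) Exc G dP dM)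
    (hκ : Fintype.card κ = 4 * k) (hk : 1 ≤ k) {W D : Finset V} (hD : D ⊆ Excᶜ)
    (hfew : ∀ v ∈ D, #(outNbrs E (coreVerts G W) v) ≤ k) : #D * 2 ^ s ≤ dP := by
  have hcard := h.card_not_sendsMost_le hκ.le hD fun v hv hmiss => by
    have hle := MissesFew.card_le (fun α β hne => (h.disjoint_body α β hne).mono
      (h.inDom_subset α) (h.inDom_subset β)) hmiss
      fun α => (h.inDom_subset α).trans (body_subset_coreVerts G W α)
    have := hfew v hv
    lia
  rw [pow_add] at hcard
  lia

lemma card_fewIn_le {G : κ → Gadget V} (h : DominatingFamily E (s + 2) Exc G dP dM)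
    (hκ : Fintype.card κ = 4 * k) (hk : 1 ≤ k) {W D : Finset V} (hD : D ⊆ Excᶜ)
    (hfew : ∀ v ∈ D, #(outNbrs (flip E) (coreVerts G W) v) ≤ k) : #D * 2 ^ s ≤ dM :=
  h.reverse.card_fewOut_le hκ hk hD hfew

variable [Fintype ι] {G : ι × κ → Gadget V}

lemma disjoint_coreVerts (h : DominatingFamily E s Exc G dP dM) {i j : ι} (hne : i ≠ j)
    {W W' : Finset V} (hW : W ⊆ freeVerts Exc G) (hW' : W' ⊆ freeVerts Exc G)
    (hWW' : Disjoint W W') :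
    Disjoint (coreVerts (fun l => G (i, l)) W) (coreVerts (fun l => G (j, l)) W') := by
  have hne' (l l' : κ) : (i, l) ≠ (j, l') := fun hij => hne (congrArg Prod.fst hij)
  have hbody (α : ι × κ) : Disjoint (G α).body (freeVerts Exc G) :=
    disjoint_left.2 fun x hx hx' => notMem_exc_of_mem_freeVerts hx' (h.body_subset α hx)
  simp only [coreVerts, disjoint_union_left, disjoint_union_right, disjoint_biUnion_left,
    disjoint_biUnion_right, mem_univ, forall_const]
  exact ⟨⟨fun l' => ⟨⟨fun l => h.disjoint_body _ _ (hne' l l'),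
        fun l => (h.disjoint_body_path _ _).symm⟩, ((hbody _).mono_right hW).symm⟩,
      fun l' => ⟨⟨fun l => h.disjoint_body_path _ _, fun l => h.disjoint_path _ _ (hne' l l')⟩,
        ((disjoint_path_freeVerts Exc G _).mono_right hW).symm⟩⟩,
    ⟨fun l => (hbody _).mono_right hW', fun l => (disjoint_path_freeVerts Exc G _).mono_right hW'⟩,
    hWW'⟩

lemma coreSystem {τ : Type*} (h : DominatingFamily E (s + 2) Exc G dP dM) (hE : IsTournament E)
    (hκ : Fintype.card κ = 4 * k) (hk : 1 ≤ k) (e : τ ↪ ι) {W : ι → Finset V}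
    (hW : ∀ i, W (e i) ⊆ freeVerts Exc G ∧
      IsAttached E k (gadgetAnchor E k fun j => G (e i, j)) (W (e i)))
    (hdisj : ∀ i j, i ≠ j → Disjoint (W (e i)) (W (e j)))
    (hcard : ∀ i, #(coreVerts (fun j => G (e i, j)) (W (e i))) * m ≤ Fintype.card V) :
    CoreSystem E k m s Exc (fun i => coreVerts (fun j => G (e i, j)) (W (e i))) dP dM := by
  have hcore (i : τ) : IsCore E k (fun j => G (e i, j)) (W (e i)) :=
    ⟨(h.comp_mk (e i)).toGadgetFamily, (hW i).2⟩
  have : Nonempty κ := Fintype.card_pos_iff.1 (by lia)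
  exact
    { disjoint := fun i j hne =>
        h.disjoint_coreVerts (e.injective.ne hne) (hW i).1 (hW j).1 (hdisj i j hne)
      stronglyKConnectedOn := fun i => (hcore i).stronglyKConnectedOn hE (by lia)
      two_mul_add_two_le_card := fun i => (hcore i).two_mul_add_two_le_card hE
      card_mul_le := hcard
      card_fewOut_le := fun i _ => (h.comp_mk (e i)).card_fewOut_le hκ hk
      card_fewIn_le := fun i _ => (h.comp_mk (e i)).card_fewIn_le hκ hk
      le_outDegree := h.le_outDegree
      le_inDegree := h.le_inDegree }

omit [Fintype ι] in
lemma card_body_gadgetAnchor_le (h : DominatingFamily E s Exc G dP dM) (i : ι) :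
    #(gadgetAnchor E k fun j => G (i, j)).body ≤ Fintype.card κ * (2 * s + 8) :=
  card_biUnion_le.trans (sum_le_card_nsmul _ _ _ fun j _ => h.card_body_le (i, j))

lemma exists_coreSystem {M t K : ℕ} (h : DominatingFamily E 40 Exc G dP dM) (hE : IsTournament E)
    (hk : 1 ≤ k) (ht : 1 ≤ t) (hM : 1 ≤ M) (hι : Fintype.card ι = 4 * (M * t))
    (hκ : Fintype.card κ = 4 * k) (hsOut : IsSparse E (fun α => (G α).body) fun α => (G α).path)
    (hsIn : IsSparse (flip E) (fun α => (G α).body) fun α => (G α).path)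
    (hK : 2 * #Exc + 16000 * (k * (M * t)) ≤ K) (hKP : K ≤ dP) (hPM : dP ≤ dM)
    (hout : ∀ v, K ≤ #(outNbrs E univ v)) (hin : ∀ v, K ≤ #(outNbrs (flip E) univ v)) :
    ∃ C : Fin t → Finset V, CoreSystem E k (M * t) 38 Exc C dP dM := by
  have : Nonempty ι := Fintype.card_pos_iff.1 (by rw [hι]; positivity)
  have hbody (i : ι) :
      (162 : ℝ) * #(gadgetAnchor E k fun j => G (i, j)).body * (1 / 8) ^ (100 * k) ≤ 1 / 2 := by
    have hle : #(gadgetAnchor E k fun j => G (i, j)).body ≤ 352 * k :=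
      (h.card_body_gadgetAnchor_le i).trans_eq (by rw [hκ]; ring)
    exact (by gcongr : _ ≤ _).trans (mul_mul_one_div_eight_pow_le hk)
  obtain ⟨S, W, hS, hW, hWdisj⟩ := exists_half_isAttached hE (a := 100 * k) (by lia) (by lia)
    (h.isAttachable hsOut hsIn hκ (by norm_num) (by
      rw [Fintype.card_prod, hι, hκ]
      nlinarith) hKP hPM hout hin) hbody
  have hdisj : ∀ i ∈ S, ∀ j ∈ S, i ≠ j → Disjoint (coreVerts (fun l => G (i, l)) (W i))
      (coreVerts (fun l => G (j, l)) (W j)) := fun i hi j hj hne =>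
    h.disjoint_coreVerts hne (hW i hi).1 (hW j hj).1 (hWdisj i hi j hj hne)
  have hlarge := card_filter_lt_card_mul_le hdisj (M * t)
  have hsplit := card_filter_add_card_filter_not (s := S) fun i =>
    Fintype.card V < #(coreVerts (fun l => G (i, l)) (W i)) * (M * t)
  set small : Finset ι :=
    {i ∈ S | ¬ Fintype.card V < #(coreVerts (fun l => G (i, l)) (W i)) * (M * t)}
  have htM : t ≤ M * t := Nat.le_mul_of_pos_left _ hM
  obtain ⟨e⟩ : Nonempty (Fin t ↪ small) :=
    Function.Embedding.nonempty_of_card_le (by simp only [Fintype.card_fin, Fintype.card_coe]; lia)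
  have he (i : Fin t) := mem_filter.1 (e i).2
  exact ⟨_, h.coreSystem hE hκ hk (e.trans (Function.Embedding.subtype _))
    (fun i => hW _ (he i).1)
    (fun i j hne => hWdisj _ (he i).1 _ (he j).1 fun h => hne (e.injective (Subtype.ext h)))
    fun i => not_lt.1 (he i).2⟩

end DominatingFamily

end CoreSystem

section Shares

variable {V κ : Type*} [Fintype κ] [DecidableEq κ]

lemma card_div_le_share {Ω J : Finset κ} (h : #J ≤ 2 * #(Ω ∩ J)) :
    (#J : ℝ) / (2 * Fintype.card κ) ≤ share Ω J := by
  have h' : (#J : ℝ) ≤ 2 * #(Ω ∩ J) := by exact_mod_cast h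
  rcases Ω.eq_empty_or_nonempty with rfl | hΩ
  · have hJ : #J = 0 := by simpa using h
    simp [hJ, share_nonneg]
  · have hpos : (0 : ℝ) < #Ω := by exact_mod_cast hΩ.card_pos
    have hle : (#Ω : ℝ) ≤ Fintype.card κ := by exact_mod_cast card_le_univ Ω
    have hκ := hpos.trans_le hle
    rw [share, div_le_div_iff₀ (by positivity) hpos]
    nlinarith [mul_le_mul h' hle hpos.le (by positivity)]

lemma half_le_share {Ω J : Finset κ} (hΩ : Ω.Nonempty)
    (h : 2 * Fintype.card κ ≤ #Ω + 2 * #J) : 1 / 2 ≤ share Ω J := by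
  have hinter := card_union_add_card_inter Ω J
  have hunion := card_le_univ (Ω ∪ J)
  have hhalf : (#Ω : ℝ) ≤ 2 * #(Ω ∩ J) := by exact_mod_cast (by omega : #Ω ≤ 2 * #(Ω ∩ J))
  have hpos : (0 : ℝ) < #Ω := by exact_mod_cast hΩ.card_pos
  rw [share, le_div_iff₀ hpos]
  linarith

lemma sub_card_poor_mul_le_sum_share {N L : Finset V} (hN : N ⊆ L) (Λ : V → Finset κ)
    (J : Finset κ) :
    ((#N : ℝ) - #{v ∈ L | 2 * #(Λ v ∩ J) < #J}) * (#J / (2 * Fintype.card κ)) ≤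
      ∑ v ∈ N, share (Λ v) J := by
  have hsplit := card_filter_add_card_filter_not (s := N) fun v => 2 * #(Λ v ∩ J) < #J
  have hpoor : #{v ∈ N | 2 * #(Λ v ∩ J) < #J} ≤ #{v ∈ L | 2 * #(Λ v ∩ J) < #J} :=
    card_le_card (filter_subset_filter _ hN)
  have hrich : (#N : ℝ) ≤
      #{v ∈ N | ¬ 2 * #(Λ v ∩ J) < #J} + #{v ∈ L | 2 * #(Λ v ∩ J) < #J} := by
    exact_mod_cast (by omega : #N ≤ _ + _)
  calc ((#N : ℝ) - #{v ∈ L | 2 * #(Λ v ∩ J) < #J}) * (#J / (2 * Fintype.card κ))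
      ≤ #{v ∈ N | ¬ 2 * #(Λ v ∩ J) < #J} * (#J / (2 * Fintype.card κ)) :=
        mul_le_mul_of_nonneg_right (by linarith) (by positivity)
    _ ≤ ∑ v ∈ N with ¬ 2 * #(Λ v ∩ J) < #J, share (Λ v) J := by
        rw [← nsmul_eq_mul]
        exact card_nsmul_le_sum _ _ _ fun v hv => card_div_le_share (not_lt.1 (mem_filter.1 hv).2)
    _ ≤ ∑ v ∈ N, share (Λ v) J :=
        sum_le_sum_of_subset_of_nonneg (filter_subset _ _) fun v _ _ => share_nonneg _ _

end Shares

section Levels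

variable {V κ : Type*} [Fintype V] [DecidableEq V] [Fintype κ]

/-- The parts `i` such that `v` has more than `k` out-neighbours and more than `k` in-neighbours in
`C i`, so that `v` can be added to `C i` without destroying strong `k`-connectedness. -/
noncomputable def robustParts (E : V → V → Prop) (k : ℕ) (C : κ → Finset V) (v : V) : Finset κ :=
  {i | k < #(outNbrs E (C i) v) ∧ k < #(outNbrs (flip E) (C i) v)}

/-- The parts in which `v` has at most `k` out-neighbours. -/
noncomputable def fewOutParts (E : V → V → Prop) (k : ℕ) (C : κ → Finset V) (v : V) : Finset κ :=
  {i | #(outNbrs E (C i) v) ≤ k}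

/-- The vertices in none of the sets `C i`. -/
def rest (C : κ → Finset V) : Finset V := univ \ univ.biUnion C

/-- The vertices outside the sets `C i` of level `l`, with respect to a level function `lv`. -/
def level (C : κ → Finset V) (lv : V → ℕ) (l : ℕ) : Finset V := {w ∈ rest C | lv w = l}

variable [DecidableEq κ]

/-- The set `C i` together with the vertices of level below `j` which `g` assigns to `i`. -/
def grownPart (C : κ → Finset V) (lv : V → ℕ) (g : V → κ) (j : ℕ) (i : κ) : Finset V :=
  C i ∪ {w ∈ rest C | lv w < j ∧ g w = i}

/-- The parts to which `v` may be assigned once all vertices of lower level have been assigned. -/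
noncomputable def admissible (E : V → V → Prop) (k : ℕ) (C : κ → Finset V) (lv : V → ℕ) (g : V → κ)
    (v : V) : Finset κ :=
  robustParts E k (grownPart C lv g (lv v)) v

variable {E : V → V → Prop} {k : ℕ} {C : κ → Finset V} {lv : V → ℕ} {g g' : V → κ} {v : V}

omit [Fintype V] [DecidableEq V] [DecidableEq κ] in
lemma mem_robustParts {i : κ} : i ∈ robustParts E k C v ↔
    k < #(outNbrs E (C i) v) ∧ k < #(outNbrs (flip E) (C i) v) := by
  simp only [robustParts, mem_filter, mem_univ, true_and]

omit [Fintype V] [DecidableEq V] [DecidableEq κ] in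
lemma mem_fewOutParts {i : κ} : i ∈ fewOutParts E k C v ↔ #(outNbrs E (C i) v) ≤ k := by
  simp only [fewOutParts, mem_filter, mem_univ, true_and]

omit [DecidableEq κ] in
lemma mem_rest : v ∈ rest C ↔ ∀ i, v ∉ C i := by
  simp only [rest, mem_sdiff, mem_univ, mem_biUnion, true_and, not_exists]

omit [DecidableEq κ] in
lemma mem_level {l : ℕ} : v ∈ level C lv l ↔ v ∈ rest C ∧ lv v = l := mem_filter

lemma mem_grownPart {j : ℕ} {i : κ} :
    v ∈ grownPart C lv g j i ↔ v ∈ C i ∨ v ∈ rest C ∧ lv v < j ∧ g v = i := by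
  rw [grownPart, mem_union, mem_filter]

omit [Fintype V] [DecidableEq V] [DecidableEq κ] in
lemma robustParts_mono {C' : κ → Finset V} (h : ∀ i, C i ⊆ C' i) (v : V) :
    robustParts E k C v ⊆ robustParts E k C' v := fun i hi => by
  rw [mem_robustParts] at hi ⊢
  exact ⟨hi.1.trans_le (card_le_card (outNbrs_mono E (h i) v)),
    hi.2.trans_le (card_le_card (outNbrs_mono (flip E) (h i) v))⟩

omit [Fintype V] [DecidableEq V] [DecidableEq κ] in
lemma robustParts_flip (E : V → V → Prop) (k : ℕ) (C : κ → Finset V) (v : V) :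
    robustParts (flip E) k C v = robustParts E k C v :=
  filter_congr fun _ _ => and_comm

omit [Fintype V] [DecidableEq V] in
lemma union_fewParts_robustParts (E : V → V → Prop) (k : ℕ) (C : κ → Finset V) (v : V) :
    fewOutParts E k C v ∪ fewOutParts (flip E) k C v ∪ robustParts E k C v = univ := by
  refine eq_univ_of_forall fun i => ?_
  rw [mem_union, mem_union, mem_fewOutParts, mem_fewOutParts, mem_robustParts]
  lia

lemma robustParts_subset_admissible (E : V → V → Prop) (k : ℕ) (C : κ → Finset V) (lv : V → ℕ)
    (g : V → κ) (v : V) : robustParts E k C v ⊆ admissible E k C lv g v :=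
  robustParts_mono (fun _ => subset_union_left) v

lemma admissible_flip (E : V → V → Prop) (k : ℕ) (C : κ → Finset V) (lv : V → ℕ) (g : V → κ) :
    admissible (flip E) k C lv g = admissible E k C lv g :=
  funext fun v => robustParts_flip E k _ v

lemma admissible_congr (h : ∀ w, lv w < lv v → g w = g' w) :
    admissible E k C lv g v = admissible E k C lv g' v := by
  have hpart : grownPart C lv g (lv v) = grownPart C lv g' (lv v) := funext fun i => by
    refine congrArg (C i ∪ ·) (filter_congr fun w _ => and_congr_right fun hw => ?_)
    rw [h w hw]
  rw [admissible, hpart, admissible]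

end Levels

section LevelValid

variable {V κ : Type*} [Fintype V] [DecidableEq V] [Fintype κ] [DecidableEq κ]
  {E : V → V → Prop} {k : ℕ} {C : κ → Finset V} {lv : V → ℕ} {x : ℕ → ℝ} {g g' : V → κ} {l : ℕ}

/-- Every vertex of level `l` has many admissible parts. -/
def ManyAdmissible (E : V → V → Prop) (k : ℕ) (C : κ → Finset V) (lv : V → ℕ) (x : ℕ → ℝ)
    (g : V → κ) (l : ℕ) : Prop :=
  ∀ v ∈ level C lv l, 8 * x l * Fintype.card κ ≤ #(admissible E k C lv g v) * Fintype.card V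

/-- The assignment `g` sends each vertex of level `l` to one of its many admissible parts, and is
spread out on that level: for every vertex `u` of higher level and every set `J` of parts, if `u` is
expected to have at least `x (lv u)` neighbours of level `l` in the parts of `J` under a random
choice of admissible parts, then it has more than `k` of them in some part of `J`. -/
structure LevelValid (E : V → V → Prop) (k : ℕ) (C : κ → Finset V) (lv : V → ℕ) (x : ℕ → ℝ)
    (g : V → κ) (l : ℕ) : Prop where
  mem_admissible : ∀ v ∈ level C lv l, g v ∈ admissible E k C lv g v
  manyAdmissible : ManyAdmissible E k C lv x g l
  spread : ∀ F, F = E ∨ F = flip E → ∀ u ∈ rest C, l < lv u → ∀ J : Finset κ,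
    x (lv u) ≤ ∑ v ∈ outNbrs F (level C lv l) u, share (admissible E k C lv g v) J →
    ∃ i ∈ J, k < #{v ∈ outNbrs F (level C lv l) u | g v = i}

lemma ManyAdmissible.nonempty [Nonempty κ] (h : ManyAdmissible E k C lv x g l) (hx : 0 < x l)
    {v : V} (hv : v ∈ level C lv l) : (admissible E k C lv g v).Nonempty := by
  have : (0 : ℝ) < Fintype.card κ := by exact_mod_cast Fintype.card_pos
  have hpos := lt_of_lt_of_le (by positivity) (h v hv)
  exact card_pos.1 (by exact_mod_cast pos_of_mul_pos_left hpos (Nat.cast_nonneg _))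

lemma ManyAdmissible.congr (h : ManyAdmissible E k C lv x g l)
    (hg : ∀ w, lv w < l → g w = g' w) : ManyAdmissible E k C lv x g' l := fun v hv => by
  rw [← admissible_congr fun w hw => hg w ((mem_level.1 hv).2 ▸ hw)]
  exact h v hv

lemma LevelValid.congr (h : LevelValid E k C lv x g l) (hg : ∀ w, lv w ≤ l → g w = g' w) :
    LevelValid E k C lv x g' l := by
  have hadm : ∀ v ∈ level C lv l, admissible E k C lv g v = admissible E k C lv g' v :=
    fun v hv => admissible_congr fun w hw => hg w ((mem_level.1 hv).2 ▸ hw.le)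
  have hmem {F : V → V → Prop} {u v : V} (hv : v ∈ outNbrs F (level C lv l) u) :
      v ∈ level C lv l := (mem_outNbrs.1 hv).1
  refine ⟨fun v hv => ?_, h.manyAdmissible.congr fun w hw => hg w hw.le,
    fun F hF u hu hlu J hJ => ?_⟩
  · rw [← hadm v hv, ← hg v (mem_level.1 hv).2.le]
    exact h.mem_admissible v hv
  · have hJ' := hJ.trans_eq (sum_congr rfl fun v hv => by rw [← hadm v (hmem hv)])
    obtain ⟨i, hi, hik⟩ := h.spread F hF u hu hlu J hJ'
    refine ⟨i, hi, hik.trans_eq (congrArg card (filter_congr fun v hv => ?_))⟩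
    rw [hg v (mem_level.1 (hmem hv)).2.le]

lemma LevelValid.reverse (h : LevelValid E k C lv x g l) :
    LevelValid (flip E) k C lv x g l := by
  refine ⟨?_, ?_, fun F hF => ?_⟩
  · rw [admissible_flip]
    exact h.mem_admissible
  · rw [ManyAdmissible, admissible_flip]
    exact h.manyAdmissible
  · rw [admissible_flip]
    exact h.spread F (hF.symm.imp id id)

omit [Fintype V] [DecidableEq V] in
lemma exists_spread_choice [Finite V] [Nonempty κ] (E : V → V → Prop) (k : ℕ) {L U : Finset V}
    {Λ : V → Finset κ} (hΛ : ∀ v ∈ L, (Λ v).Nonempty) {y : V → ℝ}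
    (hsum : ∑ u ∈ U, (2 : ℝ) ^ (1 + Fintype.card κ + k * Fintype.card κ) *
      Real.exp (-(y u / 2)) < 1) :
    ∃ g : V → κ, (∀ v ∈ L, g v ∈ Λ v) ∧ ∀ F, F = E ∨ F = flip E → ∀ u ∈ U, ∀ J : Finset κ,
      y u ≤ ∑ v ∈ outNbrs F L u, share (Λ v) J → ∃ i ∈ J, k < #{v ∈ outNbrs F L u | g v = i} := by
  classical
  set dir : Bool → V → V → Prop := fun b => if b then E else flip E
  set Ev : Finset (V × Finset κ × Bool) := {e ∈ U ×ˢ univ |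
    y e.1 ≤ ∑ v ∈ outNbrs (dir e.2.2) L e.1, share (Λ v) e.2.1}
  have hevents : ∑ e ∈ Ev, (2 : ℝ) ^ (k * Fintype.card κ) * Real.exp (-(y e.1 / 2)) < 1 := by
    refine lt_of_le_of_lt ?_ hsum
    calc ∑ e ∈ Ev, (2 : ℝ) ^ (k * Fintype.card κ) * Real.exp (-(y e.1 / 2))
        ≤ ∑ e ∈ U ×ˢ (univ : Finset (Finset κ × Bool)),
            (2 : ℝ) ^ (k * Fintype.card κ) * Real.exp (-(y e.1 / 2)) :=
          sum_le_sum_of_subset_of_nonneg (filter_subset _ _) fun _ _ _ => by positivity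
      _ = _ := by
          rw [sum_product]
          refine sum_congr rfl fun u _ => ?_
          simp only [sum_const, card_univ, nsmul_eq_mul, Fintype.card_prod, Fintype.card_finset,
            Fintype.card_bool]
          push_cast
          ring
  obtain ⟨g, hg, hspread⟩ := exists_choice hΛ k (Fintype.card κ) Ev
    (N := fun e => outNbrs (dir e.2.2) L e.1) (J := fun e => e.2.1) (x := fun e => y e.1)
    (fun _ _ => outNbrs_subset _ _ _) (fun _ _ => card_le_univ _)
    (fun e he => (mem_filter.1 he).2) hevents
  refine ⟨g, hg, fun F hF u hu J hy => ?_⟩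
  obtain ⟨b, rfl⟩ : ∃ b, F = dir b := hF.elim (fun h => ⟨true, h⟩) fun h => ⟨false, h⟩
  exact hspread (u, J, b) (mem_filter.2 ⟨mem_product.2 ⟨hu, mem_univ _⟩, hy⟩)

/-- Reassigning the vertices of level `l` does not affect lower levels. -/
lemma exists_levelValid_update [Nonempty κ] (hx : 0 < x l) (hmany : ManyAdmissible E k C lv x g l)
    (hsum : ∑ u ∈ rest C with 0 < lv u, (2 : ℝ) ^ (1 + Fintype.card κ + k * Fintype.card κ) *
      Real.exp (-(x (lv u) / 2)) < 1) :
    ∃ g' : V → κ, (∀ w, lv w < l → g w = g' w) ∧ LevelValid E k C lv x g' l := by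
  have hsum' : ∑ u ∈ rest C with l < lv u, (2 : ℝ) ^ (1 + Fintype.card κ + k * Fintype.card κ) *
      Real.exp (-(x (lv u) / 2)) < 1 :=
    (sum_le_sum_of_subset_of_nonneg (monotone_filter_right _ fun u _ hu => Nat.zero_lt_of_lt hu)
      fun _ _ _ => by positivity).trans_lt hsum
  obtain ⟨h, hmem, hspread⟩ := exists_spread_choice E k (L := level C lv l)
    (fun v hv => hmany.nonempty hx hv) hsum'
  set g' : V → κ := fun v => if lv v = l then h v else g v
  have hlow : ∀ w, lv w < l → g w = g' w := fun w hw => (if_neg hw.ne).symm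
  have hlevel : ∀ v ∈ level C lv l, h v = g' v := fun v hv => (if_pos (mem_level.1 hv).2).symm
  have hadm : ∀ v ∈ level C lv l, admissible E k C lv g v = admissible E k C lv g' v :=
    fun v hv => admissible_congr fun w hw => hlow w ((mem_level.1 hv).2 ▸ hw)
  refine ⟨g', hlow, fun v hv => ?_, hmany.congr hlow, fun F hF u hu hlu J hJ => ?_⟩
  · rw [← hadm v hv, ← hlevel v hv]
    exact hmem v hv
  · have hJ' := hJ.trans_eq (sum_congr rfl fun v hv => by rw [← hadm v (mem_outNbrs.1 hv).1])
    obtain ⟨i, hi, hik⟩ := hspread F hF u (mem_filter.2 ⟨hu, hlu⟩) J hJ'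
    refine ⟨i, hi, hik.trans_eq (congrArg card (filter_congr fun v hv => ?_))⟩
    rw [hlevel v (mem_outNbrs.1 hv).1]

lemma exists_forall_levelValid [Nonempty κ] {m : ℕ} (hx : ∀ l < m, 0 < x l)
    (hmany : ∀ j < m, ∀ g, (∀ l < j, LevelValid E k C lv x g l) → ManyAdmissible E k C lv x g j)
    (hsum : ∑ u ∈ rest C with 0 < lv u, (2 : ℝ) ^ (1 + Fintype.card κ + k * Fintype.card κ) *
      Real.exp (-(x (lv u) / 2)) < 1) :
    ∃ g, ∀ l < m, LevelValid E k C lv x g l := by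
  induction m with
  | zero => exact ⟨fun _ => Classical.arbitrary κ, fun l hl => absurd hl (Nat.not_lt_zero l)⟩
  | succ m ih =>
    obtain ⟨g, hg⟩ := ih (fun l hl => hx l (by omega)) fun j hj => hmany j (by omega)
    obtain ⟨g', hgg', hg'⟩ := exists_levelValid_update (hx m (by omega))
      (hmany m (by omega) g hg) hsum
    refine ⟨g', fun l hl => ?_⟩
    rcases Nat.lt_succ_iff_lt_or_eq.1 hl with hlm | rfl
    · exact (hg l hlm).congr fun w hw => hgg' w (by omega)
    · exact hg'

lemma stronglyKConnectedOn_grownPart {m : ℕ} (h : ∀ l < m, LevelValid E k C lv x g l) {i : κ}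
    (hC : StronglyKConnectedOn E k (C i)) : StronglyKConnectedOn E k (grownPart C lv g m i) := by
  induction m with
  | zero => simpa [grownPart] using hC
  | succ m ih =>
    have hrobust : ∀ v ∈ grownPart C lv g (m + 1) i, v ∉ grownPart C lv g m i →
        k < #(outNbrs E (grownPart C lv g m i) v) ∧
          k < #(outNbrs (flip E) (grownPart C lv g m i) v) := fun v hv hv' => by
      simp only [mem_grownPart, not_or, not_and] at hv hv'
      obtain ⟨hvR, hlt, rfl⟩ := hv.resolve_left hv'.1
      have hlv : lv v = m := by
        by_contra hne
        exact hv'.2 hvR (by omega) rfl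
      have hadm := (h m m.lt_succ_self).mem_admissible v (mem_level.2 ⟨hvR, hlv⟩)
      rwa [admissible, mem_robustParts, hlv] at hadm
    refine (ih fun l hl => h l (by omega)).extend (fun v hv => ?_)
      (fun v hv hv' => (hrobust v hv hv').1) fun v hv hv' => (hrobust v hv hv').2
    rw [mem_grownPart] at hv ⊢
    exact hv.imp_right fun hv => ⟨hv.1, by omega, hv.2.2⟩

/-- Were the expectation at least `x (lv u)`, a part of `J` would be admissible for `u`. -/
lemma LevelValid.sum_share_lt (h : LevelValid E k C lv x g l) {u : V} (hu : u ∈ rest C)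
    (hlu : l < lv u) {J : Finset κ} (hJ : ∀ i ∈ J, k < #(outNbrs (flip E) (C i) u)) :
    ∑ v ∈ outNbrs E (level C lv l) u,
      share (admissible E k C lv g v) (J \ admissible E k C lv g u) < x (lv u) := by
  by_contra! hcon
  obtain ⟨i, hi, hik⟩ := h.spread E (Or.inl rfl) u hu hlu _ hcon
  obtain ⟨hiJ, hnot⟩ := mem_sdiff.1 hi
  refine hnot (mem_robustParts.2 ⟨hik.trans_le (card_le_card fun w hw => ?_),
    (hJ i hiJ).trans_le (card_le_card (outNbrs_mono _ subset_union_left _))⟩)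
  obtain ⟨hw, hgw⟩ := mem_filter.1 hw
  obtain ⟨hwl, huw⟩ := mem_outNbrs.1 hw
  obtain ⟨hwR, rfl⟩ := mem_level.1 hwl
  exact mem_outNbrs.2 ⟨mem_grownPart.2 (Or.inr ⟨hwR, hlu, hgw⟩), huw⟩

end LevelValid

section LevelSystem

variable {V κ : Type*} [Fintype V] [DecidableEq V] [Fintype κ] [DecidableEq κ]

/-- Numerical conditions on the numbers `x j` of expected neighbours and the degree bounds `Δ j` of
the levels `j ≤ 3`: the sequence `x` decreases fast, starting below `n / 16`, and `x j` is within
constant factors of `Δ j`, which is large compared to `q`. -/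
structure IsThreshold (n q : ℝ) (x Δ : ℕ → ℝ) : Prop where
  pos : ∀ j ≤ 3, 0 < x j
  zero_le : 16 * x 0 ≤ n
  mul_le : ∀ j ≤ 3, ∀ l < j, 26 * x j ≤ 8 * x l
  mul_le_bound : ∀ j ∈ Icc 1 3, 1000 * x j ≤ Δ j
  bound_le_mul : ∀ j ∈ Icc 1 3, Δ j ≤ 256000 * x j
  mul_le_degree : ∀ j ∈ Icc 1 3, 2 ^ 30 * q ≤ Δ j

/-- A family of small sets `C i` together with a division of the remaining vertices into levels
`0, …, 3`: almost all vertices have level `0` and those have many robust parts, whereas the number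
of vertices of level at least `j ≥ 1` is small compared to the bound `Δ j` on a semidegree of the
vertices of level `j`. -/
structure LevelSystem (E : V → V → Prop) (k : ℕ) (C : κ → Finset V) (lv : V → ℕ)
    (Δ : ℕ → ℝ) : Prop where
  level_le : ∀ v, lv v ≤ 3
  two_mul_add_two_le_card : ∀ i, 2 * k + 2 ≤ #(C i)
  card_mul_le : ∀ i, #(C i) * (2 ^ 30 * Fintype.card κ) ≤ Fintype.card V
  card_poor_le : ∀ J : Finset κ, #{v ∈ level C lv 0 | 2 * #(robustParts E k C v ∩ J) < #J} * 2 ^ 30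
    ≤ 4 * Fintype.card V
  card_le_two_mul_robust : ∀ v ∈ level C lv 0, Fintype.card κ ≤ 2 * #(robustParts E k C v)
  card_compl_level_zero_le : #(univ \ level C lv 0) * 2 ^ 30 ≤ 10 * Fintype.card V
  card_le_level_le : ∀ j ∈ Icc 1 3, (#{w ∈ rest C | j ≤ lv w} : ℝ) * 2 ^ 30 ≤ 9 * Δ j
  le_degree : ∀ j ∈ Icc 1 3, ∀ u ∈ level C lv j,
    (#(fewOutParts (flip E) k C u) ≤ #(fewOutParts E k C u) ∧ Δ j ≤ #(outNbrs E univ u)) ∨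
    (#(fewOutParts E k C u) ≤ #(fewOutParts (flip E) k C u) ∧ Δ j ≤ #(outNbrs (flip E) univ u))

/-- The parts which are not admissible for `v` and in which `v` has at most `k` out-neighbours. -/
noncomputable def blockedParts (E : V → V → Prop) (k : ℕ) (C : κ → Finset V) (lv : V → ℕ)
    (g : V → κ) (v : V) : Finset κ :=
  fewOutParts E k C v \ admissible E k C lv g v

variable {E : V → V → Prop} {k : ℕ} {C : κ → Finset V} {lv : V → ℕ} {x Δ : ℕ → ℝ} {g : V → κ}
  {u : V} {j l : ℕ}

omit [Fintype V] [DecidableEq V] in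
lemma IsTournament.card_le_card_outNbrs_add (hE : IsTournament E) {L : Finset V} (hu : u ∉ L) :
    #L ≤ #(outNbrs E L u) + #(outNbrs (flip E) L u) := by
  classical
  refine (card_le_card fun v hv => ?_).trans (card_union_le _ _)
  rw [mem_union, mem_outNbrs, mem_outNbrs]
  by_cases h : E u v
  · exact Or.inl ⟨hv, h⟩
  · exact Or.inr ⟨hv, hE.adj_of_not_adj (fun huv => hu (huv ▸ hv)) h⟩

omit [DecidableEq κ] in
lemma IsTournament.lt_card_inNbrs_of_mem_fewOutParts (hE : IsTournament E)
    (hC : ∀ i, 2 * k + 2 ≤ #(C i)) (hu : u ∈ rest C) {i : κ} (hi : i ∈ fewOutParts E k C u) :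
    k < #(outNbrs (flip E) (C i) u) := by
  have := hE.card_le_card_outNbrs_add (mem_rest.1 hu i)
  have := mem_fewOutParts.1 hi
  have := hC i
  lia

lemma LevelSystem.reverse (hS : LevelSystem E k C lv Δ) : LevelSystem (flip E) k C lv Δ where
  level_le := hS.level_le
  two_mul_add_two_le_card := hS.two_mul_add_two_le_card
  card_mul_le := hS.card_mul_le
  card_poor_le := by simpa only [robustParts_flip] using hS.card_poor_le
  card_le_two_mul_robust := by simpa only [robustParts_flip] using hS.card_le_two_mul_robust
  card_compl_level_zero_le := hS.card_compl_level_zero_le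
  card_le_level_le := hS.card_le_level_le
  le_degree := fun j hj u hu => (hS.le_degree j hj u hu).symm

lemma card_le_card_blockedParts_add (E : V → V → Prop) (k : ℕ) (C : κ → Finset V) (lv : V → ℕ)
    (g : V → κ) (v : V) : Fintype.card κ ≤ #(blockedParts E k C lv g v) +
      #(blockedParts (flip E) k C lv g v) + #(admissible E k C lv g v) := by
  have hcover : univ ⊆ blockedParts E k C lv g v ∪ blockedParts (flip E) k C lv g v ∪
      admissible E k C lv g v := fun i _ => by
    have hi := mem_univ i
    rw [← union_fewParts_robustParts E k C v] at hi
    have := @robustParts_subset_admissible _ _ _ _ _ _ E k C lv g v i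
    simp only [blockedParts, admissible_flip, mem_union, mem_sdiff] at hi ⊢
    tauto
  refine (card_le_card hcover).trans ((card_union_le _ _).trans ?_)
  gcongr
  exact card_union_le _ _

lemma card_blockedParts_flip_le
    (h : #(fewOutParts (flip E) k C u) ≤ #(fewOutParts E k C u)) :
    #(blockedParts (flip E) k C lv g u) ≤
      #(blockedParts E k C lv g u) + #(admissible E k C lv g u) :=
  (card_le_card sdiff_subset).trans (h.trans card_le_card_sdiff_add_card)

lemma LevelSystem.sum_share_blockedParts_lt (hS : LevelSystem E k C lv Δ) (hE : IsTournament E)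
    (h : LevelValid E k C lv x g l) (hu : u ∈ level C lv j) (hlj : l < j) :
    ∑ v ∈ outNbrs E (level C lv l) u,
      share (admissible E k C lv g v) (blockedParts E k C lv g u) < x j := by
  obtain ⟨huR, rfl⟩ := mem_level.1 hu
  exact h.sum_share_lt huR hlj fun i hi =>
    hE.lt_card_inNbrs_of_mem_fewOutParts hS.two_mul_add_two_le_card huR hi

lemma LevelSystem.card_sub_mul_card_le (hS : LevelSystem E k C lv Δ) [Nonempty κ] (g : V → κ)
    {N : Finset V} (hN : N ⊆ level C lv 0) (J : Finset κ) :
    ((#N : ℝ) - Fintype.card V / 1000) * #J ≤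
      2 * Fintype.card κ * ∑ v ∈ N, share (admissible E k C lv g v) J := by
  have hpoor : (#{v ∈ level C lv 0 | 2 * #(admissible E k C lv g v ∩ J) < #J} : ℝ) ≤
      Fintype.card V / 1000 := by
    have hsub : #{v ∈ level C lv 0 | 2 * #(admissible E k C lv g v ∩ J) < #J} ≤
        #{v ∈ level C lv 0 | 2 * #(robustParts E k C v ∩ J) < #J} :=
      card_le_card (monotone_filter_right _ fun v _ hv => lt_of_le_of_lt (by
        gcongr
        exact robustParts_subset_admissible E k C lv g v) hv)
    have hle := (Nat.mul_le_mul_right (2 ^ 30) hsub).trans (hS.card_poor_le J)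
    have hle' : (#{v ∈ level C lv 0 | 2 * #(admissible E k C lv g v ∩ J) < #J} : ℝ) * 2 ^ 30 ≤
      4 * Fintype.card V := by exact_mod_cast hle
    linarith
  have : (0 : ℝ) < Fintype.card κ := by exact_mod_cast Fintype.card_pos
  calc ((#N : ℝ) - Fintype.card V / 1000) * #J
      = 2 * Fintype.card κ *
          (((#N : ℝ) - Fintype.card V / 1000) * (#J / (2 * Fintype.card κ))) := by
        field_simp
    _ ≤ 2 * Fintype.card κ * ∑ v ∈ N, share (admissible E k C lv g v) J := by
        gcongr
        refine le_trans ?_ (sub_card_poor_mul_le_sum_share hN _ J)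
        gcongr

lemma LevelSystem.le_card_outNbrs_level_zero (hS : LevelSystem E k C lv Δ) (hE : IsTournament E)
    (hu : u ∉ level C lv 0) : 99 / 100 * (Fintype.card V : ℝ) ≤
      #(outNbrs E (level C lv 0) u) + #(outNbrs (flip E) (level C lv 0) u) := by
  have hzero : (#(univ \ level C lv 0) : ℝ) * 2 ^ 30 ≤ 10 * Fintype.card V := by
    exact_mod_cast hS.card_compl_level_zero_le
  have hcompl : (#(univ \ level C lv 0) : ℝ) + #(level C lv 0) = Fintype.card V := by
    rw [← card_univ]
    exact_mod_cast card_sdiff_add_card_eq_card (subset_univ (level C lv 0))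
  have hdeg : (#(level C lv 0) : ℝ) ≤
      #(outNbrs E (level C lv 0) u) + #(outNbrs (flip E) (level C lv 0) u) := by
    exact_mod_cast hE.card_le_card_outNbrs_add hu
  linarith

/-- A vertex with few admissible parts has few out-neighbours of level `0`, as these would make
parts with few out-neighbours admissible. So it has many in-neighbours of level `0`, which make
almost all parts with few in-neighbours admissible. -/
lemma LevelSystem.card_mul_sub_card_blockedParts_le (hS : LevelSystem E k C lv Δ)
    (hE : IsTournament E) [Nonempty κ] {y : ℝ} (hy : 1000 * y ≤ Fintype.card V)
    (hu : u ∉ level C lv 0)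
    (hout : ∑ v ∈ outNbrs E (level C lv 0) u,
      share (admissible E k C lv g v) (blockedParts E k C lv g u) < y)
    (hin : ∑ v ∈ outNbrs (flip E) (level C lv 0) u,
      share (admissible E k C lv g v) (blockedParts (flip E) k C lv g u) < y)
    (hfew : #(fewOutParts (flip E) k C u) ≤ #(fewOutParts E k C u))
    (hA : #(admissible E k C lv g u) * (Fintype.card V : ℝ) < 8 * y * Fintype.card κ) :
    Fintype.card V * ((Fintype.card κ : ℝ) - #(blockedParts E k C lv g u)) ≤
      13 * y * Fintype.card κ := by
  have hsumOut := hS.card_sub_mul_card_le g (outNbrs_subset E (level C lv 0) u)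
    (blockedParts E k C lv g u)
  have hsumIn := hS.card_sub_mul_card_le g (outNbrs_subset (flip E) (level C lv 0) u)
    (blockedParts (flip E) k C lv g u)
  have hcover : (Fintype.card κ : ℝ) ≤ #(blockedParts E k C lv g u) +
      #(blockedParts (flip E) k C lv g u) + #(admissible E k C lv g u) := by
    exact_mod_cast card_le_card_blockedParts_add E k C lv g u
  have hflip : (#(blockedParts (flip E) k C lv g u) : ℝ) ≤
      #(blockedParts E k C lv g u) + #(admissible E k C lv g u) := by
    exact_mod_cast card_blockedParts_flip_le hfew
  have hdeg := hS.le_card_outNbrs_level_zero hE hu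
  have hκ : (0 : ℝ) < Fintype.card κ := by exact_mod_cast Fintype.card_pos
  have hn : (0 : ℝ) < Fintype.card V := by exact_mod_cast Fintype.card_pos_iff.2 ⟨u⟩
  generalize (Fintype.card V : ℝ) = n at *
  generalize (Fintype.card κ : ℝ) = t at *
  have hyt : 1000 * (y * t) ≤ n * t := by nlinarith
  have hadm : (#(admissible E k C lv g u) : ℝ) ≤ 8 / 1000 * t :=
    le_of_mul_le_mul_right (by linarith) hn
  have hblocked : 49 / 100 * t ≤ #(blockedParts E k C lv g u) := by linarith
  have hfewOut : (#(outNbrs E (level C lv 0) u) : ℝ) ≤ n / 100 := by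
    by_contra! hbig
    nlinarith [mul_le_mul (by linarith : 9 / 1000 * n ≤ #(outNbrs E (level C lv 0) u) - n / 1000)
      hblocked (by positivity) (by linarith)]
  have hmanyIn : 9 / 10 * n ≤ #(outNbrs (flip E) (level C lv 0) u) := by linarith
  have hflipSmall : 2 / 5 * n * #(blockedParts (flip E) k C lv g u) ≤ y * t := by
    nlinarith [mul_le_mul_of_nonneg_right (by linarith [hmanyIn] :
      8 / 10 * n ≤ #(outNbrs (flip E) (level C lv 0) u) - n / 1000)
      (Nat.cast_nonneg (α := ℝ) #(blockedParts (flip E) k C lv g u))]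
  nlinarith [mul_le_mul_of_nonneg_left hcover hn.le]

omit [Fintype V] [DecidableEq V] in
lemma card_le_two_mul_of_sum_share_lt [Nonempty κ] {n y : ℝ} (hn : 0 < n) (hy : 0 < y)
    {N : Finset V} {Λ : V → Finset κ} {J : Finset κ}
    (hΛ : ∀ v ∈ N, 26 * y * Fintype.card κ ≤ #(Λ v) * n)
    (hJ : n * ((Fintype.card κ : ℝ) - #J) ≤ 13 * y * Fintype.card κ)
    (hsum : ∑ v ∈ N, share (Λ v) J < y) : (#N : ℝ) ≤ 2 * y := by
  have : (0 : ℝ) < Fintype.card κ := by exact_mod_cast Fintype.card_pos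
  have hhalf : ∀ v ∈ N, 1 / 2 ≤ share (Λ v) J := fun v hv => by
    have hpos : (0 : ℝ) < #(Λ v) :=
      pos_of_mul_pos_left (lt_of_lt_of_le (by positivity) (hΛ v hv)) hn.le
    have hle : 2 * (Fintype.card κ : ℝ) ≤ #(Λ v) + 2 * #J :=
      le_of_mul_le_mul_left (by linarith [hΛ v hv]) hn
    exact half_le_share (card_pos.1 (by exact_mod_cast hpos)) (by exact_mod_cast hle)
  have := card_nsmul_le_sum N _ _ hhalf
  rw [nsmul_eq_mul] at this
  linarith

lemma card_outNbrs_univ_le_sum (E : V → V → Prop) (C : κ → Finset V) (lv : V → ℕ) (u : V)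
    (J : Finset κ) (j : ℕ) :
    #(outNbrs E univ u) ≤ ∑ i ∈ J, #(outNbrs E (C i) u) + ∑ i ∈ Jᶜ, #(C i) +
      ∑ l ∈ range j, #(outNbrs E (level C lv l) u) + #{w ∈ rest C | j ≤ lv w} := by
  have hcover : outNbrs E univ u ⊆ ((J.biUnion fun i => outNbrs E (C i) u) ∪ Jᶜ.biUnion C ∪
      (range j).biUnion fun l => outNbrs E (level C lv l) u) ∪ {w ∈ rest C | j ≤ lv w} := by
    intro v hv
    have huv := (mem_outNbrs.1 hv).2
    simp only [mem_union, mem_biUnion, mem_compl, mem_range, mem_outNbrs, mem_filter, mem_level]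
    by_cases hvR : v ∈ rest C
    · rcases lt_or_ge (lv v) j with hlt | hge
      · exact Or.inl (Or.inr ⟨lv v, hlt, ⟨hvR, rfl⟩, huv⟩)
      · exact Or.inr ⟨hvR, hge⟩
    · obtain ⟨i, hi⟩ := not_forall_not.1 (mt mem_rest.2 hvR)
      by_cases hiJ : i ∈ J
      · exact Or.inl (Or.inl (Or.inl ⟨i, hiJ, hi, huv⟩))
      · exact Or.inl (Or.inl (Or.inr ⟨i, hiJ, hi⟩))
  refine (card_le_card hcover).trans ((card_union_le _ _).trans ?_)
  gcongr
  refine (card_union_le _ _).trans (add_le_add ((card_union_le _ _).trans ?_) card_biUnion_le)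
  exact add_le_add card_biUnion_le card_biUnion_le

/-- The parts outside `J` are small and few, and lower levels contribute little to the degree. -/
lemma LevelSystem.card_outNbrs_univ_lt (hS : LevelSystem E k C lv Δ) [Nonempty κ]
    (hx : IsThreshold (Fintype.card V) (k * Fintype.card κ) x Δ) (hj : j ∈ Icc 1 3) {J : Finset κ}
    (hJ : J ⊆ fewOutParts E k C u)
    (hcard : Fintype.card V * ((Fintype.card κ : ℝ) - #J) ≤ 13 * x j * Fintype.card κ)
    (hlow : ∀ l < j, (#(outNbrs E (level C lv l) u) : ℝ) ≤ 2 * x j) :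
    (#(outNbrs E univ u) : ℝ) < Δ j := by
  have hκ : (0 : ℝ) < Fintype.card κ := by exact_mod_cast Fintype.card_pos
  have hj3 := (mem_Icc.1 hj).2
  have hxj := hx.pos j hj3
  have hfew : (∑ i ∈ J, #(outNbrs E (C i) u) : ℝ) ≤ k * Fintype.card κ := by
    have hle := sum_le_card_nsmul J _ k fun i hi => mem_fewOutParts.1 (hJ hi)
    rw [smul_eq_mul, mul_comm] at hle
    exact_mod_cast hle.trans (Nat.mul_le_mul_left k (card_le_univ J))
  have hsmall : (∑ i ∈ Jᶜ, #(C i) : ℝ) * 2 ^ 30 ≤ 13 * x j := by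
    have hle : ∑ i ∈ Jᶜ, (#(C i) : ℝ) * (2 ^ 30 * Fintype.card κ) ≤ #Jᶜ • (Fintype.card V : ℝ) :=
      sum_le_card_nsmul _ _ _ fun i _ => by exact_mod_cast hS.card_mul_le i
    rw [nsmul_eq_mul, ← sum_mul, card_compl, Nat.cast_sub (card_le_univ J),
      mul_comm _ (Fintype.card V : ℝ)] at hle
    exact le_of_mul_le_mul_right (by linarith) hκ
  have hlevels : (∑ l ∈ range j, #(outNbrs E (level C lv l) u) : ℝ) ≤ 6 * x j := by
    have hle := sum_le_card_nsmul (range j) _ _ fun l hl => hlow l (mem_range.1 hl)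
    have hjR : (j : ℝ) ≤ 3 := by exact_mod_cast hj3
    rw [card_range, nsmul_eq_mul] at hle
    nlinarith
  have hrest := hS.card_le_level_le j hj
  have hbound := hx.mul_le_bound j hj
  have hdegree := hx.mul_le_degree j hj
  have htotal : (#(outNbrs E univ u) : ℝ) ≤ ∑ i ∈ J, (#(outNbrs E (C i) u) : ℝ) +
      ∑ i ∈ Jᶜ, (#(C i) : ℝ) + ∑ l ∈ range j, (#(outNbrs E (level C lv l) u) : ℝ) +
      #{w ∈ rest C | j ≤ lv w} := by exact_mod_cast card_outNbrs_univ_le_sum E C lv u J j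
  linarith

lemma LevelSystem.le_card_admissible_of_fewOutParts (hS : LevelSystem E k C lv Δ)
    (hE : IsTournament E) [Nonempty κ]
    (hx : IsThreshold (Fintype.card V) (k * Fintype.card κ) x Δ) (hj : j ∈ Icc 1 3)
    (h : ∀ l < j, LevelValid E k C lv x g l) (hu : u ∈ level C lv j)
    (hfew : #(fewOutParts (flip E) k C u) ≤ #(fewOutParts E k C u))
    (hdeg : Δ j ≤ #(outNbrs E univ u)) :
    8 * x j * Fintype.card κ ≤ #(admissible E k C lv g u) * Fintype.card V := by
  by_contra! hA
  obtain ⟨hj1, hj3⟩ := mem_Icc.1 hj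
  have hn : (0 : ℝ) < Fintype.card V := by exact_mod_cast Fintype.card_pos_iff.2 ⟨u⟩
  have hdegn : (#(outNbrs E univ u) : ℝ) ≤ Fintype.card V := by exact_mod_cast card_le_univ _
  have hsum : ∀ l < j, ∑ v ∈ outNbrs E (level C lv l) u,
      share (admissible E k C lv g v) (blockedParts E k C lv g u) < x j := fun l hl =>
    hS.sum_share_blockedParts_lt hE (h l hl) hu hl
  have hsumIn := hS.reverse.sum_share_blockedParts_lt hE.reverse (h 0 hj1).reverse hu hj1
  rw [admissible_flip] at hsumIn
  have hu0 : u ∉ level C lv 0 := fun hu0 =>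
    by
    have := (mem_level.1 hu).2.symm.trans (mem_level.1 hu0).2
    lia
  have hblocked := hS.card_mul_sub_card_blockedParts_le hE
    (by linarith [hx.mul_le_bound j hj]) hu0 (hsum 0 hj1) hsumIn hfew hA
  refine (hS.card_outNbrs_univ_lt hx hj sdiff_subset hblocked fun l hl => ?_).not_ge hdeg
  refine card_le_two_mul_of_sum_share_lt hn (hx.pos j hj3) (fun v hv => ?_) hblocked (hsum l hl)
  exact (mul_le_mul_of_nonneg_right (hx.mul_le j hj3 l hl) (Nat.cast_nonneg _)).trans
    ((h l hl).manyAdmissible v (mem_outNbrs.1 hv).1)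

lemma LevelSystem.manyAdmissible (hS : LevelSystem E k C lv Δ) (hE : IsTournament E) [Nonempty κ]
    (hx : IsThreshold (Fintype.card V) (k * Fintype.card κ) x Δ) (hj : j ≤ 3)
    (h : ∀ l < j, LevelValid E k C lv x g l) : ManyAdmissible E k C lv x g j := by
  intro u hu
  rcases Nat.eq_zero_or_pos j with rfl | hj0
  · have hrobust : (Fintype.card κ : ℝ) ≤ 2 * #(admissible E k C lv g u) := by
      exact_mod_cast (hS.card_le_two_mul_robust u hu).trans
        (Nat.mul_le_mul_left 2 (card_le_card (robustParts_subset_admissible E k C lv g u)))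
    calc 8 * x 0 * Fintype.card κ ≤ Fintype.card V / 2 * (2 * #(admissible E k C lv g u)) := by
          gcongr
          linarith [hx.zero_le]
      _ = #(admissible E k C lv g u) * Fintype.card V := by ring
  · have hj' := mem_Icc.2 ⟨hj0, hj⟩
    rcases hS.le_degree j hj' u hu with ⟨hfew, hdeg⟩ | ⟨hfew, hdeg⟩
    · exact hS.le_card_admissible_of_fewOutParts hE hx hj' h hu hfew hdeg
    · have := hS.reverse.le_card_admissible_of_fewOutParts hE.reverse hx hj'
        (fun l hl => (h l hl).reverse) hu hfew hdeg
      rwa [admissible_flip] at this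

end LevelSystem

section Sum

lemma two_pow_le_exp {m : ℕ} {w : ℝ} (h : m ≤ w) : (2 : ℝ) ^ m ≤ Real.exp w :=
  calc (2 : ℝ) ^ m ≤ Real.exp 1 ^ m := by
        gcongr
        linarith [Real.add_one_le_exp (1 : ℝ)]
    _ = Real.exp m := by rw [← Real.exp_nat_mul, mul_one]
    _ ≤ Real.exp w := Real.exp_le_exp.2 h

lemma mul_two_pow_mul_exp_le {k t : ℕ} (hk : 1 ≤ k) (ht : 1 ≤ t) {c x y : ℝ}
    (hy : (2 : ℝ) ^ 30 * (k * t) ≤ y) (hc : c ≤ y) (hx : y ≤ 256000 * x) :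
    c * ((2 : ℝ) ^ (1 + t + k * t) * Real.exp (-(x / 2))) ≤ 1 / 4 := by
  obtain ⟨z, rfl⟩ : ∃ z, y = 2 ^ 30 * z := ⟨y / 2 ^ 30, by ring⟩
  have : (k * t : ℝ) ≤ z := by linarith
  have hkt : (1 : ℝ) ≤ k * t := by exact_mod_cast Nat.mul_pos hk ht
  have htk : (t : ℝ) ≤ k * t := by exact_mod_cast Nat.le_mul_of_pos_left t hk
  have hpow : (2 : ℝ) ^ (1 + t + k * t) ≤ Real.exp (3 * z) :=
    two_pow_le_exp (by push_cast; linarith)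
  have hexp : Real.exp (-(x / 2)) ≤ Real.exp (-(36 * z)) := Real.exp_le_exp.2 (by linarith)
  have hcexp : c ≤ Real.exp (30 * z) * Real.exp z := by
    refine hc.trans (mul_le_mul (two_pow_le_exp (by push_cast; linarith)) ?_ (by linarith)
      (Real.exp_pos _).le)
    linarith [Real.add_one_le_exp z]
  calc c * ((2 : ℝ) ^ (1 + t + k * t) * Real.exp (-(x / 2)))
      ≤ Real.exp (30 * z) * Real.exp z * (Real.exp (3 * z) * Real.exp (-(36 * z))) := by gcongr
    _ = (Real.exp (2 * z))⁻¹ := by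
        rw [← Real.exp_add, ← Real.exp_add, ← Real.exp_add, ← Real.exp_neg]
        ring_nf
    _ ≤ (2 ^ 2)⁻¹ := by
        gcongr
        exact two_pow_le_exp (by push_cast; linarith)
    _ = 1 / 4 := by norm_num

variable {V κ : Type*} [Fintype V] [DecidableEq V] [Fintype κ] [DecidableEq κ]
  {E : V → V → Prop} {k : ℕ} {C : κ → Finset V} {lv : V → ℕ} {x Δ : ℕ → ℝ}

lemma LevelSystem.sum_lt_one (hS : LevelSystem E k C lv Δ) (hk : 1 ≤ k) [Nonempty κ]
    {n : ℝ} (hx : IsThreshold n (k * Fintype.card κ) x Δ) :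
    ∑ u ∈ rest C with 0 < lv u, (2 : ℝ) ^ (1 + Fintype.card κ + k * Fintype.card κ) *
      Real.exp (-(x (lv u) / 2)) < 1 := by
  have hmaps : ∀ u ∈ {u ∈ rest C | 0 < lv u}, lv u ∈ Icc 1 3 := fun u hu =>
    mem_Icc.2 ⟨(mem_filter.1 hu).2, hS.level_le u⟩
  rw [← sum_fiberwise_of_maps_to hmaps]
  refine lt_of_le_of_lt (sum_le_card_nsmul _ _ (1 / 4 : ℝ) fun j hj => ?_) (by norm_num)
  have hcard : (#{u ∈ {u ∈ rest C | 0 < lv u} | lv u = j} : ℝ) ≤ Δ j := by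
    have hsub : (#{u ∈ {u ∈ rest C | 0 < lv u} | lv u = j} : ℝ) ≤ #{w ∈ rest C | j ≤ lv w} := by
      rw [filter_filter]
      exact Nat.cast_le.2 (card_le_card (monotone_filter_right _ fun u _ hu => hu.2.ge))
    linarith [hS.card_le_level_le j hj, (Nat.cast_nonneg _).trans hsub]
  refine le_trans (le_of_eq ?_) (mul_two_pow_mul_exp_le hk Fintype.card_pos
    (hx.mul_le_degree j hj) hcard (hx.bound_le_mul j hj))
  rw [← nsmul_eq_mul, ← sum_const]
  refine sum_congr rfl fun u hu => ?_
  rw [(mem_filter.1 hu).2]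

theorem LevelSystem.exists_partition (hS : LevelSystem E k C lv Δ) (hE : IsTournament E)
    (hk : 1 ≤ k) [Nonempty κ] (hx : IsThreshold (Fintype.card V) (k * Fintype.card κ) x Δ)
    (hdisj : ∀ i j, i ≠ j → Disjoint (C i) (C j)) (hC : ∀ i, StronglyKConnectedOn E k (C i)) :
    ∃ P : κ → Finset V, (∀ i j, i ≠ j → Disjoint (P i) (P j)) ∧ univ.biUnion P = univ ∧
      ∀ i, StronglyKConnectedOn E k (P i) := by
  obtain ⟨g, hg⟩ := exists_forall_levelValid (m := 4) (fun l hl => hx.pos l (by lia))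
    (fun j hj g hg => hS.manyAdmissible hE hx (by lia) hg) (hS.sum_lt_one hk hx)
  refine ⟨grownPart C lv g 4, fun i j hij => disjoint_left.2 fun v hvi hvj => ?_,
    eq_univ_of_forall fun v => ?_, fun i => stronglyKConnectedOn_grownPart hg (hC i)⟩
  · rw [mem_grownPart, mem_rest] at hvi hvj
    rcases hvi with hvi | ⟨hvi, -, rfl⟩ <;> rcases hvj with hvj | ⟨hvj, -, rfl⟩
    · exact disjoint_left.1 (hdisj i j hij) hvi hvj
    · exact hvj i hvi
    · exact hvi j hvj
    · exact hij rfl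
  · simp only [mem_biUnion, mem_univ, true_and, mem_grownPart]
    by_cases hv : v ∈ rest C
    · exact ⟨g v, Or.inr ⟨hv, Nat.lt_succ_of_le (hS.level_le v), rfl⟩⟩
    · exact (not_forall_not.1 (mt mem_rest.2 hv)).imp fun i hi => Or.inl hi

end Sum

section CoreLevels

lemma card_mul_le_of_forall_card_le {V κ : Type*} [DecidableEq κ] {S : Finset V} {J : Finset κ}
    (hJ : J.Nonempty) {B : V → Finset κ} {c d q : ℕ} (hS : ∀ v ∈ S, #J ≤ c * #(B v ∩ J))
    (hB : ∀ i ∈ J, #{v ∈ S | i ∈ B v} * q ≤ d) : #S * q ≤ c * d := by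
  have hcount : ∑ v ∈ S, #(B v ∩ J) = ∑ i ∈ J, #{v ∈ S | i ∈ B v} := by
    simp only [inter_comm _ J, ← filter_mem_eq_inter]
    exact sum_card_bipartiteAbove_eq_sum_card_bipartiteBelow fun v i => i ∈ B v
  refine Nat.le_of_mul_le_mul_left ?_ hJ.card_pos
  calc #J * (#S * q) = (∑ _v ∈ S, #J) * q := by rw [sum_const, smul_eq_mul]; ring
    _ ≤ (∑ v ∈ S, c * #(B v ∩ J)) * q := Nat.mul_le_mul_right q (sum_le_sum hS)
    _ = c * ∑ i ∈ J, #{v ∈ S | i ∈ B v} * q := by rw [← mul_sum, hcount, mul_assoc, sum_mul]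
    _ ≤ c * ∑ _i ∈ J, d := Nat.mul_le_mul_left c (sum_le_sum hB)
    _ = #J * (c * d) := by rw [sum_const, smul_eq_mul]; ring

variable {V κ : Type*} [Fintype V] [DecidableEq V] [Fintype κ]

/-- The level of a vertex: `0` if it has few out-neighbours, and few in-neighbours, in less than a
quarter of the parts, `1` if it only satisfies the condition on out-neighbours, and `2` if it
violates that one; the exceptional vertices form level `3`. -/
noncomputable def coreLevel (E : V → V → Prop) (k : ℕ) (C : κ → Finset V) (Exc : Finset V)
    (v : V) : ℕ :=
  if v ∈ Exc then 3
  else if Fintype.card κ ≤ 4 * #(fewOutParts E k C v) then 2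
  else if Fintype.card κ ≤ 4 * #(fewOutParts (flip E) k C v) then 1
  else 0

/-- The bounds on the degrees of the vertices of levels `1`, `2` and `3`; see `coreLevel`. -/
def levelDegree (dP dM K : ℕ) : ℕ → ℕ
  | 1 => dM
  | 2 => dP
  | _ => K

/-- The thresholds for `levelDegree`; each is small compared to the preceding one. -/
noncomputable def levelThreshold (n dP dM K : ℕ) : ℕ → ℝ
  | 0 => n / 16
  | 1 => dM / 1000
  | 2 => dP / 16000
  | _ => K / 256000

variable {E : V → V → Prop} {k m s dP dM K : ℕ} {C : κ → Finset V} {Exc : Finset V} {v : V}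
  {lv : V → ℕ} {j : ℕ}

omit [Fintype V] in
lemma coreLevel_le (E : V → V → Prop) (k : ℕ) (C : κ → Finset V) (Exc : Finset V) (v : V) :
    coreLevel E k C Exc v ≤ 3 := by
  unfold coreLevel
  split_ifs <;> lia

omit [Fintype V] in
lemma mem_of_coreLevel_eq_three (h : coreLevel E k C Exc v = 3) : v ∈ Exc := by
  unfold coreLevel at h
  grind

omit [Fintype V] in
lemma of_coreLevel_eq_two (h : coreLevel E k C Exc v = 2) :
    v ∉ Exc ∧ Fintype.card κ ≤ 4 * #(fewOutParts E k C v) := by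
  unfold coreLevel at h
  grind

omit [Fintype V] in
lemma of_coreLevel_eq_one (h : coreLevel E k C Exc v = 1) :
    v ∉ Exc ∧ 4 * #(fewOutParts E k C v) < Fintype.card κ ∧
      Fintype.card κ ≤ 4 * #(fewOutParts (flip E) k C v) := by
  unfold coreLevel at h
  grind

omit [Fintype V] in
lemma of_coreLevel_eq_zero (h : coreLevel E k C Exc v = 0) :
    v ∉ Exc ∧ 4 * #(fewOutParts E k C v) < Fintype.card κ ∧
      4 * #(fewOutParts (flip E) k C v) < Fintype.card κ := by
  unfold coreLevel at h
  grind

lemma isThreshold_levelThreshold {n : ℕ} {q : ℝ} (hK : 1 ≤ K) (hq : 2 ^ 30 * q ≤ K) (hKP : K ≤ dP)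
    (hPM : dP ≤ dM) (hMn : dM ≤ n) :
    IsThreshold n q (levelThreshold n dP dM K) fun j => levelDegree dP dM K j := by
  have hK' : (1 : ℝ) ≤ K := by exact_mod_cast hK
  have hKP' : (K : ℝ) ≤ dP := by exact_mod_cast hKP
  have hPM' : (dP : ℝ) ≤ dM := by exact_mod_cast hPM
  have hMn' : (dM : ℝ) ≤ n := by exact_mod_cast hMn
  refine ⟨fun j hj => ?_, ?_, fun j hj l hl => ?_, fun j hj => ?_, fun j hj => ?_, fun j hj => ?_⟩
  · interval_cases j <;> simp only [levelThreshold] <;> linarith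
  · simp only [levelThreshold]
    linarith
  · interval_cases j <;> interval_cases l <;> simp only [levelThreshold] <;> linarith
  all_goals
    rw [mem_Icc] at hj
    obtain ⟨hj1, hj3⟩ := hj
    interval_cases j <;> simp only [levelThreshold, levelDegree] <;> linarith

lemma card_le_level_le_succ (C : κ → Finset V) (lv : V → ℕ) (j : ℕ) :
    #{w ∈ rest C | j ≤ lv w} ≤ #(level C lv j) + #{w ∈ rest C | j + 1 ≤ lv w} := by
  refine (card_le_card fun w hw => ?_).trans (card_union_le _ _)
  rw [mem_union, mem_level, mem_filter]
  rw [mem_filter] at hw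
  exact hw.2.eq_or_lt.imp (fun h => ⟨hw.1, h.symm⟩) fun h => ⟨hw.1, h⟩

lemma card_compl_level_zero_le_add (C : κ → Finset V) (lv : V → ℕ) :
    #(univ \ level C lv 0) ≤ #(univ.biUnion C) + #{w ∈ rest C | 1 ≤ lv w} := by
  refine (card_le_card fun w hw => ?_).trans (card_union_le _ _)
  simp only [mem_sdiff, mem_univ, true_and, mem_level, not_and, mem_union, mem_filter,
    Nat.one_le_iff_ne_zero] at hw ⊢
  by_cases hwR : w ∈ rest C
  · exact Or.inr ⟨hwR, hw hwR⟩
  · simpa [rest] using Or.inl hwR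

namespace CoreSystem

lemma card_biUnion_mul_le [Nonempty κ] (h : CoreSystem E k (m * Fintype.card κ) s Exc C dP dM) :
    #(univ.biUnion C) * m ≤ Fintype.card V := by
  refine Nat.le_of_mul_le_mul_left ?_ (Fintype.card_pos (α := κ))
  calc Fintype.card κ * (#(univ.biUnion C) * m)
      = #(univ.biUnion C) * (m * Fintype.card κ) := by ring
    _ ≤ (∑ i, #(C i)) * (m * Fintype.card κ) := Nat.mul_le_mul_right _ card_biUnion_le
    _ ≤ ∑ _i : κ, Fintype.card V := by rw [sum_mul]; exact sum_le_sum fun i _ => h.card_mul_le i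
    _ = Fintype.card κ * Fintype.card V := by rw [sum_const, card_univ, smul_eq_mul]

variable [DecidableEq κ]

lemma card_mul_le_of_fewOutParts (h : CoreSystem E k m s Exc C dP dM) {S : Finset V}
    (hS : S ⊆ Excᶜ) {J : Finset κ} (hJ : J.Nonempty) {c : ℕ}
    (hfew : ∀ v ∈ S, #J ≤ c * #(fewOutParts E k C v ∩ J)) : #S * 2 ^ s ≤ c * dP :=
  card_mul_le_of_forall_card_le hJ hfew fun i _ => h.card_fewOut_le i _
    ((filter_subset _ _).trans hS) fun _ hv => mem_fewOutParts.1 (mem_filter.1 hv).2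

lemma card_poor_le (h : CoreSystem E k m s Exc C dP dM) {S : Finset V} (hS : S ⊆ Excᶜ)
    (J : Finset κ) :
    #{v ∈ S | 2 * #(robustParts E k C v ∩ J) < #J} * 2 ^ s ≤ 4 * (dP + dM) := by
  rcases J.eq_empty_or_nonempty with rfl | hJ
  · simp
  have hout := h.card_mul_le_of_fewOutParts (c := 4)
    (S := {v ∈ S | #J ≤ 4 * #(fewOutParts E k C v ∩ J)}) ((filter_subset _ _).trans hS) hJ
    fun v hv => (mem_filter.1 hv).2
  have hin := h.reverse.card_mul_le_of_fewOutParts (c := 4)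
    (S := {v ∈ S | #J ≤ 4 * #(fewOutParts (flip E) k C v ∩ J)}) ((filter_subset _ _).trans hS) hJ
    fun v hv => (mem_filter.1 hv).2
  have hcover : #{v ∈ S | 2 * #(robustParts E k C v ∩ J) < #J} ≤
      #{v ∈ S | #J ≤ 4 * #(fewOutParts E k C v ∩ J)} +
        #{v ∈ S | #J ≤ 4 * #(fewOutParts (flip E) k C v ∩ J)} := by
    refine (card_le_card fun v hv => ?_).trans (card_union_le _ _)
    obtain ⟨hvS, hpoor⟩ := mem_filter.1 hv
    have hJle : #J ≤ #(fewOutParts E k C v ∩ J) + #(fewOutParts (flip E) k C v ∩ J) +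
        #(robustParts E k C v ∩ J) :=
      calc #J = #(univ ∩ J) := by rw [univ_inter]
        _ ≤ _ := by
          rw [← union_fewParts_robustParts E k C v, union_inter_distrib_right,
            union_inter_distrib_right]
          exact (card_union_le _ _).trans (Nat.add_le_add_right (card_union_le _ _) _)
    simp only [mem_union, mem_filter, hvS, true_and]
    lia
  nlinarith [Nat.mul_le_mul_right (2 ^ s) hcover]

omit [DecidableEq κ] in
lemma card_level_one_le [Nonempty κ] (h : CoreSystem E k m s Exc C dP dM) :
    #(level C (coreLevel E k C Exc) 1) * 2 ^ s ≤ 4 * dM := by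
  classical
  refine h.reverse.card_mul_le_of_fewOutParts (J := univ) (fun v hv => mem_compl.2 ?_)
    univ_nonempty fun v hv => ?_
  · exact (of_coreLevel_eq_one (mem_level.1 hv).2).1
  · simpa using (of_coreLevel_eq_one (mem_level.1 hv).2).2.2

omit [DecidableEq κ] in
lemma card_level_two_le [Nonempty κ] (h : CoreSystem E k m s Exc C dP dM) :
    #(level C (coreLevel E k C Exc) 2) * 2 ^ s ≤ 4 * dP := by
  classical
  refine h.card_mul_le_of_fewOutParts (J := univ) (fun v hv => mem_compl.2 ?_)
    univ_nonempty fun v hv => ?_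
  · exact (of_coreLevel_eq_two (mem_level.1 hv).2).1
  · simpa using (of_coreLevel_eq_two (mem_level.1 hv).2).2

omit [DecidableEq κ] in
lemma card_le_coreLevel_le [Nonempty κ] (h : CoreSystem E k m 38 Exc C dP dM)
    (hExc : #Exc * 2 ^ 30 ≤ K) (hKP : K ≤ dP) (hPM : dP ≤ dM) (hj : j ∈ Icc 1 3) :
    #{w ∈ rest C | j ≤ coreLevel E k C Exc w} * 2 ^ 30 ≤ 9 * levelDegree dP dM K j := by
  set lv := coreLevel E k C Exc
  have hone := h.card_level_one_le
  have htwo := h.card_level_two_le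
  have hthree : #{w ∈ rest C | 3 ≤ lv w} ≤ #Exc := card_le_card fun w hw =>
    mem_of_coreLevel_eq_three ((coreLevel_le E k C Exc w).antisymm (mem_filter.1 hw).2)
  have hsuccOne := card_le_level_le_succ C lv 1
  have hsuccTwo := card_le_level_le_succ C lv 2
  obtain ⟨hj1, hj3⟩ := mem_Icc.1 hj
  interval_cases j <;> simp only [levelDegree] <;> lia

omit [DecidableEq κ] in
lemma le_degree_of_mem_level (h : CoreSystem E k m s Exc C dP dM) (hPM : dP ≤ dM)
    (hout : ∀ v, K ≤ #(outNbrs E univ v)) (hin : ∀ v, K ≤ #(outNbrs (flip E) univ v))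
    (hj : j ∈ Icc 1 3) (hv : coreLevel E k C Exc v = j) :
    (#(fewOutParts (flip E) k C v) ≤ #(fewOutParts E k C v) ∧
      levelDegree dP dM K j ≤ #(outNbrs E univ v)) ∨
    (#(fewOutParts E k C v) ≤ #(fewOutParts (flip E) k C v) ∧
      levelDegree dP dM K j ≤ #(outNbrs (flip E) univ v)) := by
  obtain ⟨hj1, hj3⟩ := mem_Icc.1 hj
  interval_cases j <;> simp only [levelDegree]
  · obtain ⟨hvE, hfewOut, hfewIn⟩ := of_coreLevel_eq_one hv
    exact Or.inr ⟨by lia, h.le_inDegree v hvE⟩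
  · have hvE := (of_coreLevel_eq_two hv).1
    exact (le_total _ _).imp (⟨·, h.le_outDegree v hvE⟩) (⟨·, hPM.trans (h.le_inDegree v hvE)⟩)
  · exact (le_total _ _).imp (⟨·, hout v⟩) (⟨·, hin v⟩)

lemma levelSystem [Nonempty κ] (h : CoreSystem E k (2 ^ 30 * Fintype.card κ) 38 Exc C dP dM)
    (hExc : #Exc * 2 ^ 30 ≤ K) (hKP : K ≤ dP) (hPM : dP ≤ dM) (hMn : dM ≤ Fintype.card V)
    (hout : ∀ v, K ≤ #(outNbrs E univ v)) (hin : ∀ v, K ≤ #(outNbrs (flip E) univ v)) :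
    LevelSystem E k C (coreLevel E k C Exc) fun j => levelDegree dP dM K j where
  level_le := coreLevel_le E k C Exc
  two_mul_add_two_le_card := h.two_mul_add_two_le_card
  card_mul_le := h.card_mul_le
  card_poor_le J := by
    have := h.card_poor_le (S := level C (coreLevel E k C Exc) 0)
      (fun v hv => mem_compl.2 (of_coreLevel_eq_zero (mem_level.1 hv).2).1) J
    lia
  card_le_two_mul_robust v hv := by
    obtain ⟨-, hfewOut, hfewIn⟩ := of_coreLevel_eq_zero (mem_level.1 hv).2
    have hcover := card_union_le (fewOutParts E k C v ∪ fewOutParts (flip E) k C v)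
      (robustParts E k C v)
    have := card_union_le (fewOutParts E k C v) (fewOutParts (flip E) k C v)
    rw [union_fewParts_robustParts, card_univ] at hcover
    lia
  card_compl_level_zero_le := by
    have hcompl := card_compl_level_zero_le_add C (coreLevel E k C Exc)
    have hcores := h.card_biUnion_mul_le
    have hge := h.card_le_coreLevel_le hExc hKP hPM (j := 1) (by decide)
    simp only [levelDegree] at hge
    lia
  card_le_level_le _ hj := by exact_mod_cast h.card_le_coreLevel_le hExc hKP hPM hj
  le_degree _ hj _ hu := by
    exact_mod_cast h.le_degree_of_mem_level hPM hout hin hj (mem_level.1 hu).2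

omit [DecidableEq κ] in
theorem exists_partition [Nonempty κ] (h : CoreSystem E k (2 ^ 30 * Fintype.card κ) 38 Exc C dP dM)
    (hE : IsTournament E) (hk : 1 ≤ k) (hExc : #Exc * 2 ^ 30 ≤ K)
    (hK : 2 ^ 30 * (k * Fintype.card κ) ≤ K) (hKP : K ≤ dP) (hPM : dP ≤ dM)
    (hout : ∀ v, K ≤ #(outNbrs E univ v)) (hin : ∀ v, K ≤ #(outNbrs (flip E) univ v)) :
    ∃ P : κ → Finset V, (∀ i j, i ≠ j → Disjoint (P i) (P j)) ∧ univ.biUnion P = univ ∧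
      ∀ i, StronglyKConnectedOn E k (P i) := by
  have hκ := Nat.mul_pos hk (Fintype.card_pos (α := κ))
  obtain ⟨v₀, -⟩ : (C (Classical.arbitrary κ)).Nonempty :=
    card_pos.1 ((Nat.succ_pos _).trans_le (h.two_mul_add_two_le_card _))
  have hKn : K ≤ Fintype.card V := (hout v₀).trans (card_le_univ _)
  obtain ⟨v, hv⟩ : ∃ v, v ∉ Exc := by
    by_contra! hall
    rw [eq_univ_of_forall hall, card_univ] at hExc
    lia
  have hMn : dM ≤ Fintype.card V := (h.le_inDegree v hv).trans (card_le_univ _)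
  classical
  refine (h.levelSystem hExc hKP hPM hMn hout hin).exists_partition hE hk
    (isThreshold_levelThreshold (by lia) (by exact_mod_cast hK) hKP hPM hMn) h.disjoint
    h.stronglyKConnectedOn

end CoreSystem

end CoreLevels

section Partition

variable {V : Type*} [Fintype V] [DecidableEq V] {E : V → V → Prop} {k t K : ℕ}

/-- Reversing all edges swaps `dP` and `dM`, so one may assume `dP ≤ dM`. -/
lemma DominatingFamily.exists_partition {Exc : Finset V} {dP dM : ℕ}
    {G : Fin (4 * (2 ^ 30 * t)) × Fin (4 * k) → Gadget V}
    (h : DominatingFamily E 40 Exc G dP dM) (hE : IsTournament E) (hk : 1 ≤ k) (ht : 1 ≤ t)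
    (hsOut : IsSparse E (fun α => (G α).body) fun α => (G α).path)
    (hsIn : IsSparse (flip E) (fun α => (G α).body) fun α => (G α).path)
    (hExc : #Exc * 2 ^ 30 ≤ K) (hK : 2 ^ 50 * (k * t) ≤ K) (hKP : K ≤ dP) (hKM : K ≤ dM)
    (hout : ∀ v, K ≤ #(outNbrs E univ v)) (hin : ∀ v, K ≤ #(outNbrs (flip E) univ v)) :
    ∃ P : Fin t → Finset V, (∀ i j, i ≠ j → Disjoint (P i) (P j)) ∧ univ.biUnion P = univ ∧
      ∀ i, StronglyKConnectedOn E k (P i) := by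
  wlog hPM : dP ≤ dM generalizing E G dP dM
  · obtain ⟨P, hdisj, hunion, hP⟩ :=
      this h.reverse hE.reverse hsIn hsOut hKM hKP hin hout (le_of_not_ge hPM)
    exact ⟨P, hdisj, hunion, fun i => (hP i).reverse⟩
  · obtain ⟨C, hC⟩ := h.exists_coreSystem hE hk ht (Nat.one_le_two_pow (n := 30))
      (Fintype.card_fin _) (Fintype.card_fin _) hsOut hsIn (by lia) hKP hPM hout hin
    have : Nonempty (Fin t) := ⟨⟨0, ht⟩⟩
    have hC' : CoreSystem E k (2 ^ 30 * Fintype.card (Fin t)) 38 Exc C dP dM := by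
      rwa [Fintype.card_fin]
    exact hC'.exists_partition hE hk hExc (by rw [Fintype.card_fin]; lia) hKP hPM hout hin

theorem statement0_general (hE : IsTournament E) (hk : 1 ≤ k) (ht : 1 ≤ t)
    (h : StronglyKConnected E (2 ^ 100 * k * t)) :
    ∃ P : Fin t → Finset V, (∀ i j, i ≠ j → Disjoint (P i) (P j)) ∧ univ.biUnion P = univ ∧
      ∀ i, StronglyKConnectedOn E k (P i) := by
  have hkt : 1 ≤ k * t := Nat.mul_pos hk ht
  have hcard : Fintype.card (Fin (4 * (2 ^ 30 * t)) × Fin (4 * k)) = 2 ^ 34 * (k * t) := by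
    rw [Fintype.card_prod, Fintype.card_fin, Fintype.card_fin]
    ring
  have : Nonempty (Fin (4 * (2 ^ 30 * t)) × Fin (4 * k)) :=
    Fintype.card_pos_iff.1 (by rw [hcard]; positivity)
  rw [StronglyKConnected, mul_assoc] at h
  have hout (v : V) := (h.lt_card_outNbrs hE (by lia) (mem_univ v)).le
  have hin (v : V) := (h.reverse.lt_card_outNbrs hE.reverse (by lia) (mem_univ v)).le
  obtain ⟨Exc, G, dP, dM, hG, hExc, hKP, hKM⟩ :=
    exists_dominatingFamily (N := 33 * 88 * (2 ^ 34 * (k * t))) (s := 40) hE (by lia) h (by lia)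
  obtain ⟨f, hsOut, hsIn⟩ := exists_embedding_isSparse
    (κ := Fin (4 * (2 ^ 30 * t)) × Fin (4 * k)) hG.disjoint_path hG.card_body_le (by norm_num)
    (by rw [hcard, Fintype.card_fin]) E
  exact (hG.comp f).exists_partition hE hk ht hsOut hsIn (by lia) (by lia) hKP hKM hout hin

end Partition

/-- Theorem 1.1. There is a constant `c > 0` such that the vertex set of
every strongly `c·k·t`-connected tournament can be partitioned into `t` parts, each of which
induces a strongly `k`-connected subtournament. -/
theorem statement0 :
    ∃ c : ℕ, 0 < c ∧
      ∀ (k t : ℕ), 0 < k → 0 < t →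
        ∀ (V : Type) [Fintype V] [DecidableEq V] (E : V → V → Prop) [DecidableRel E],
          IsTournament E → StronglyKConnected E (c * k * t) →
          ∃ P : Fin t → Finset V,
            (∀ i j : Fin t, i ≠ j → Disjoint (P i) (P j)) ∧
            Finset.univ.biUnion P = (Finset.univ : Finset V) ∧
            ∀ i : Fin t, StronglyKConnectedOn E k (P i) := by
  exact ⟨2 ^ 100, by positivity, fun k t hk ht V _ _ E _ hE h => statement0_general hE hk ht h⟩

end TournamentPartition
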